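/- For every subgroup H of order 3 of G = PSU(3,q), q = 2^(2^n), one has μ(H, G) = 2(q²-1)/3. -/

import Mathlib

/-!
The group is realized as the group `U k` of isometries of determinant one of the hyperbolic
hermitian form `B` on `k³`, `k = F_{q²}`: an orthonormal basis is traded for a hyperbolic one
(`exists_change`), and the center is trivial since cube roots of unity are fixed by the involution
of `k` (`center_U`). All subgroups of order three are conjugate to `H0 k`, generated by
`h3 k = diag(ω, 1, ω²)` (`conj_h3`), so `μ(H0 k)` is what is wanted.

Weisner's theorem (`weisner`), applied to the stabilizer `N k` of the line of the second basis
vector, says that `∑ μ(K) = 0` over the subgroups `K` with `K ⊓ N k = H0 k`. Let `K ≠ H0 k` be such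
a subgroup. Since `N k` contains the normalizer of `H0 k`, and the Sylow `3`-subgroups of overgroups
of `H0 k` have order three (this uses `9 ∤ q² - 1`), Burnside's transfer theorem gives
`K = R ⋊ H0 k`. Commuting is transitive on the involutions of `U k`, which are transvections, so
`|R|` is odd (`odd_of_inf`). Groups of order prime to six in dimension three are abelian
(`abelian_of_coprime_six`), and the eigenvectors of conjugation by `h3 k` in the algebra spanned by
`R` show that the commutant of `R` is the algebra `k[X a]` of a weighted cyclic permutation matrix
`X a` (`exists_singer`, `exists_torusData`). Let `Ma a` be the normalizer of that algebra.

A second use of Weisner's theorem, for `K ≤ Ma a`, gives `μ(K) = -1` if `K = Ma a` and `μ(K) = 0`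
otherwise, provided `K` and `U k` are the only subgroups `L` that can meet `Ma a` exactly in `K`
(`TorusData.eq_or_top`, `TorusData.mu_eq`). If `|L|` is odd, `L` is again an abelian group extended
by `H0 k` and lies in `Ma a`. If `|L|` is even, `even_irred` applies, because `K` is irreducible:
`L` is the whole group or has a normal subgroup `O` of odd order containing all elements of odd
order; in the latter case `O = K`, so `L` normalizes `K` and therefore lies in `Ma a`.

For `even_irred`, the scalars of the transvections of `L` along one of its isotropic centres form a
subfield `F` of `F_q` (`exists_goodField`). If `F = {0, 1}` the Sylow `2`-subgroups of `L` are
cyclic and there is a normal complement. Otherwise, the transvections of `L` with centres in one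
hyperbolic plane generate a group conjugate to a subgroup of `SL(2, F_q)`, to which
`dt_mem_of_good` applies: the determinants of pairs of centres lie in `F`. As the subfields of
`F_{q²}` form a chain, irreducibility forces `F = F_q` (`goodField_full`), all transvections lie in
`L` (`all_good`), and they generate the group (`eq_top_of_normal`).

Finally `Ma a` meets `N k` exactly in `H0 k` when `a` is not a cube (`Ma_inf_N`), and does not when
`a` is a nonzero cube (`Ma_inf_N_cube`), and `a` is determined by `Ma a`. Hence `μ(H0 k)` is the
number of noncubes of `k` (`mu_H0`), which is `2 (q² - 1) / 3`.
-/

open scoped Classical Pointwise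

namespace PSUPaper

/-- `q = 2^(2^n)`. -/
abbrev qval (n : ℕ) : ℕ := 2 ^ 2 ^ n

/-- The field with `q² = 2^(2^(n+1))` elements. -/
abbrev Fq2 (n : ℕ) : Type := GaloisField 2 (2 ^ (n + 1))

/-- The involutory automorphism `x ↦ x^q` of `F_{q²}`, as a star-ring structure. -/
noncomputable instance starRingFq2 (n : ℕ) : StarRing (Fq2 n) where
  star x := x ^ qval n
  star_involutive x := by
    letI : Fintype (Fq2 n) := Fintype.ofFinite _
    show (x ^ qval n) ^ qval n = x
    rw [← pow_mul]
    have h : qval n * qval n = 2 ^ 2 ^ (n + 1) := by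
      rw [← pow_add, ← two_mul, pow_succ, mul_comm]
    have hcard : Fintype.card (Fq2 n) = 2 ^ 2 ^ (n + 1) := by
      rw [← Nat.card_eq_fintype_card, GaloisField.card 2 (2 ^ (n + 1)) (by positivity)]
    rw [h, ← hcard]
    exact FiniteField.pow_card x
  star_mul x y := by
    show (x * y) ^ qval n = y ^ qval n * x ^ qval n
    rw [mul_pow, mul_comm]
  star_add x y := by
    show (x + y) ^ qval n = x ^ qval n + y ^ qval n
    exact add_pow_char_pow x y 2 (2 ^ n)

/-- `SU(3,q)`: the subgroup of the unitary group `{M | M * (M^σ)ᵀ = 1}` (with respect to the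
star structure `σ : x ↦ x^q` on `F_{q²}`) consisting of the matrices of determinant 1. -/
noncomputable def SU3 (n : ℕ) : Subgroup (Matrix.unitaryGroup (Fin 3) (Fq2 n)) where
  carrier := {M | (M : Matrix (Fin 3) (Fin 3) (Fq2 n)).det = 1}
  one_mem' := by simp
  mul_mem' := by
    intro a b ha hb
    simp only [Set.mem_setOf_eq, Matrix.UnitaryGroup.mul_val, Matrix.det_mul] at *
    rw [ha, hb, mul_one]
  inv_mem' := by
    intro a ha
    simp only [Set.mem_setOf_eq, Matrix.UnitaryGroup.inv_val] at *
    rw [Matrix.star_eq_conjTranspose, Matrix.det_conjTranspose, ha, star_one]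

/-- `PSU(3,q)`: the quotient of `SU(3,q)` by its center. -/
noncomputable abbrev PSU3 (n : ℕ) : Type := SU3 n ⧸ Subgroup.center (SU3 n)

/-- `mu` is the Möbius function `H ↦ μ(H, G)` of the subgroup lattice of `G`:
`μ(G,G) = 1` and `∑_{J : H ≤ J ≤ G} μ(J,G) = 0` for `H < G`. -/
def IsSubgroupMobius {G : Type*} [Group G] (mu : Subgroup G → ℤ) : Prop :=
  ∀ H : Subgroup G, (∑ᶠ K ∈ {K : Subgroup G | H ≤ K}, mu K) = if H = ⊤ then 1 else 0

/-- `H` and `K` are conjugate subgroups. -/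
def IsConjSub {G : Type*} [Group G] (H K : Subgroup G) : Prop :=
  ∃ g : G, Subgroup.map (MulAut.conj g).toMonoidHom H = K

/-- The conjugacy classes of subgroups of `G`. -/
abbrev SubClasses (G : Type*) [Group G] : Type _ :=
  Quotient (MulAction.orbitRel (ConjAct G) (Subgroup G))

/-- The conjugacy class of a subgroup. -/
def clsOf {G : Type*} [Group G] (H : Subgroup G) : SubClasses G :=
  Quotient.mk (MulAction.orbitRel (ConjAct G) (Subgroup G)) H

/-- The order on conjugacy classes of subgroups: `[H] ≤ [K]` iff `H` is contained in some
conjugate of `K`. -/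
def clsLe {G : Type*} [Group G] (x y : SubClasses G) : Prop :=
  ∃ H K : Subgroup G, clsOf H = x ∧ clsOf K = y ∧ ∃ g : ConjAct G, H ≤ g • K

/-- `lam` is the Möbius function `[H] ↦ μ([H], [G])` of the poset of conjugacy classes of
subgroups of `G`: `μ([G],[G]) = 1` and `∑_{[J] : [H] ≤ [J] ≤ [G]} μ([J],[G]) = 0` for
`[H] < [G]`. -/
def IsClassMobius {G : Type*} [Group G] (lam : SubClasses G → ℤ) : Prop :=
  ∀ x : SubClasses G, (∑ᶠ y ∈ {y : SubClasses G | clsLe x y}, lam y) =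
    if x = clsOf (⊤ : Subgroup G) then 1 else 0

/-- `m` is the Möbius function `H ↦ μ_{L_p}({1}, H)` of the poset `L_p` of `p`-subgroups of `G`:
`μ_{L_p}({1},{1}) = 1` and `∑_{J ∈ L_p : J ≤ K} μ_{L_p}({1},J) = 0` for `{1} < K ∈ L_p`. -/
def IsPMobiusBot {G : Type*} [Group G] (p : ℕ) (m : Subgroup G → ℤ) : Prop :=
  m ⊥ = 1 ∧ ∀ K : Subgroup G, IsPGroup p K → ⊥ < K →
    (∑ᶠ J ∈ {J : Subgroup G | IsPGroup p J ∧ J ≤ K}, m J) = 0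

/-! ### The Möbius function of a subgroup lattice -/

section Moebius

variable {G : Type*} [Group G] [Finite G]

/-- Weisner's theorem for the subgroup lattice: for `K₀ ≤ M < G` the values of the Möbius function
over the subgroups meeting `M` exactly in `K₀` add up to zero. -/
theorem weisner {mu : Subgroup G → ℤ} (hmu : IsSubgroupMobius mu) {M : Subgroup G} (hM : M ≠ ⊤) :
    ∀ K₀ : Subgroup G, K₀ ≤ M → (∑ᶠ L ∈ {L : Subgroup G | L ⊓ M = K₀}, mu L) = 0 := by
  let _ : Fintype (Subgroup G) := Fintype.ofFinite _
  intro K₀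
  induction K₀ using WellFoundedGT.induction with
  | ind K₀ ih =>
    intro hK
    have hK0 : K₀ ≠ ⊤ := fun h => hM (top_le_iff.mp (h ▸ hK))
    have h1 := hmu K₀
    rw [if_neg hK0] at h1
    have conv : ∀ s : Set (Subgroup G), (∑ᶠ L ∈ s, mu L) = ∑ L ∈ s.toFinset, mu L := by
      intro s
      rw [← finsum_mem_coe_finset, Set.coe_toFinset]
    rw [conv] at h1
    rw [conv]
    have hmaps : ∀ L ∈ {K : Subgroup G | K₀ ≤ K}.toFinset,
        L ⊓ M ∈ {K : Subgroup G | K₀ ≤ K ∧ K ≤ M}.toFinset := by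
      intro L hL
      simp only [Set.mem_toFinset, Set.mem_ofPred_eq] at hL ⊢
      exact ⟨le_inf hL hK, inf_le_right⟩
    rw [← Finset.sum_fiberwise_of_maps_to hmaps] at h1
    rw [Finset.sum_eq_single K₀] at h1
    · rw [← h1]
      refine Finset.sum_congr ?_ fun _ _ => rfl
      ext L
      simp only [Set.mem_toFinset, Set.mem_ofPred_eq, Finset.mem_filter]
      exact ⟨fun h => ⟨h ▸ inf_le_left, h⟩, fun h => h.2⟩
    · intro K hKm hne
      simp only [Set.mem_toFinset, Set.mem_ofPred_eq] at hKm
      have h2 := ih K (lt_of_le_of_ne hKm.1 (Ne.symm hne)) hKm.2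
      rw [conv] at h2
      rw [← h2]
      refine Finset.sum_congr ?_ fun _ _ => rfl
      ext L
      simp only [Set.mem_toFinset, Set.mem_ofPred_eq, Finset.mem_filter]
      exact ⟨fun h => h.2, fun h => ⟨hKm.1.trans (h ▸ inf_le_left), h⟩⟩
    · intro h
      simp only [Set.mem_toFinset, Set.mem_ofPred_eq] at h
      exact absurd ⟨le_rfl, hK⟩ h

end Moebius

theorem mobius_top {G : Type*} [Group G] {mu : Subgroup G → ℤ} (hmu : IsSubgroupMobius mu) :
    mu ⊤ = 1 := by
  have h := hmu ⊤
  rw [if_pos rfl] at h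
  rw [← h]
  have : {K : Subgroup G | ⊤ ≤ K} = {⊤} := by ext K; simp
  rw [this, finsum_mem_singleton]

/-! ### Involutions and normal complements in finite groups -/

section Groups

variable {G : Type*} [Group G]

/-- `a` has order two. -/
def IsInv (a : G) : Prop := a ≠ 1 ∧ a * a = 1

theorem IsInv.conj {a : G} (h : IsInv a) (g : G) : IsInv (g * a * g⁻¹) := by
  refine ⟨fun h1 => h.1 ?_, ?_⟩
  · have : a = g⁻¹ * (g * a * g⁻¹) * g := by group
    rw [this, h1]; simp
  · have : g * a * g⁻¹ * (g * a * g⁻¹) = g * (a * a) * g⁻¹ := by group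
    rw [this, h.2]; simp

/-- Commuting is a transitive relation on the involutions of `G`. -/
def InvTrans (G : Type*) [Group G] : Prop :=
  ∀ a b c : G, IsInv a → IsInv b → IsInv c → Commute a b → Commute b c → Commute a c

/-- Two noncommuting involutions are conjugate when commuting is transitive: their product has odd
order, since otherwise a power of it would be an involution commuting with both. -/
theorem conj_of_not_commute [Finite G] (ht : InvTrans G) {Y : Subgroup G} {s t : G} (hs : IsInv s)
    (htt : IsInv t) (hsY : s ∈ Y) (htY : t ∈ Y) (hn : ¬ Commute s t) :
    ∃ g ∈ Y, g * s * g⁻¹ = t := by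
  have hsi : s⁻¹ = s := inv_eq_of_mul_eq_one_left hs.2
  have hti : t⁻¹ = t := inv_eq_of_mul_eq_one_left htt.2
  set x := s * t with hx
  have hxi : x⁻¹ = t * s := by rw [hx, mul_inv_rev, hsi, hti]
  have hsx : s * x = x⁻¹ * s := by
    rw [hxi, hx, ← mul_assoc, hs.2, mul_assoc, hs.2]; simp
  have hspow : ∀ k : ℕ, s * x ^ k = (x⁻¹) ^ k * s := by
    intro k
    exact (SemiconjBy.pow_right (show SemiconjBy s x x⁻¹ from hsx) k)
  have hpos := orderOf_pos x
  have ht' : t = s * x := by rw [hx, ← mul_assoc, hs.2, one_mul]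
  rcases Nat.even_or_odd' (orderOf x) with ⟨m, hm | hm⟩
  · exfalso
    have hxm : IsInv (x ^ m) := by
      refine ⟨fun h => ?_, ?_⟩
      · have := Nat.le_of_dvd (by omega) (orderOf_dvd_of_pow_eq_one h)
        omega
      · rw [← pow_add, ← two_mul, ← hm, pow_orderOf_eq_one]
    have hinv : (x⁻¹) ^ m = x ^ m := by
      rw [inv_pow]; exact inv_eq_of_mul_eq_one_left hxm.2
    have hc1 : Commute s (x ^ m) := by
      show s * x ^ m = x ^ m * s
      rw [hspow, hinv]
    have hc2 : Commute (x ^ m) t := by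
      rw [ht']
      exact hc1.symm.mul_right ((Commute.refl x).pow_left m)
    exact hn (ht _ _ _ hs hxm htt hc1 hc2)
  · refine ⟨x ^ m, Y.pow_mem (Y.mul_mem hsY htY) _, ?_⟩
    have h1 : x * (x ^ m * x ^ m) = 1 := by
      rw [← pow_add, ← pow_succ', ← two_mul, ← hm, pow_orderOf_eq_one]
    have h2 : x ^ m * x ^ m = x⁻¹ := eq_inv_of_mul_eq_one_right h1
    calc x ^ m * s * (x ^ m)⁻¹ = x ^ m * (s * (x⁻¹) ^ m) := by rw [inv_pow, mul_assoc]
      _ = x ^ m * (x ^ m * s) := by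
        congr 1
        have := (SemiconjBy.pow_right (SemiconjBy.inv_right (show SemiconjBy s x x⁻¹ from hsx)) m).eq
        rw [this, inv_inv]
      _ = x⁻¹ * s := by rw [← mul_assoc, h2]
      _ = t := by rw [← hsx, ht']

/-- Once two involutions of `Y` fail to commute, all involutions of `Y` are conjugate in `Y`. -/
theorem conj_of_two [Finite G] (ht : InvTrans G) {Y : Subgroup G} {a b c d : G} (ha : IsInv a)
    (hb : IsInv b) (hc : IsInv c) (hd : IsInv d) (haY : a ∈ Y) (hbY : b ∈ Y) (hcY : c ∈ Y)
    (hdY : d ∈ Y) (hn : ¬ Commute a b) : ∃ g ∈ Y, g * c * g⁻¹ = d := by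
  by_cases hcd : Commute c d
  · have key : ∀ e : G, IsInv e → e ∈ Y → ¬ Commute c e → ∃ g ∈ Y, g * c * g⁻¹ = d := by
      intro e he heY hce
      have hed : ¬ Commute e d := fun h => hce (ht _ _ _ hc hd he hcd h.symm)
      obtain ⟨g, hg, hg'⟩ := conj_of_not_commute ht hc he hcY heY hce
      obtain ⟨g2, hg2, hg2'⟩ := conj_of_not_commute ht he hd heY hdY hed
      refine ⟨g2 * g, Y.mul_mem hg2 hg, ?_⟩
      rw [← hg2', ← hg']; group
    by_cases hca : Commute c a
    · exact key b hb hbY fun h => hn (ht _ _ _ ha hc hb hca.symm h)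
    · exact key a ha haY hca
  · exact conj_of_not_commute ht hc hd hcY hdY hcd

/-- Counting involutions in the cosets of a strongly embedded subgroup `M`: some involution `i`
outside `M` inverts at least as many elements of `M` as there are involutions in `M`. -/
theorem exists_inv_count [Finite G] (M : Subgroup G) (hM : M ≠ ⊤)
    (h1 : ∀ j : G, IsInv j → ∃ g : G, g * j * g⁻¹ ∈ M)
    (h2 : ∀ g j : G, IsInv j → j ∈ M → g * j * g⁻¹ ∈ M → g ∈ M)
    (h3 : ∃ j ∈ M, IsInv j) :
    ∃ i : G, IsInv i ∧ i ∉ M ∧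
      Nat.card {j : G // j ∈ M ∧ IsInv j} ≤ Nat.card {m : G // m ∈ M ∧ i * m * i = m⁻¹} := by
  let _ : Fintype G := Fintype.ofFinite _
  set J : Finset G := Finset.univ.filter fun j => j ∈ M ∧ IsInv j with hJ
  set I : Finset G := Finset.univ.filter fun j => IsInv j with hI
  have hcardJ : Nat.card {j : G // j ∈ M ∧ IsInv j} = J.card := by
    rw [Nat.card_eq_fintype_card, Fintype.card_subtype]
  have hIcard : I.card = Fintype.card (G ⧸ M) * J.card := by
    have : I = (Finset.univ ×ˢ J).image
        (fun p : (G ⧸ M) × G => p.1.out * p.2 * p.1.out⁻¹) := by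
      ext i
      simp only [hI, hJ, Finset.mem_filter, Finset.mem_univ, true_and, Finset.mem_image,
        Finset.mem_product, Prod.exists]
      constructor
      · intro hi
        obtain ⟨g, hg⟩ := h1 i hi
        obtain ⟨m, hm⟩ := QuotientGroup.mk_out_eq_mul M g⁻¹
        refine ⟨(g⁻¹ : G), (m : G)⁻¹ * (g * i * g⁻¹) * m, ⟨?_, ?_⟩, ?_⟩
        · exact M.mul_mem (M.mul_mem (M.inv_mem m.2) hg) m.2
        · have := (hi.conj g).conj (m : G)⁻¹
          rwa [inv_inv] at this
        · rw [hm, mul_inv_rev, inv_inv]; group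
      · rintro ⟨a, b, ⟨_, hb⟩, rfl⟩
        exact hb.conj _
    rw [this, Finset.card_image_of_injOn, Finset.card_product, Finset.card_univ]
    rintro ⟨a, j⟩ ha ⟨b, k⟩ hb hab
    simp only [hJ, Finset.coe_product, Set.mem_prod, Finset.coe_filter, Finset.mem_univ, true_and,
      Set.mem_ofPred_eq] at ha hb hab
    have e : (b.out⁻¹ * a.out) * j * (b.out⁻¹ * a.out)⁻¹ = k := by
      have : k = b.out⁻¹ * (b.out * k * b.out⁻¹) * b.out := by group
      rw [this, ← hab]; group
    have hm := h2 (b.out⁻¹ * a.out) j ha.2.2 ha.2.1 (e ▸ hb.2.1)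
    have : a = b := by
      have h := (QuotientGroup.eq (s := M)).mpr hm
      rw [QuotientGroup.out_eq', QuotientGroup.out_eq'] at h
      exact h.symm
    subst this
    have : j = k := by simpa using hab
    rw [this]
  have hfib : I.card = ∑ x : G ⧸ M, (I.filter fun i : G => (QuotientGroup.mk i : G ⧸ M) = x).card :=
    Finset.card_eq_sum_card_fiberwise fun _ _ => Finset.mem_univ _
  have hJ1 : (I.filter fun i : G => (QuotientGroup.mk i : G ⧸ M) = ((1 : G) : G ⧸ M)) = J := by
    ext i
    simp only [hI, hJ, Finset.mem_filter, Finset.mem_univ, true_and]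
    rw [eq_comm, QuotientGroup.eq]
    simp [and_comm]
  obtain ⟨y, hy⟩ : ∃ y, y ∉ M := by
    by_contra! h
    exact hM (eq_top_iff.mpr fun x _ => h x)
  have hex : ∃ x : G ⧸ M, x ≠ ((1 : G) : G ⧸ M) ∧
      J.card ≤ (I.filter fun i : G => (QuotientGroup.mk i : G ⧸ M) = x).card := by
    by_contra! h
    have : ∑ x : G ⧸ M, (I.filter fun i : G => (QuotientGroup.mk i : G ⧸ M) = x).card < ∑ _x : G ⧸ M, J.card := by
      refine Finset.sum_lt_sum (fun x _ => ?_) ⟨(y : G ⧸ M), Finset.mem_univ _, h _ ?_⟩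
      · by_cases hx : x = ((1 : G) : G ⧸ M)
        · rw [hx, hJ1]
        · exact (h x hx).le
      · intro e
        rw [eq_comm, QuotientGroup.eq] at e
        exact hy (by simpa using e)
    rw [← hfib, hIcard] at this
    simp at this
  obtain ⟨x, hx1, hx⟩ := hex
  obtain ⟨j0, hj0, hj0'⟩ := h3
  have hJpos : 0 < J.card := Finset.card_pos.mpr ⟨j0, by simp [hJ, hj0, hj0']⟩
  obtain ⟨i, hi⟩ := Finset.card_pos.mp (hJpos.trans_le hx)
  simp only [hI, Finset.mem_filter, Finset.mem_univ, true_and] at hi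
  refine ⟨i, hi.1, ?_, ?_⟩
  · intro hiM
    apply hx1
    rw [← hi.2, eq_comm, QuotientGroup.eq]
    simpa using hiM
  · rw [hcardJ]
    refine hx.trans ?_
    rw [Nat.card_eq_fintype_card, Fintype.card_subtype]
    refine Finset.card_le_card_of_injOn (fun k => i⁻¹ * k) ?_ (fun a _ b _ h => mul_left_cancel h)
    intro k hk
    simp only [hI, Finset.mem_filter, Finset.mem_univ, true_and, Finset.coe_filter,
      Set.mem_ofPred_eq] at hk ⊢
    refine ⟨QuotientGroup.eq.mp (hi.2.trans hk.2.symm), ?_⟩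
    have hki : k⁻¹ = k := inv_eq_of_mul_eq_one_left hk.1.2
    rw [mul_inv_rev, hki, inv_inv]; group

/-- Burnside's transfer theorem for a Sylow subgroup of order three, for subgroups of `G`. -/
theorem exists_compl_three [Finite G] {H K : Subgroup G} (hHK : H ≤ K) (hH : Nat.card H = 3)
    (h9 : ¬ 9 ∣ Nat.card K)
    (hN : ∀ g ∈ K, (∀ x ∈ H, g * x * g⁻¹ ∈ H) → ∀ x ∈ H, g * x = x * g) :
    ∃ R ≤ K, (∀ g ∈ K, ∀ r ∈ R, g * r * g⁻¹ ∈ R) ∧ R ⊓ H = ⊥ ∧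
      (∀ g ∈ K, ∃ r ∈ R, ∃ x ∈ H, g = r * x) ∧ Nat.card R * 3 = Nat.card K := by
  have h3 : Fact (Nat.Prime 3) := ⟨Nat.prime_three⟩
  set H' := H.subgroupOf K with hH'
  have hcard : Nat.card H' = 3 := by
    rw [← hH]; exact Nat.card_congr (Subgroup.subgroupOfEquivOfLe hHK).toEquiv
  have hf : (Nat.card K).factorization 3 = 1 := by
    have h31 : 3 ∣ Nat.card K := hcard ▸ Subgroup.card_subgroup_dvd_card H'
    have hne : Nat.card K ≠ 0 := Nat.card_pos.ne'
    apply le_antisymm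
    · by_contra! h
      exact h9 ((Nat.Prime.pow_dvd_iff_le_factorization Nat.prime_three hne).mpr h)
    · exact (Nat.Prime.dvd_iff_one_le_factorization Nat.prime_three hne).mp h31
  let P : Sylow 3 K := Sylow.ofCard H' (by rw [hcard, hf, pow_one])
  have hP : (P : Subgroup K) = H' := rfl
  have hnc : Subgroup.normalizer (P : Set K) ≤ Subgroup.centralizer ((P : Subgroup K) : Set K) := by
    intro g hg
    rw [Subgroup.mem_centralizer_iff]
    intro x hx
    have hx' : (x : G) ∈ H := Subgroup.mem_subgroupOf.mp (show x ∈ H' from hx)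
    refine Subtype.ext ?_
    refine (hN g g.2 (fun y hy => ?_) x hx').symm
    exact (Subgroup.mem_normalizer_iff.mp hg ⟨y, hHK hy⟩).mp (show _ ∈ H' from hy)
  obtain ⟨R', hRn, hc⟩ : ∃ R' : Subgroup K, R'.Normal ∧ R'.IsComplement' H' :=
    ⟨_, inferInstance, MonoidHom.ker_transferSylow_isComplement' P hnc⟩
  clear hnc hP
  refine ⟨R'.map K.subtype, Subgroup.map_subtype_le _, ?_, ?_, ?_, ?_⟩
  · rintro g hg _ ⟨r, hr, rfl⟩
    exact ⟨⟨g, hg⟩ * r * ⟨g, hg⟩⁻¹, hRn.conj_mem r hr _, rfl⟩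
  · rw [eq_bot_iff]
    rintro _ ⟨⟨r, hr, rfl⟩, hH2⟩
    have : r ∈ R' ⊓ H' := ⟨hr, hH2⟩
    rw [hc.disjoint.eq_bot] at this
    rw [Subgroup.mem_bot.mp this]
    simp
  · intro g hg
    have : (⟨g, hg⟩ : K) ∈ (R' ⊔ H' : Subgroup K) := by rw [hc.sup_eq_top]; trivial
    rw [← SetLike.mem_coe, Subgroup.normal_mul] at this
    obtain ⟨r, hr, x, hx, hrx⟩ := this
    exact ⟨r, ⟨r, hr, rfl⟩, x, hx, by rw [← Subgroup.coe_mul]; exact congrArg Subtype.val hrx.symm⟩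
  · rw [← hcard, ← hc.card_mul_card]
    congr 1
    exact Nat.card_congr (R'.equivMapOfInjective K.subtype K.subtype_injective).toEquiv.symm

/-- A subgroup whose Sylow 2-subgroups are cyclic has a normal subgroup of odd order containing
all elements of odd order. -/
theorem exists_two_compl [Finite G] {L : Subgroup G}
    (hc : ∀ P : Subgroup G, P ≤ L → IsPGroup 2 P → IsCyclic P) :
    ∃ O ≤ L, (∀ g ∈ L, ∀ r ∈ O, g * r * g⁻¹ ∈ O) ∧ Odd (Nat.card O) ∧
      ∀ g ∈ L, Odd (orderOf g) → g ∈ O := by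
  by_cases h2 : 2 ∣ Nat.card L
  · have h2p : Fact (Nat.Prime 2) := ⟨Nat.prime_two⟩
    have hmin : (Nat.card L).minFac = 2 := (Nat.minFac_eq_two_iff _).mpr h2
    let P : Sylow 2 L := default
    have hPc : IsCyclic P := by
      have e : (P : Subgroup L) ≃* ((P : Subgroup L).map L.subtype) :=
        (P : Subgroup L).equivMapOfInjective L.subtype L.subtype_injective
      have := hc _ (Subgroup.map_subtype_le (P : Subgroup L)) (P.2.map L.subtype)
      exact isCyclic_of_surjective e.symm e.symm.surjective
    obtain ⟨f, hcom⟩ : ∃ f : L →* P, f.ker.IsComplement' (P : Subgroup L) :=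
      ⟨_, hPc.isComplement' hmin⟩
    set O' := f.ker with hO'
    have hOn : O'.Normal := inferInstance
    have hodd : Odd (Nat.card O') := by
      have hi : (P : Subgroup L).index = Nat.card O' := hcom.index_eq_card
      have := P.not_dvd_index
      rw [hi] at this
      rw [← Nat.not_even_iff_odd, even_iff_two_dvd]; exact this
    refine ⟨O'.map L.subtype, Subgroup.map_subtype_le _, ?_, ?_, ?_⟩
    · rintro g hg _ ⟨r, hr, rfl⟩
      exact ⟨⟨g, hg⟩ * r * ⟨g, hg⟩⁻¹, hOn.conj_mem r hr _, rfl⟩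
    · rwa [← Nat.card_congr (O'.equivMapOfInjective L.subtype L.subtype_injective).toEquiv]
    · intro g hg hgo
      refine ⟨⟨g, hg⟩, ?_, rfl⟩
      show _ = _
      rw [← orderOf_eq_one_iff]
      have d1 : orderOf (f ⟨g, hg⟩) ∣ orderOf g := by
        have : orderOf (f ⟨g, hg⟩) ∣ orderOf (⟨g, hg⟩ : L) := orderOf_map_dvd f _
        exact this.trans (dvd_of_eq (Subgroup.orderOf_mk g hg))
      obtain ⟨k, hk⟩ := P.2.exists_card_eq
      have d2 : orderOf (f ⟨g, hg⟩) ∣ 2 ^ k := by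
        rw [← hk]; exact orderOf_dvd_natCard _
      have hcop : Nat.Coprime (orderOf g) (2 ^ k) := (Nat.Coprime.pow_right k
        (Nat.coprime_two_right.mpr hgo))
      exact Nat.eq_one_of_dvd_coprimes hcop d1 d2
  · refine ⟨L, le_rfl, fun g hg r hr => L.mul_mem (L.mul_mem hg hr) (L.inv_mem hg), ?_,
      fun g hg _ => hg⟩
    rw [← Nat.not_even_iff_odd, even_iff_two_dvd]; exact h2

end Groups

/-! ### Subgroups of `SL(2,κ)` generated by transvections in characteristic two -/

section Rank2

variable {κ : Type*} [Field κ]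

/-- The natural action of `SL(2,κ)` on column vectors. -/
def act (g : Matrix.SpecialLinearGroup (Fin 2) κ) (v : Fin 2 → κ) : Fin 2 → κ :=
  (g : Matrix (Fin 2) (Fin 2) κ).mulVec v

/-- The determinant form on `κ²`, with the sign that is immaterial in characteristic two. -/
def dt (v w : Fin 2 → κ) : κ := v 0 * w 1 + v 1 * w 0

theorem act_zero_apply (g : Matrix.SpecialLinearGroup (Fin 2) κ) (v : Fin 2 → κ) :
    act g v 0 = g 0 0 * v 0 + g 0 1 * v 1 := by
  simp [act, Matrix.mulVec, dotProduct, Fin.sum_univ_two]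

theorem act_one_apply (g : Matrix.SpecialLinearGroup (Fin 2) κ) (v : Fin 2 → κ) :
    act g v 1 = g 1 0 * v 0 + g 1 1 * v 1 := by
  simp [act, Matrix.mulVec, dotProduct, Fin.sum_univ_two]

theorem act_mul (g h : Matrix.SpecialLinearGroup (Fin 2) κ) (v : Fin 2 → κ) :
    act (g * h) v = act g (act h v) := by
  unfold act
  rw [Matrix.SpecialLinearGroup.coe_mul, Matrix.mulVec_mulVec]

theorem act_one (v : Fin 2 → κ) : act 1 v = v := by simp [act]

theorem act_inv_act (g : Matrix.SpecialLinearGroup (Fin 2) κ) (v : Fin 2 → κ) :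
    act g⁻¹ (act g v) = v := by rw [← act_mul, inv_mul_cancel, act_one]

theorem act_act_inv (g : Matrix.SpecialLinearGroup (Fin 2) κ) (v : Fin 2 → κ) :
    act g (act g⁻¹ v) = v := by rw [← act_mul, mul_inv_cancel, act_one]

theorem act_add (g : Matrix.SpecialLinearGroup (Fin 2) κ) (v w : Fin 2 → κ) :
    act g (v + w) = act g v + act g w := Matrix.mulVec_add _ _ _

theorem act_smul (g : Matrix.SpecialLinearGroup (Fin 2) κ) (c : κ) (v : Fin 2 → κ) :
    act g (c • v) = c • act g v := Matrix.mulVec_smul _ _ _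

theorem act_zero (g : Matrix.SpecialLinearGroup (Fin 2) κ) : act g 0 = 0 := Matrix.mulVec_zero _

theorem act_ext {g h : Matrix.SpecialLinearGroup (Fin 2) κ} (H : ∀ v, act g v = act h v) :
    g = h := by
  refine Subtype.ext ?_
  exact Matrix.toLin'.injective (LinearMap.ext fun v => by simpa [act] using H v)

theorem dt_comm (v w : Fin 2 → κ) : dt v w = dt w v := by unfold dt; ring

theorem dt_add (u v w : Fin 2 → κ) : dt u (v + w) = dt u v + dt u w := by
  simp only [dt, Pi.add_apply]; ring

theorem dt_add' (u v w : Fin 2 → κ) : dt (u + v) w = dt u w + dt v w := by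
  simp only [dt, Pi.add_apply]; ring

theorem dt_smul (c : κ) (v w : Fin 2 → κ) : dt v (c • w) = c * dt v w := by
  simp only [dt, Pi.smul_apply, smul_eq_mul]; ring

theorem dt_smul' (c : κ) (v w : Fin 2 → κ) : dt (c • v) w = c * dt v w := by
  simp only [dt, Pi.smul_apply, smul_eq_mul]; ring

theorem exists_dt_one {v : Fin 2 → κ} (hv : v ≠ 0) : ∃ y : Fin 2 → κ, dt y v = 1 := by
  by_cases h0 : v 0 = 0
  · have h1 : v 1 ≠ 0 := fun h1 => hv (by ext i; fin_cases i <;> simp [h0, h1])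
    exact ⟨![(v 1)⁻¹, 0], by simp [dt, h1]⟩
  · exact ⟨![0, (v 0)⁻¹], by simp [dt, h0]⟩

variable [CharP κ 2]

theorem dt_self (v : Fin 2 → κ) : dt v v = 0 := by unfold dt; grind

theorem dt_act (g : Matrix.SpecialLinearGroup (Fin 2) κ) (v w : Fin 2 → κ) :
    dt (act g v) (act g w) = dt v w := by
  have h := g.det_coe
  rw [Matrix.det_fin_two] at h
  simp only [dt, act_zero_apply, act_one_apply]
  grind

/-- Any three vectors of the plane satisfy this linear relation. -/
theorem dt_relation (x y v : Fin 2 → κ) : dt y v • x = dt x v • y + dt y x • v := by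
  ext i
  fin_cases i <;> simp [dt] <;> grind

theorem exists_smul_of_dt {v w : Fin 2 → κ} (hw : w ≠ 0) (h : dt v w = 0) : ∃ c : κ, v = c • w := by
  unfold dt at h
  by_cases h0 : w 0 = 0
  · have h1 : w 1 ≠ 0 := fun h1 => hw (by ext i; fin_cases i <;> simp [h0, h1])
    refine ⟨v 1 / w 1, ?_⟩
    ext i
    fin_cases i
    · simp [h0]; rw [h0] at h; simpa [h1] using h
    · simp [h1]
  · refine ⟨v 0 / w 0, ?_⟩
    ext i
    fin_cases i
    · simp [h0]
    · simp; field_simp; grind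

/-- The transvection `x ↦ x + l * dt x v • v`. -/
def tr (l : κ) (v : Fin 2 → κ) : Matrix.SpecialLinearGroup (Fin 2) κ :=
  ⟨!![1 + l * v 0 * v 1, l * v 0 * v 0; l * v 1 * v 1, 1 + l * v 0 * v 1], by
    rw [Matrix.det_fin_two_of]; grind⟩

theorem act_tr (l : κ) (v x : Fin 2 → κ) : act (tr l v) x = x + (l * dt x v) • v := by
  ext i
  fin_cases i
  · rw [Fin.zero_eta, act_zero_apply]; simp [tr, dt]; ring
  · rw [Fin.mk_one, act_one_apply]; simp [tr, dt]; ring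

theorem tr_mul (l m : κ) (v : Fin 2 → κ) : tr l v * tr m v = tr (l + m) v := by
  apply act_ext
  intro x
  rw [act_mul, act_tr, act_tr, act_tr, dt_add', dt_smul', dt_self]
  module

theorem tr_smul (l c : κ) (v : Fin 2 → κ) : tr l (c • v) = tr (l * c ^ 2) v := by
  apply act_ext
  intro x
  rw [act_tr, act_tr, dt_smul]
  module

theorem tr_conj (g : Matrix.SpecialLinearGroup (Fin 2) κ) (l : κ) (v : Fin 2 → κ) :
    g * tr l v * g⁻¹ = tr l (act g v) := by
  apply act_ext
  intro x
  rw [act_mul, act_mul, act_tr, act_tr, act_add, act_smul, act_act_inv]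
  conv_rhs => rw [← act_act_inv g x, dt_act, act_act_inv]

theorem tr_eq_one {l : κ} {v : Fin 2 → κ} (hv : v ≠ 0) (h : tr l v = 1) : l = 0 := by
  obtain ⟨y, hy⟩ := exists_dt_one hv
  have h1 := act_tr l v y
  rw [h, act_one, hy, mul_one, left_eq_add, smul_eq_zero] at h1
  exact h1.resolve_right hv

theorem sq_inj {a b : κ} (h : a ^ 2 = b ^ 2) : a = b := by
  have : (a + b) ^ 2 = 0 := by grind
  have := pow_eq_zero_iff (two_ne_zero) |>.mp this
  grind

theorem tr_one_inj {v w : Fin 2 → κ} (h : tr 1 v = tr 1 w) : v = w := by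
  have h1 := congrArg (fun g : Matrix.SpecialLinearGroup (Fin 2) κ => g 0 1) h
  have h2 := congrArg (fun g : Matrix.SpecialLinearGroup (Fin 2) κ => g 1 0) h
  simp [tr] at h1 h2
  ext i
  fin_cases i
  · exact sq_inj (by simpa [sq] using h1)
  · exact sq_inj (by simpa [sq] using h2)

theorem tr_isInv {l : κ} {v : Fin 2 → κ} (hl : l ≠ 0) (hv : v ≠ 0) : IsInv (tr l v) := by
  refine ⟨fun h => hl (tr_eq_one hv h), ?_⟩
  rw [tr_mul, CharTwo.add_self_eq_zero]
  apply act_ext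
  intro x
  simp [act_tr, act_one]

theorem exists_tr_of_isInv [Finite κ] {g : Matrix.SpecialLinearGroup (Fin 2) κ} (hg : IsInv g) :
    ∃ v, v ≠ 0 ∧ g = tr 1 v := by
  have h1 : g⁻¹ = g := inv_eq_of_mul_eq_one_left hg.2
  have hd := g.det_coe
  rw [Matrix.det_fin_two] at hd
  have h2 : g 1 1 = g 0 0 := by
    have := congrArg (fun g : Matrix.SpecialLinearGroup (Fin 2) κ => g 0 0) h1
    rw [Matrix.SpecialLinearGroup.SL2_inv_expl] at this
    simpa using this
  have hc : ringChar κ = 2 := ringChar.eq κ 2 ▸ rfl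
  obtain ⟨a, ha⟩ := FiniteField.isSquare_of_char_two hc (g 0 1)
  obtain ⟨b, hb⟩ := FiniteField.isSquare_of_char_two hc (g 1 0)
  have hab : 1 + a * b = g 0 0 := by
    apply sq_inj
    grind
  have : g = tr 1 ![a, b] := by
    ext i j
    fin_cases i <;> fin_cases j <;> simp [tr, hab, ← ha, ← hb, h2]
  refine ⟨_, ?_, this⟩
  intro h0
  apply hg.1
  rw [this, h0]
  apply act_ext
  intro x
  simp [act_tr, act_one]

theorem tr_commute {v w : Fin 2 → κ} : Commute (tr 1 v) (tr 1 w) ↔ dt v w = 0 := by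
  have : Commute (tr 1 v) (tr 1 w) ↔ tr 1 w * tr 1 v * (tr 1 w)⁻¹ = tr 1 v := by
    rw [mul_inv_eq_iff_eq_mul]
    exact ⟨fun h => h.eq.symm, fun h => h.symm⟩
  rw [this, tr_conj]
  constructor
  · intro h
    have := tr_one_inj h
    rw [act_tr, add_eq_left, one_mul, smul_eq_zero] at this
    rcases this with h | h
    · exact h
    · rw [h]; simp [dt]
  · intro h
    rw [act_tr, h]; simp

theorem invTrans_SL2 [Finite κ] : InvTrans (Matrix.SpecialLinearGroup (Fin 2) κ) := by
  intro a b c ha hb hc hab hbc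
  obtain ⟨u, hu, rfl⟩ := exists_tr_of_isInv ha
  obtain ⟨v, hv, rfl⟩ := exists_tr_of_isInv hb
  obtain ⟨w, hw, rfl⟩ := exists_tr_of_isInv hc
  rw [tr_commute] at *
  obtain ⟨c, rfl⟩ := exists_smul_of_dt hv hab
  rw [dt_smul', hbc, mul_zero]

/-- An element of `SL(2,κ)` fixing a nonzero vector is a transvection. -/
theorem eq_tr_of_fix {g : Matrix.SpecialLinearGroup (Fin 2) κ} {v : Fin 2 → κ} (hv : v ≠ 0)
    (h : act g v = v) : ∃ l, g = tr l v := by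
  obtain ⟨y, hy⟩ := exists_dt_one hv
  have h1 : dt (act g y + y) v = 0 := by
    rw [dt_add']
    conv_lhs => rw [← h, dt_act, h]
    exact CharTwo.add_self_eq_zero _
  obtain ⟨c, hc⟩ := exists_smul_of_dt hv h1
  have hc' : act g y = y + c • v := by
    rw [← hc, add_comm, add_assoc, CharTwo.add_self_eq_zero, add_zero]
  refine ⟨c, act_ext fun x => ?_⟩
  have hx := dt_relation x y v
  rw [hy, one_smul] at hx
  rw [act_tr]
  have h2 : act g x = dt x v • (y + c • v) + dt y x • v := by
    rw [← hc']
    conv_lhs => rw [hx, act_add, act_smul, act_smul, h]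
  rw [h2]
  nth_rewrite 3 [hx]
  module

end Rank2

section Rank2b

variable {κ : Type*} [Field κ] [Finite κ] [CharP κ 2]

theorem exists_sqrt_mem (F : Subfield κ) {a : κ} (h : a ∈ F) : ∃ b ∈ F, a = b ^ 2 := by
  have : CharP F 2 := (RingHom.charP_iff (algebraMap F κ) (algebraMap F κ).injective 2).mpr ‹_›
  have hc : ringChar F = 2 := ringChar.eq F 2 ▸ rfl
  obtain ⟨b, hb⟩ := FiniteField.isSquare_of_char_two hc (⟨a, h⟩ : F)
  exact ⟨b, b.2, by rw [sq]; exact congrArg Subtype.val hb⟩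

theorem mem_of_sq_mem (F : Subfield κ) {a : κ} (h : a ^ 2 ∈ F) : a ∈ F := by
  obtain ⟨b, hb, e⟩ := exists_sqrt_mem F h
  rw [sq_inj e]; exact hb

variable {Y : Subgroup (Matrix.SpecialLinearGroup (Fin 2) κ)} {F : Subfield κ}

/-- Good vectors (those whose transvection lies in `Y`) are permuted transitively by `Y`. -/
theorem exists_act_eq {u v x y : Fin 2 → κ} (hu : tr 1 u ∈ Y) (hv : tr 1 v ∈ Y)
    (hd : dt u v ≠ 0) (hx0 : x ≠ 0) (hy0 : y ≠ 0) (hx : tr 1 x ∈ Y) (hy : tr 1 y ∈ Y) :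
    ∃ g ∈ Y, act g x = y := by
  have hu0 : u ≠ 0 := fun h => hd (by simp [h, dt])
  have hv0 : v ≠ 0 := fun h => hd (by simp [h, dt])
  obtain ⟨g, hg, e⟩ := conj_of_two invTrans_SL2 (tr_isInv one_ne_zero hu0)
    (tr_isInv one_ne_zero hv0) (tr_isInv one_ne_zero hx0) (tr_isInv one_ne_zero hy0) hu hv hx hy
    (by rwa [tr_commute])
  rw [tr_conj] at e
  exact ⟨g, hg, tr_one_inj e⟩

theorem good_smul (hF : ∀ v, v ≠ 0 → tr 1 v ∈ Y → ∀ l, tr l v ∈ Y ↔ l ∈ F) {v : Fin 2 → κ}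
    (hv0 : v ≠ 0) (hv : tr 1 v ∈ Y) {c : κ} : tr 1 (c • v) ∈ Y ↔ c ∈ F := by
  rw [tr_smul, one_mul, hF v hv0 hv]
  exact ⟨mem_of_sq_mem F, fun h => F.pow_mem h 2⟩

/-- The involution count applied to the stabilizer of a line `⟨u⟩`: it produces a full split torus
over `F` whose second eigenline is the image of `⟨u⟩` under an involution of `Y`. -/
theorem exists_torus (hF : ∀ v, v ≠ 0 → tr 1 v ∈ Y → ∀ l, tr l v ∈ Y ↔ l ∈ F)
    {u v : Fin 2 → κ} (hu : tr 1 u ∈ Y) (hv : tr 1 v ∈ Y) (hd : dt u v ≠ 0) :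
    ∃ w, w ≠ 0 ∧ tr 1 w ∈ Y ∧ dt u w ≠ 0 ∧ ∀ a ∈ F, a ≠ 0 → ∃ m ∈ Y, act m u = a • u ∧
      act m (act (tr 1 w) u) = a⁻¹ • act (tr 1 w) u := by
  have hu0 : u ≠ 0 := fun h => hd (by simp [h, dt])
  let M : Subgroup Y :=
    { carrier := {g | ∃ c : κ, act (g : Matrix.SpecialLinearGroup (Fin 2) κ) u = c • u}
      one_mem' := ⟨1, by simp [act_one]⟩
      mul_mem' := by
        rintro a b ⟨c, hc⟩ ⟨d, hd⟩
        exact ⟨d * c, by rw [Subgroup.coe_mul, act_mul, hd, act_smul, hc, smul_smul]⟩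
      inv_mem' := by
        rintro a ⟨c, hc⟩
        have hc0 : c ≠ 0 := by
          rintro rfl
          have := act_inv_act (a : Matrix.SpecialLinearGroup (Fin 2) κ) u
          rw [hc, zero_smul, act_zero] at this
          exact hu0 this.symm
        refine ⟨c⁻¹, ?_⟩
        have := act_inv_act (a : Matrix.SpecialLinearGroup (Fin 2) κ) u
        rw [hc, act_smul] at this
        rw [Subgroup.coe_inv]
        conv_rhs => rw [← this, smul_smul, inv_mul_cancel₀ hc0, one_smul] }
  have hMdef : ∀ g : Y, g ∈ M ↔
      ∃ c : κ, act (g : Matrix.SpecialLinearGroup (Fin 2) κ) u = c • u := fun _ => Iff.rfl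
  have hMtr : ∀ w (hw : tr 1 w ∈ Y), (⟨tr 1 w, hw⟩ : Y) ∈ M ↔ dt u w = 0 := by
    intro w hw
    rw [hMdef]
    constructor
    · rintro ⟨c, hc⟩
      simp only [act_tr] at hc
      have := congrArg (fun x => dt u x) hc
      simp only [dt_add, dt_smul, dt_self, zero_add, mul_zero, one_mul] at this
      exact mul_self_eq_zero.mp this
    · intro h
      exact ⟨1, by simp [act_tr, h]⟩
  have hinv : ∀ j : Y, IsInv j → ∃ w, w ≠ 0 ∧ ∃ hw : tr 1 w ∈ Y, j = ⟨tr 1 w, hw⟩ := by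
    intro j hj
    have : IsInv (j : Matrix.SpecialLinearGroup (Fin 2) κ) :=
      ⟨fun h => hj.1 (Subtype.ext h), by rw [← Subgroup.coe_mul, hj.2]; rfl⟩
    obtain ⟨w, hw0, hw⟩ := exists_tr_of_isInv this
    exact ⟨w, hw0, hw ▸ j.2, Subtype.ext hw⟩
  have hisInv : ∀ w (hw : tr 1 w ∈ Y), w ≠ 0 → IsInv (⟨tr 1 w, hw⟩ : Y) := by
    intro w hw hw0
    have := tr_isInv (l := (1 : κ)) one_ne_zero hw0
    exact ⟨fun h => this.1 (congrArg Subtype.val h), Subtype.ext this.2⟩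
  have hM : M ≠ ⊤ := by
    intro h
    exact hd ((hMtr v hv).mp (h ▸ Subgroup.mem_top _))
  obtain ⟨i, hi, hiM, hcount⟩ := exists_inv_count M hM
    (by
      intro j hj
      obtain ⟨w, hw0, hw, rfl⟩ := hinv j hj
      obtain ⟨g, hg, e⟩ := exists_act_eq hu hv hd hw0 hu0 hw hu
      refine ⟨⟨g, hg⟩, ?_⟩
      have : (⟨g, hg⟩ * ⟨tr 1 w, hw⟩ * ⟨g, hg⟩⁻¹ : Y) = ⟨tr 1 u, hu⟩ := by
        refine Subtype.ext ?_
        show g * tr 1 w * g⁻¹ = _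
        rw [tr_conj, e]
      rw [this, hMtr]
      exact dt_self u)
    (by
      rintro g j hj hjM hgM
      obtain ⟨w, hw0, hw, rfl⟩ := hinv j hj
      have e : g * ⟨tr 1 w, hw⟩ * g⁻¹ = (⟨tr 1 (act g w), by
          rw [← tr_conj]; exact Y.mul_mem (Y.mul_mem g.2 hw) (Y.inv_mem g.2)⟩ : Y) := by
        exact Subtype.ext (tr_conj _ _ _)
      rw [e, hMtr] at hgM
      rw [hMtr] at hjM
      obtain ⟨c, hc⟩ := exists_smul_of_dt hu0 ((dt_comm w u).trans hjM)
      have hc0 : c ≠ 0 := by rintro rfl; exact hw0 (by rw [hc, zero_smul])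
      rw [hc, act_smul, dt_smul, mul_eq_zero] at hgM
      obtain ⟨d, hd⟩ := exists_smul_of_dt hu0
        ((dt_comm _ u).trans (hgM.resolve_left hc0))
      exact ⟨d, hd⟩)
    ⟨⟨tr 1 u, hu⟩, (hMtr u hu).mpr (dt_self u), hisInv u hu hu0⟩
  obtain ⟨w, hw0, hw, rfl⟩ := hinv i hi
  rw [hMtr] at hiM
  refine ⟨w, hw0, hw, hiM, ?_⟩
  set u' := act (tr 1 w) u with hu'
  -- the inverted elements of `M` act on `u` and `u'` by inverse scalars, which lie in `F`
  have key : ∀ m : {m : Y // m ∈ M ∧ ⟨tr 1 w, hw⟩ * m * ⟨tr 1 w, hw⟩ = m⁻¹},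
      ∃ c : {c : F // c ≠ 0}, act (m : Y) u = (c : κ) • u ∧ act (m : Y) u' = (c : κ)⁻¹ • u' := by
    rintro ⟨m, ⟨c, hc⟩, hm⟩
    have hc0 : c ≠ 0 := by
      rintro rfl
      have := act_inv_act (m : Matrix.SpecialLinearGroup (Fin 2) κ) u
      rw [hc, zero_smul, act_zero] at this
      exact hu0 this.symm
    have hcF : c ∈ F := by
      rw [← good_smul hF hu0 hu, ← hc, ← tr_conj]
      exact Y.mul_mem (Y.mul_mem m.2 hu) (Y.inv_mem m.2)
    refine ⟨⟨⟨c, hcF⟩, fun h => hc0 (congrArg Subtype.val h)⟩, hc, ?_⟩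
    have hm' : tr 1 w * (m : Matrix.SpecialLinearGroup (Fin 2) κ) * tr 1 w =
        (m : Matrix.SpecialLinearGroup (Fin 2) κ)⁻¹ := congrArg Subtype.val hm
    have h1 : act (m : Matrix.SpecialLinearGroup (Fin 2) κ)⁻¹ u = c⁻¹ • u := by
      have := act_inv_act (m : Matrix.SpecialLinearGroup (Fin 2) κ) u
      rw [hc, act_smul] at this
      conv_rhs => rw [← this, smul_smul, inv_mul_cancel₀ hc0, one_smul]
    rw [← hm', act_mul, act_mul] at h1
    have h2 := congrArg (act (tr 1 w)) h1
    have hww : tr 1 w * tr 1 w = 1 := (tr_isInv (l := (1 : κ)) one_ne_zero hw0).2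
    rw [← act_mul, hww, act_one, act_smul] at h2
    exact h2
  choose φ hφ1 hφ2 using key
  have hdu' : dt u u' ≠ 0 := by
    rw [hu', act_tr, dt_add, dt_self, zero_add, dt_smul, one_mul]
    exact mul_ne_zero hiM hiM
  have hφinj : Function.Injective φ := by
    intro a b hab
    refine Subtype.ext (Subtype.ext (act_ext fun x => ?_))
    have hx := dt_relation x u u'
    have : x = (dt u u')⁻¹ • (dt x u' • u + dt u x • u') := by
      rw [← hx, smul_smul, inv_mul_cancel₀ hdu', one_smul]
    rw [this]
    simp only [act_smul, act_add, hφ1, hφ2, hab]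
  have hcard : Nat.card {c : F // c ≠ 0} ≤ Nat.card {j : Y // j ∈ M ∧ IsInv j} := by
    have hmem : ∀ c : {c : F // c ≠ 0}, tr 1 ((c : κ) • u) ∈ Y := fun c =>
      (good_smul hF hu0 hu).mpr c.1.2
    have hc0 : ∀ c : {c : F // c ≠ 0}, (c : κ) ≠ 0 := fun c h => c.2 (Subtype.ext h)
    refine Nat.card_le_card_of_injective (fun c => ⟨⟨tr 1 ((c : κ) • u), hmem c⟩, ?_, ?_⟩) ?_
    · rw [hMtr, dt_smul, dt_self, mul_zero]
    · exact hisInv _ _ (smul_ne_zero (hc0 c) hu0)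
    · intro a b hab
      have h1 : tr 1 ((a : κ) • u) = tr 1 ((b : κ) • u) :=
        congrArg Subtype.val (congrArg Subtype.val hab)
      exact Subtype.ext (Subtype.ext (smul_left_injective κ hu0 (tr_one_inj h1)))
  have hbij := hφinj.bijective_of_nat_card_le (hcard.trans hcount)
  intro a ha ha0
  obtain ⟨m, hm⟩ := hbij.2 ⟨⟨a, ha⟩, fun h => ha0 (congrArg Subtype.val h)⟩
  refine ⟨m, m.1.2, ?_, ?_⟩
  · rw [hφ1, hm]
  · rw [hφ2, hm]

/-- `Y` contains the transvections of all vectors of some `F`-lattice of determinant one. -/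
theorem exists_lattice {f : κ} (hf : f ∈ F) (hf0 : f ≠ 0) (hf1 : f ≠ 1)
    (hF : ∀ v, v ≠ 0 → tr 1 v ∈ Y → ∀ l, tr l v ∈ Y ↔ l ∈ F)
    {u v : Fin 2 → κ} (hu : tr 1 u ∈ Y) (hv : tr 1 v ∈ Y) (hd : dt u v ≠ 0) :
    ∃ x y : Fin 2 → κ, dt x y = 1 ∧ ∀ a ∈ F, ∀ b ∈ F, tr 1 (a • x + b • y) ∈ Y := by
  obtain ⟨w, hw0, hw, hδ0, ht⟩ := exists_torus hF hu hv hd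
  have hu0 : u ≠ 0 := fun h => hd (by simp [h, dt])
  set δ := dt u w with hδ
  set x := δ⁻¹ • u with hx
  set y := δ⁻¹ • act (tr 1 w) u with hy
  clear_value x y
  have hyx : y = x + w := by
    rw [hy, act_tr, smul_add, smul_smul, ← hδ, one_mul, inv_mul_cancel₀ hδ0, one_smul, hx]
  have hwxy : w = x + y := by
    rw [hyx, ← add_assoc, CharTwo.add_self_eq_zero, zero_add]
  have hdxw : dt x w = 1 := by rw [hx, dt_smul', ← hδ, inv_mul_cancel₀ hδ0]
  have hdxy : dt x y = 1 := by rw [hyx, dt_add, dt_self, zero_add, hdxw]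
  have htor : ∀ a ∈ F, a ≠ 0 → tr 1 (a • x + a⁻¹ • y) ∈ Y := by
    intro a ha ha0
    obtain ⟨m, hm, h1, h2⟩ := ht a ha ha0
    have : act m w = a • x + a⁻¹ • y := by
      rw [hwxy, act_add, hx, hy, act_smul, act_smul, h1, h2, smul_comm, smul_comm a⁻¹]
    rw [← this, ← tr_conj]
    exact Y.mul_mem (Y.mul_mem hm hw) (Y.inv_mem hm)
  have hs0 : f + f⁻¹ ≠ 0 := by
    intro h
    have : f ^ 2 = 1 ^ 2 := by
      have h2 : f * (f + f⁻¹) = 0 := by rw [h, mul_zero]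
      rw [mul_add, mul_inv_cancel₀ hf0] at h2
      grind
    exact hf1 (sq_inj this)
  have hsF : f + f⁻¹ ∈ F := F.add_mem hf (F.inv_mem hf)
  have hsx : tr 1 ((f + f⁻¹) • x) ∈ Y := by
    have h1 := htor f hf hf0
    have h2 : tr (f⁻¹ / (f + f⁻¹)) w ∈ Y := (hF w hw0 hw _).mpr (F.div_mem (F.inv_mem hf) hsF)
    have h3 : act (tr (f⁻¹ / (f + f⁻¹)) w) (f • x + f⁻¹ • y) = (f + f⁻¹) • x := by
      have : dt (f • x + f⁻¹ • y) w = f + f⁻¹ := by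
        rw [dt_add', dt_smul', dt_smul', hdxw, hwxy, dt_add, dt_self, dt_comm y x, hdxy]; ring
      rw [act_tr, this, div_mul_cancel₀ _ hs0, hwxy]
      have h4 : f • x + f⁻¹ • y + f⁻¹ • (x + y) = (f + f⁻¹) • x + (f⁻¹ + f⁻¹) • y := by module
      rw [h4, CharTwo.add_self_eq_zero, zero_smul, add_zero]
    rw [← h3, ← tr_conj]
    exact Y.mul_mem (Y.mul_mem h2 h1) (Y.inv_mem h2)
  have hδF : δ ∈ F := by
    rw [hx, smul_smul, good_smul hF hu0 hu] at hsx
    have := F.div_mem hsF hsx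
    rwa [← div_eq_mul_inv, div_div_cancel₀ hs0] at this
  have hxY : tr 1 x ∈ Y := by
    rw [hx, good_smul hF hu0 hu]; exact F.inv_mem hδF
  have hyY : tr 1 y ∈ Y := by
    rw [hy, ← act_smul, ← hx, ← tr_conj]
    exact Y.mul_mem (Y.mul_mem hw hxY) (Y.inv_mem hw)
  have hx0 : x ≠ 0 := by rintro h; rw [h] at hdxy; simp [dt] at hdxy
  have hy0 : y ≠ 0 := by rintro h; rw [h] at hdxy; simp [dt] at hdxy
  refine ⟨x, y, hdxy, fun a ha b hb => ?_⟩
  by_cases ha0 : a = 0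
  · rw [ha0, zero_smul, zero_add, good_smul hF hy0 hyY]; exact hb
  by_cases hb0 : b = 0
  · rw [hb0, zero_smul, add_zero, good_smul hF hx0 hxY]; exact ha
  obtain ⟨c, hc, ec⟩ := exists_sqrt_mem F (F.mul_mem ha hb)
  have hc0 : c ≠ 0 := by rintro rfl; simp [ha0, hb0] at ec
  have e : a • x + b • y = c • ((a / c) • x + (a / c)⁻¹ • y) := by
    have : b = c * (a / c)⁻¹ := by field_simp; rw [← ec]; ring
    rw [smul_add, smul_smul, smul_smul, ← this, mul_div_cancel₀ _ hc0]
  have hne : (a / c) • x + (a / c)⁻¹ • y ≠ 0 := by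
    intro h
    have := congrArg (fun z => dt z y) h
    simp only [dt_add', dt_smul', dt_self, hdxy] at this
    simp [ha0, hc0, dt] at this
  rw [e, good_smul hF hne (htor _ (F.div_mem ha hc) (div_ne_zero ha0 hc0))]
  exact hc

/-- If the vectors of an `F`-lattice `⟨x, y⟩` of determinant one are good, then every good vector
lies in the lattice. Otherwise the stabilizer of the lattice is strongly embedded in `Y`, and the
involution count gives an abelian group regular on the nonzero lattice vectors; it then contains
scalars other than `1`. -/
theorem dt_mem_of_lattice {f : κ} (hf : f ∈ F) (hf0 : f ≠ 0) (hf1 : f ≠ 1)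
    (hF : ∀ v, v ≠ 0 → tr 1 v ∈ Y → ∀ l, tr l v ∈ Y ↔ l ∈ F) {x y : Fin 2 → κ} (hd : dt x y = 1)
    (hgood : ∀ a ∈ F, ∀ b ∈ F, tr 1 (a • x + b • y) ∈ Y) {v : Fin 2 → κ} (hv : tr 1 v ∈ Y) :
    dt v x ∈ F ∧ dt v y ∈ F := by
  have hx0 : x ≠ 0 := by rintro h; rw [h] at hd; simp [dt] at hd
  let W : Set (Fin 2 → κ) := {v | dt v x ∈ F ∧ dt v y ∈ F}
  have hWdef : ∀ v, v ∈ W ↔ dt v x ∈ F ∧ dt v y ∈ F := fun _ => Iff.rfl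
  have hexp : ∀ v, v = dt v y • x + dt v x • y := by
    intro v
    have := dt_relation v x y
    rwa [hd, one_smul, dt_comm x v] at this
  have hxW : x ∈ W := ⟨by rw [dt_self]; exact F.zero_mem, by rw [hd]; exact F.one_mem⟩
  have hyW : y ∈ W := ⟨by rw [dt_comm, hd]; exact F.one_mem, by rw [dt_self]; exact F.zero_mem⟩
  have hWgood : ∀ v ∈ W, tr 1 v ∈ Y := by
    intro v hv
    rw [hexp v]
    exact hgood _ hv.2 _ hv.1
  have hWadd : ∀ v ∈ W, ∀ w ∈ W, v + w ∈ W := fun v hv w hw =>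
    ⟨by rw [dt_add']; exact F.add_mem hv.1 hw.1, by rw [dt_add']; exact F.add_mem hv.2 hw.2⟩
  have hWsmul : ∀ c ∈ F, ∀ w ∈ W, c • w ∈ W := fun c hc w hw =>
    ⟨by rw [dt_smul']; exact F.mul_mem hc hw.1, by rw [dt_smul']; exact F.mul_mem hc hw.2⟩
  have hWdt : ∀ v ∈ W, ∀ w ∈ W, dt v w ∈ F := by
    intro v hv w hw
    rw [hexp w, dt_add, dt_smul, dt_smul]
    exact F.add_mem (F.mul_mem hw.2 hv.1) (F.mul_mem hw.1 hv.2)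
  have htrW : ∀ l ∈ F, ∀ v ∈ W, ∀ z, act (tr l v) z ∈ W ↔ z ∈ W := by
    have : ∀ l ∈ F, ∀ v ∈ W, ∀ z, z ∈ W → act (tr l v) z ∈ W := by
      intro l hl v hv z hz
      rw [act_tr]
      exact hWadd _ hz _ (hWsmul _ (F.mul_mem hl (hWdt _ hz _ hv)) _ hv)
    intro l hl v hv z
    refine ⟨fun h => ?_, this l hl v hv z⟩
    have h2 := this l hl v hv _ h
    rw [← act_mul, tr_mul, CharTwo.add_self_eq_zero, act_tr] at h2
    simpa using h2
  let M : Subgroup (Matrix.SpecialLinearGroup (Fin 2) κ) :=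
    { carrier := {g | g ∈ Y ∧ ∀ z, act g z ∈ W ↔ z ∈ W}
      one_mem' := ⟨Y.one_mem, by simp [act_one]⟩
      mul_mem' := by
        rintro a b ⟨ha, ha'⟩ ⟨hb, hb'⟩
        exact ⟨Y.mul_mem ha hb, fun z => by rw [act_mul, ha', hb']⟩
      inv_mem' := by
        rintro a ⟨ha, ha'⟩
        exact ⟨Y.inv_mem ha, fun z => by rw [← ha', act_act_inv]⟩ }
  have hMdef : ∀ g, g ∈ M ↔ g ∈ Y ∧ ∀ z, act g z ∈ W ↔ z ∈ W := fun _ => Iff.rfl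
  have hMtr : ∀ w, tr 1 w ∈ Y → (tr 1 w ∈ M ↔ w ∈ W) := by
    intro w hw
    constructor
    · intro h
      by_cases hw0 : w = 0
      · rw [hw0, hWdef]; simp [dt]
      have hz : ∃ z ∈ W, dt z w ≠ 0 := by
        by_contra! h
        apply hw0
        rw [hexp w, dt_comm w, dt_comm w, h y hyW, h x hxW]; simp
      obtain ⟨z, hz, hzw⟩ := hz
      have h1 := (((hMdef _).mp h).2 z).mpr hz
      rw [act_tr, one_mul] at h1
      have h2 := hWadd _ hz _ h1
      have e : z + (z + dt z w • w) = dt z w • w := by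
        rw [← add_assoc]
        have : z + z = 0 := by ext i; exact CharTwo.add_self_eq_zero _
        rw [this, zero_add]
      rw [e] at h2
      have h3 := (good_smul hF hw0 hw).mp (hWgood _ h2)
      have := hWsmul _ (F.inv_mem h3) _ h2
      rwa [smul_smul, inv_mul_cancel₀ hzw, one_smul] at this
    · intro h
      exact ⟨hw, htrW 1 F.one_mem w h⟩
  have hMtrans : ∀ v ∈ W, v ≠ 0 → ∀ w ∈ W, w ≠ 0 → ∃ m ∈ M, act m v = w := by
    intro v hv hv0 w hw hw0
    exact exists_act_eq (Y := M) ((hMtr x (hWgood x hxW)).mpr hxW)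
      ((hMtr y (hWgood y hyW)).mpr hyW) (by rw [hd]; exact one_ne_zero) hv0 hw0
      ((hMtr v (hWgood v hv)).mpr hv) ((hMtr w (hWgood w hw)).mpr hw)
  have hfix : ∀ g ∈ Y, ∀ v ∈ W, v ≠ 0 → act g v = v → ∃ l ∈ F, g = tr l v := by
    intro g hg v hv hv0 h
    obtain ⟨l, rfl⟩ := eq_tr_of_fix hv0 h
    exact ⟨l, (hF v hv0 (hWgood v hv) l).mp hg, rfl⟩
  have hMmem : ∀ g ∈ Y, ∀ v ∈ W, v ≠ 0 → act g v ∈ W → g ∈ M := by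
    intro g hg v hv hv0 hgv
    have hgv0 : act g v ≠ 0 := by
      intro h
      have := act_inv_act g v
      rw [h, act_zero] at this
      exact hv0 this.symm
    obtain ⟨m, hm, e⟩ := hMtrans _ hgv hgv0 v hv hv0
    have hmg : m * g ∈ M := by
      obtain ⟨l, hl, e2⟩ := hfix (m * g) (Y.mul_mem hm.1 hg) v hv hv0 (by rw [act_mul, e])
      refine ⟨Y.mul_mem hm.1 hg, ?_⟩
      rw [e2]
      exact htrW l hl v hv
    have := M.mul_mem (M.inv_mem hm) hmg
    rwa [inv_mul_cancel_left] at this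
  suffices hYM : Y ≤ M from (hMtr v hv).mp (hYM hv)
  by_contra hYM
  have hinv : ∀ j : Y, IsInv j → ∃ w, w ≠ 0 ∧ ∃ hw : tr 1 w ∈ Y, j = ⟨tr 1 w, hw⟩ := by
    intro j hj
    have : IsInv (j : Matrix.SpecialLinearGroup (Fin 2) κ) :=
      ⟨fun h => hj.1 (Subtype.ext h), by rw [← Subgroup.coe_mul, hj.2]; rfl⟩
    obtain ⟨w, hw0, hw⟩ := exists_tr_of_isInv this
    exact ⟨w, hw0, hw ▸ j.2, Subtype.ext hw⟩
  have hisInv : ∀ w (hw : tr 1 w ∈ Y), w ≠ 0 → IsInv (⟨tr 1 w, hw⟩ : Y) := by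
    intro w hw hw0
    have := tr_isInv (l := (1 : κ)) one_ne_zero hw0
    exact ⟨fun h => this.1 (congrArg Subtype.val h), Subtype.ext this.2⟩
  have hxY := hWgood x hxW
  have hne : M.subgroupOf Y ≠ ⊤ := fun h => hYM (Subgroup.subgroupOf_eq_top.mp h)
  have hstrong : ∀ g j : Y, IsInv j → j ∈ M.subgroupOf Y → g * j * g⁻¹ ∈ M.subgroupOf Y →
      g ∈ M.subgroupOf Y := by
    intro g j hj hjM hgM
    obtain ⟨w, hw0, hw, rfl⟩ := hinv j hj
    rw [Subgroup.mem_subgroupOf] at hjM hgM ⊢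
    have e : ((g * ⟨tr 1 w, hw⟩ * g⁻¹ : Y) : Matrix.SpecialLinearGroup (Fin 2) κ) =
      tr 1 (act g w) := tr_conj _ _ _
    rw [e] at hgM
    rw [hMtr _ hgM.1] at hgM
    rw [hMtr _ hw] at hjM
    exact hMmem g g.2 w hjM hw0 hgM
  obtain ⟨i, hi, hiM, hcount⟩ := exists_inv_count (M.subgroupOf Y) hne
    (by
      intro j hj
      obtain ⟨w, hw0, hw, rfl⟩ := hinv j hj
      obtain ⟨g, hg, e⟩ := exists_act_eq hxY (hWgood y hyW) (by rw [hd]; exact one_ne_zero)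
        hw0 hx0 hw hxY
      refine ⟨⟨g, hg⟩, ?_⟩
      rw [Subgroup.mem_subgroupOf]
      have : ((⟨g, hg⟩ * ⟨tr 1 w, hw⟩ * ⟨g, hg⟩⁻¹ : Y) : Matrix.SpecialLinearGroup (Fin 2) κ) =
          tr 1 x := by
        show g * tr 1 w * g⁻¹ = _
        rw [tr_conj, e]
      rw [this, hMtr _ hxY]
      exact hxW)
    hstrong
    ⟨⟨tr 1 x, hxY⟩, Subgroup.mem_subgroupOf.mpr ((hMtr _ hxY).mpr hxW), hisInv _ _ hx0⟩
  have hii : i⁻¹ = i := inv_eq_of_mul_eq_one_left hi.2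
  -- elements of `M ∩ i M i` act freely on the nonzero lattice vectors
  have hfree : ∀ d : Y, (d : Matrix.SpecialLinearGroup (Fin 2) κ) ∈ M →
      ((i * d * i : Y) : Matrix.SpecialLinearGroup (Fin 2) κ) ∈ M → ∀ v ∈ W, v ≠ 0 →
      act d v = v → d = 1 := by
    intro d hd hid v hv hv0 hdv
    by_contra hd1
    obtain ⟨l, hl, e⟩ := hfix d d.2 v hv hv0 hdv
    have hl0 : l ≠ 0 := by
      rintro rfl
      apply hd1
      refine Subtype.ext ?_
      rw [e]
      refine act_ext fun z => ?_
      simp [act_tr, act_one]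
    have hdinv : IsInv d :=
      ⟨hd1, Subtype.ext (by rw [Subgroup.coe_mul, e]; exact (tr_isInv hl0 hv0).2)⟩
    refine hiM (hstrong i d hdinv hd ?_)
    rw [hii]
    exact hid
  have hmapW : ∀ d : Y, (d : Matrix.SpecialLinearGroup (Fin 2) κ) ∈ M → ∀ v ∈ W, v ≠ 0 →
      act d v ∈ W ∧ act d v ≠ 0 := by
    intro d hd v hv hv0
    refine ⟨(hd.2 v).mpr hv, fun h => hv0 ?_⟩
    rw [← act_inv_act (d : Matrix.SpecialLinearGroup (Fin 2) κ) v, h, act_zero]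
  let W0 := {v : Fin 2 → κ // v ∈ W ∧ v ≠ 0}
  let S := {m : Y // m ∈ M.subgroupOf Y ∧ i * m * i = m⁻¹}
  have hSi : ∀ m : S, ((i * m * i : Y) : Matrix.SpecialLinearGroup (Fin 2) κ) ∈ M := by
    intro m
    rw [m.2.2]
    exact M.inv_mem m.2.1
  have hfree2 : ∀ d e : Y, (d : Matrix.SpecialLinearGroup (Fin 2) κ) ∈ M →
      ((i * d * i : Y) : Matrix.SpecialLinearGroup (Fin 2) κ) ∈ M →
      (e : Matrix.SpecialLinearGroup (Fin 2) κ) ∈ M →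
      ((i * e * i : Y) : Matrix.SpecialLinearGroup (Fin 2) κ) ∈ M →
      act (d : Matrix.SpecialLinearGroup (Fin 2) κ) x =
        act (e : Matrix.SpecialLinearGroup (Fin 2) κ) x → d = e := by
    intro d e hd hd' he he' h
    have h1 : e⁻¹ * d = 1 := by
      refine hfree _ (M.mul_mem (M.inv_mem he) hd) ?_ x hxW hx0 ?_
      · have h2 : i * (e⁻¹ * d) * i = (i * e * i)⁻¹ * (i * d * i) := by
          have : i * (i * d * i) = d * i := by rw [mul_assoc, ← mul_assoc i i, hi.2, one_mul]
          rw [mul_inv_rev, mul_inv_rev, hii, mul_assoc, mul_assoc, mul_assoc, mul_assoc, this]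
        rw [h2]
        exact M.mul_mem (M.inv_mem he') hd'
      · rw [Subgroup.coe_mul, Subgroup.coe_inv]
        rw [act_mul, h, act_inv_act]
    rwa [inv_mul_eq_one, eq_comm] at h1
  let ψ : S → W0 := fun m => ⟨act (m : Y) x, hmapW m m.2.1 x hxW hx0⟩
  have hψ : Function.Injective ψ := by
    intro a b hab
    exact Subtype.ext (hfree2 a b a.2.1 (hSi a) b.2.1 (hSi b) (congrArg Subtype.val hab))
  have hcard : Nat.card W0 ≤ Nat.card S := by
    refine le_trans ?_ hcount
    refine Nat.card_le_card_of_injective (fun v : W0 => ⟨⟨tr 1 v.1, hWgood _ v.2.1⟩, ?_, ?_⟩) ?_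
    · exact (hMtr _ (hWgood _ v.2.1)).mpr v.2.1
    · exact hisInv _ _ v.2.2
    · intro a b hab
      exact Subtype.ext (tr_one_inj (congrArg Subtype.val (congrArg Subtype.val hab)))
  have hbij := hψ.bijective_of_nat_card_le hcard
  have hsurj : ∀ v ∈ W, v ≠ 0 → ∃ m : S, act (m : Y) x = v := by
    intro v hv hv0
    obtain ⟨m, hm⟩ := hbij.2 ⟨v, hv, hv0⟩
    exact ⟨m, congrArg Subtype.val hm⟩
  -- `M ∩ i M i` consists of elements inverted by `i`, so it is abelian
  have hcomm : ∀ a b : S, (a : Y) * b = b * a := by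
    intro a b
    have hab : ((a * b : Y) : Matrix.SpecialLinearGroup (Fin 2) κ) ∈ M := M.mul_mem a.2.1 b.2.1
    have e1 : i * (a * b) * i = (a : Y)⁻¹ * (b : Y)⁻¹ := by
      rw [← a.2.2, ← b.2.2]
      have : (i * a * i) * (i * b * i) = i * a * (i * i) * b * i := by group
      rw [this, hi.2]; group
    have hab' : ((i * (a * b) * i : Y) : Matrix.SpecialLinearGroup (Fin 2) κ) ∈ M := by
      rw [e1]; exact M.mul_mem (M.inv_mem a.2.1) (M.inv_mem b.2.1)
    obtain ⟨s, hs⟩ := hsurj _ (hmapW (a * b) hab x hxW hx0).1 (hmapW (a * b) hab x hxW hx0).2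
    have e2 := hfree2 s (a * b) s.2.1 (hSi s) hab hab' hs
    have e3 := s.2.2
    rw [e2, e1, mul_inv_rev] at e3
    have := congrArg (fun z => z⁻¹) e3
    simpa using this.symm
  obtain ⟨m, hm⟩ := hsurj (f • x) (hWsmul f hf x hxW) (smul_ne_zero hf0 hx0)
  have hy0 : y ≠ 0 := by rintro h; rw [h] at hd; simp [dt] at hd
  obtain ⟨s, hs⟩ := hsurj y hyW hy0
  have hmy : act (m : Y) y = f • y := by
    rw [← hs, ← act_mul, ← Subgroup.coe_mul, hcomm, Subgroup.coe_mul, act_mul, hm, act_smul]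
  have := dt_act ((m : Y) : Matrix.SpecialLinearGroup (Fin 2) κ) x y
  rw [hm, hmy, dt_smul, dt_smul', hd, mul_one] at this
  exact hf1 (sq_inj (by rw [sq, this, one_pow]))

/-- If the transvections of `Y ≤ SL(2,κ)` along good vectors are parametrized by a field `F` with
more than two elements, then the determinant of any two good vectors lies in `F`. -/
theorem dt_mem_of_good {f : κ} (hf : f ∈ F) (hf0 : f ≠ 0) (hf1 : f ≠ 1)
    (hF : ∀ v, v ≠ 0 → tr 1 v ∈ Y → ∀ l, tr l v ∈ Y ↔ l ∈ F) {u v : Fin 2 → κ}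
    (hu : tr 1 u ∈ Y) (hv : tr 1 v ∈ Y) : dt u v ∈ F := by
  by_cases hd : dt u v = 0
  · rw [hd]; exact F.zero_mem
  obtain ⟨x, y, hxy, hgood⟩ := exists_lattice hf hf0 hf1 hF hu hv hd
  have h1 := dt_mem_of_lattice hf hf0 hf1 hF hxy hgood hu
  have h2 := dt_mem_of_lattice hf hf0 hf1 hF hxy hgood hv
  have := dt_relation v x y
  rw [hxy, one_smul, dt_comm x v] at this
  rw [this, dt_add, dt_smul, dt_smul]
  exact F.add_mem (F.mul_mem h2.2 h1.1) (F.mul_mem h2.1 h1.2)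

end Rank2b

/-! ### The unitary group of a hyperbolic hermitian form in dimension three -/

/-- The properties of the field with `q²` elements, `q = 2^(2^n)`, on which the argument rests. The
property `chain` holds because the subfields of `F_{q²}` form a chain with `F_q` as its maximal
proper member: an element that is quadratic over a proper subfield of `F_q` lies in `F_q`. -/
class UnitaryField (k : Type*) [Field k] [StarRing k] : Prop where
  ns : ∃ x : k, star x ≠ x
  om : ∃ w : k, w ^ 2 + w + 1 = 0 ∧ star w = w
  chain : ∀ F : Subfield k, (∀ x ∈ F, star x = x) → (∃ x : k, star x = x ∧ x ∉ F) →
    ∀ x : k, x + star x ∈ F → x * star x ∈ F → star x = x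
  nine : ∀ x : k, x ^ 9 = 1 → x ^ 3 = 1

section Unitary

variable {k : Type*} [Field k] [StarRing k]

/-- The hermitian form `v₀ w̄₂ + v₁ w̄₁ + v₂ w̄₀`. -/
def B (v w : Fin 3 → k) : k := v 0 * star (w 2) + v 1 * star (w 1) + v 2 * star (w 0)

theorem B_add (u v w : Fin 3 → k) : B u (v + w) = B u v + B u w := by
  simp only [B, Pi.add_apply, star_add]; ring

theorem B_add' (u v w : Fin 3 → k) : B (u + v) w = B u w + B v w := by
  simp only [B, Pi.add_apply]; ring

theorem B_smul (c : k) (v w : Fin 3 → k) : B v (c • w) = star c * B v w := by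
  simp only [B, Pi.smul_apply, smul_eq_mul, star_mul']; ring

theorem B_smul' (c : k) (v w : Fin 3 → k) : B (c • v) w = c * B v w := by
  simp only [B, Pi.smul_apply, smul_eq_mul]; ring

theorem star_B (v w : Fin 3 → k) : star (B v w) = B w v := by
  simp only [B, star_add, star_mul', star_star]; ring

theorem B_zero (v : Fin 3 → k) : B v 0 = 0 := by simp [B]

theorem B_zero' (v : Fin 3 → k) : B 0 v = 0 := by simp [B]

theorem B_swap_zero {v w : Fin 3 → k} (h : B v w = 0) : B w v = 0 := by
  rw [← star_B, h, star_zero]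

theorem B_swap_one {v w : Fin 3 → k} (h : B v w = 1) : B w v = 1 := by
  rw [← star_B, h, star_one]

/-- Every nonzero vector pairs to `1` with some vector. -/
theorem exists_B_one {v : Fin 3 → k} (hv : v ≠ 0) : ∃ w, B w v = 1 := by
  by_contra! h
  have key : ∀ w, B w v = 0 := by
    intro w
    by_contra h0
    apply h ((B w v)⁻¹ • w)
    rw [B_smul', inv_mul_cancel₀ h0]
  apply hv
  have h0 := key ![0, 0, 1]
  have h1 := key ![0, 1, 0]
  have h2 := key ![1, 0, 0]
  simp [B] at h0 h1 h2
  ext i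
  fin_cases i <;> simp [h0, h1, h2]

theorem norm_eq_zero {x : k} (h : x * star x = 0) : x = 0 := by
  rcases mul_eq_zero.mp h with h | h
  · exact h
  · exact star_eq_zero.mp h

/-- The elements of `SL(3,k)` preserving the form `B`. -/
def U (k : Type*) [Field k] [StarRing k] : Subgroup (Matrix.SpecialLinearGroup (Fin 3) k) where
  carrier := {g | ∀ v w, B ((g : Matrix (Fin 3) (Fin 3) k).mulVec v)
    ((g : Matrix (Fin 3) (Fin 3) k).mulVec w) = B v w}
  one_mem' := by intro v w; simp
  mul_mem' := by
    intro a b ha hb v w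
    rw [Matrix.SpecialLinearGroup.coe_mul, ← Matrix.mulVec_mulVec, ← Matrix.mulVec_mulVec, ha, hb]
  inv_mem' := by
    intro a ha v w
    have h : ∀ v, (a : Matrix (Fin 3) (Fin 3) k).mulVec
        (((a⁻¹ : Matrix.SpecialLinearGroup (Fin 3) k) : Matrix (Fin 3) (Fin 3) k).mulVec v) = v := by
      intro v
      rw [Matrix.mulVec_mulVec, ← Matrix.SpecialLinearGroup.coe_mul, mul_inv_cancel]
      simp
    rw [← ha, h, h]

/-- The matrix of an element of `U k`. -/
def mat (g : U k) : Matrix (Fin 3) (Fin 3) k := (g : Matrix.SpecialLinearGroup (Fin 3) k)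

/-- The action of `U k` on column vectors. -/
def ap (g : U k) (v : Fin 3 → k) : Fin 3 → k := (mat g).mulVec v

theorem mat_mul (g h : U k) : mat (g * h) = mat g * mat h := rfl

theorem mat_one : mat (1 : U k) = 1 := rfl

theorem mat_inv_mul (g : U k) : mat g⁻¹ * mat g = 1 := by
  rw [← mat_mul, inv_mul_cancel, mat_one]

theorem mat_mul_inv (g : U k) : mat g * mat g⁻¹ = 1 := by
  rw [← mat_mul, mul_inv_cancel, mat_one]

theorem mat_inj {g h : U k} (e : mat g = mat h) : g = h := Subtype.ext (Subtype.ext e)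

theorem det_mat (g : U k) : (mat g).det = 1 := g.1.2

theorem ap_mul (g h : U k) (v : Fin 3 → k) : ap (g * h) v = ap g (ap h v) := by
  unfold ap; rw [mat_mul, Matrix.mulVec_mulVec]

theorem ap_one (v : Fin 3 → k) : ap 1 v = v := by unfold ap; rw [mat_one, Matrix.one_mulVec]

theorem ap_inv_ap (g : U k) (v : Fin 3 → k) : ap g⁻¹ (ap g v) = v := by
  rw [← ap_mul, inv_mul_cancel, ap_one]

theorem ap_ap_inv (g : U k) (v : Fin 3 → k) : ap g (ap g⁻¹ v) = v := by
  rw [← ap_mul, mul_inv_cancel, ap_one]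

theorem ap_add (g : U k) (v w : Fin 3 → k) : ap g (v + w) = ap g v + ap g w :=
  Matrix.mulVec_add _ _ _

theorem ap_smul (g : U k) (c : k) (v : Fin 3 → k) : ap g (c • v) = c • ap g v :=
  Matrix.mulVec_smul _ _ _

theorem ap_zero (g : U k) : ap g 0 = 0 := Matrix.mulVec_zero _

theorem ap_ext {g h : U k} (H : ∀ v, ap g v = ap h v) : g = h :=
  mat_inj (Matrix.toLin'.injective (LinearMap.ext fun v => by simpa [ap] using H v))

theorem ap_ne_zero (g : U k) {v : Fin 3 → k} (hv : v ≠ 0) : ap g v ≠ 0 := fun h =>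
  hv (by rw [← ap_inv_ap g v, h, ap_zero])

theorem B_ap (g : U k) (v w : Fin 3 → k) : B (ap g v) (ap g w) = B v w := g.2 v w

theorem B_ap_left (g : U k) (v w : Fin 3 → k) : B (ap g v) w = B v (ap g⁻¹ w) := by
  conv_lhs => rw [← ap_ap_inv g w, B_ap]

/-- Expansion of a vector in the standard basis. -/
theorem eq_basis (v : Fin 3 → k) :
    v = v 0 • ![1, 0, 0] + v 1 • ![0, 1, 0] + v 2 • ![0, 0, 1] := by
  ext i; fin_cases i <;> simp

theorem ap_basis (g : U k) (v : Fin 3 → k) :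
    ap g v = v 0 • ap g ![1, 0, 0] + v 1 • ap g ![0, 1, 0] + v 2 • ap g ![0, 0, 1] := by
  conv_lhs => rw [eq_basis v, ap_add, ap_add, ap_smul, ap_smul, ap_smul]

/-- Two elements agreeing on the standard basis are equal. -/
theorem ap_ext_basis {g h : U k} (h0 : ap g ![1, 0, 0] = ap h ![1, 0, 0])
    (h1 : ap g ![0, 1, 0] = ap h ![0, 1, 0]) (h2 : ap g ![0, 0, 1] = ap h ![0, 0, 1]) : g = h :=
  ap_ext fun v => by rw [ap_basis g, ap_basis h, h0, h1, h2]

variable [CharP k 2]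

theorem add_self_v (v : Fin 3 → k) : v + v = 0 := by
  ext i; exact CharTwo.add_self_eq_zero _

/-- A triple with the Gram matrix of the standard basis and determinant one is the image of the
standard basis under an element of `U k`. -/
theorem exists_U (a b c : Fin 3 → k) (haa : B a a = 0) (hab : B a b = 0) (hac : B a c = 1)
    (hbb : B b b = 1) (hbc : B b c = 0) (hcc : B c c = 0)
    (hdet : a 0 * (b 1 * c 2 + b 2 * c 1) + a 1 * (b 0 * c 2 + b 2 * c 0) +
      a 2 * (b 0 * c 1 + b 1 * c 0) = 1) :
    ∃ g : U k, ∀ v, ap g v = v 0 • a + v 1 • b + v 2 • c := by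
  let A : Matrix (Fin 3) (Fin 3) k := !![a 0, b 0, c 0; a 1, b 1, c 1; a 2, b 2, c 2]
  have hA : ∀ v, A.mulVec v = v 0 • a + v 1 • b + v 2 • c := by
    intro v
    ext i
    fin_cases i <;> simp [A, Matrix.mulVec, dotProduct, Fin.sum_univ_three] <;> ring
  have hAd : A.det = 1 := by
    rw [Matrix.det_fin_three]
    simp [A]
    grind
  refine ⟨⟨⟨A, hAd⟩, ?_⟩, hA⟩
  intro v w
  show B (A.mulVec v) (A.mulVec w) = B v w
  rw [hA, hA]
  simp only [B_add, B_add', B_smul, B_smul', haa, hab, hac, hbb, hbc, hcc, B_swap_zero hab,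
    B_swap_one hac, B_swap_zero hbc]
  simp only [B]
  ring

/-- `U k` is transitive on hyperbolic pairs. -/
theorem exists_hyp {u v : Fin 3 → k} (hu : B u u = 0) (hv : B v v = 0) (huv : B u v = 1) :
    ∃ g : U k, ap g ![1, 0, 0] = u ∧ ap g ![0, 0, 1] = v := by
  -- `x` represents the linear form `w ↦ det (u, w, v)`
  let x : Fin 3 → k := ![star (u 0 * v 1 + u 1 * v 0), star (u 0 * v 2 + u 2 * v 0),
    star (u 1 * v 2 + u 2 * v 1)]
  have hux : B u x = 0 := by simp [B, x]; grind
  have hvx : B v x = 0 := by simp [B, x]; grind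
  have hvu := B_swap_one huv
  have hxx : B x x = 1 := by
    have : B x x = B u v * B v u + B u u * B v v := by
      simp [B, x, star_add, star_mul']; grind
    rw [this, hu, huv, hvu]; ring
  obtain ⟨g, hg⟩ := exists_U u x v hu hux huv hxx (B_swap_zero hvx) hv (by
    rw [← hxx]
    simp [B, x]; ring)
  exact ⟨g, by rw [hg]; simp, by rw [hg]; simp⟩

/-- Orthogonal isotropic vectors are proportional. -/
theorem exists_smul_of_isotropic {u v : Fin 3 → k} (hu : B u u = 0) (hv : B v v = 0)
    (huv : B u v = 0) (hu0 : u ≠ 0) : ∃ c : k, v = c • u := by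
  have aux : ∀ z : Fin 3 → k, B z z = 0 → z 2 = 0 → z 1 = 0 := by
    intro z hz h2
    simp [B, h2] at hz
    exact hz
  by_cases h2 : u 2 = 0
  · have h1 := aux u hu h2
    have h0 : u 0 ≠ 0 := fun h0 => hu0 (by ext i; fin_cases i <;> simp [h0, h1, h2])
    have hv2 : v 2 = 0 := by simpa [B, h1, h2, h0] using huv
    have hv1 := aux v hv hv2
    refine ⟨v 0 / u 0, ?_⟩
    ext i; fin_cases i <;> simp [h0, h1, h2, hv1, hv2]
  · set z := v + (v 2 / u 2) • u with hz
    have hz2 : z 2 = 0 := by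
      simp [hz, h2]; exact CharTwo.add_self_eq_zero _
    have hzz : B z z = 0 := by
      simp only [hz, B_add, B_add', B_smul, B_smul', hu, hv, huv, B_swap_zero huv]; ring
    have hz1 := aux z hzz hz2
    have hzu : B u z = 0 := by
      rw [hz, B_add, B_smul, huv, hu]; ring
    have hz0 : z 0 = 0 := by simpa [B, hz1, hz2, h2] using hzu
    have hz' : z = 0 := by ext i; fin_cases i <;> simp [hz0, hz1, hz2]
    refine ⟨v 2 / u 2, ?_⟩
    have : v = z + (v 2 / u 2) • u := by
      rw [hz, add_assoc, add_self_v, add_zero]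
    rw [hz', zero_add] at this
    exact this

/-- The unitary transvection `x ↦ x + l B(x,u) u`; it is only meaningful for `l` fixed by the
involution and `u` isotropic, and is the identity by convention otherwise. -/
noncomputable def T (l : k) (u : Fin 3 → k) : U k :=
  if h : star l = l ∧ B u u = 0 then
    ⟨⟨!![1 + l * u 0 * star (u 2), l * u 0 * star (u 1), l * u 0 * star (u 0);
        l * u 1 * star (u 2), 1 + l * u 1 * star (u 1), l * u 1 * star (u 0);
        l * u 2 * star (u 2), l * u 2 * star (u 1), 1 + l * u 2 * star (u 0)], by
      have h2 := h.2
      rw [B] at h2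
      rw [Matrix.det_fin_three]
      simp
      linear_combination l * h2⟩, by
      intro v w
      have key : ∀ v, Matrix.mulVec !![1 + l * u 0 * star (u 2), l * u 0 * star (u 1),
          l * u 0 * star (u 0); l * u 1 * star (u 2), 1 + l * u 1 * star (u 1),
          l * u 1 * star (u 0); l * u 2 * star (u 2), l * u 2 * star (u 1),
          1 + l * u 2 * star (u 0)] v = v + (l * B v u) • u := by
        intro v
        ext i
        fin_cases i <;> simp [Matrix.mulVec, dotProduct, Fin.sum_univ_three, B] <;> ring
      show B (Matrix.mulVec _ v) (Matrix.mulVec _ w) = _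
      rw [key, key]
      simp only [B_add, B_add', B_smul, B_smul', h.2, star_mul', h.1, star_B]
      have : l * B v u * B u w + l * B u w * B v u = 0 := by grind
      linear_combination this⟩
  else 1

theorem ap_T {l : k} (hl : star l = l) {u : Fin 3 → k} (hu : B u u = 0) (v : Fin 3 → k) :
    ap (T l u) v = v + (l * B v u) • u := by
  unfold T
  rw [dif_pos ⟨hl, hu⟩]
  ext i
  fin_cases i <;> simp [ap, mat, Matrix.mulVec, dotProduct, Fin.sum_univ_three, B] <;> ring

theorem T_mul {l m : k} (hl : star l = l) (hm : star m = m) {u : Fin 3 → k} (hu : B u u = 0) :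
    T l u * T m u = T (l + m) u := by
  refine ap_ext fun v => ?_
  rw [ap_mul, ap_T hl hu, ap_T hm hu, ap_T (by rw [star_add, hl, hm]) hu, B_add', B_smul', hu]
  module

theorem isotropic_smul {u : Fin 3 → k} (hu : B u u = 0) (c : k) : B (c • u) (c • u) = 0 := by
  rw [B_smul, B_smul', hu]; ring

theorem star_norm (c : k) : star (c * star c) = c * star c := by
  rw [star_mul', star_star, mul_comm]

theorem T_smul {l : k} (hl : star l = l) {u : Fin 3 → k} (hu : B u u = 0) (c : k) :
    T l (c • u) = T (l * (c * star c)) u := by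
  refine ap_ext fun v => ?_
  rw [ap_T hl (isotropic_smul hu c), ap_T (by rw [star_mul', star_norm, hl]) hu, B_smul]
  module

theorem isotropic_ap {u : Fin 3 → k} (hu : B u u = 0) (g : U k) : B (ap g u) (ap g u) = 0 := by
  rw [B_ap, hu]

theorem T_conj (g : U k) {l : k} (hl : star l = l) {u : Fin 3 → k} (hu : B u u = 0) :
    g * T l u * g⁻¹ = T l (ap g u) := by
  refine ap_ext fun v => ?_
  rw [ap_mul, ap_mul, ap_T hl hu, ap_T hl (isotropic_ap hu g), ap_add, ap_ap_inv, ap_smul]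
  rw [B_ap_left, inv_inv]

theorem T_zero {u : Fin 3 → k} (hu : B u u = 0) : T 0 u = 1 :=
  ap_ext fun v => by rw [ap_T (star_zero k) hu, ap_one]; simp

theorem T_zero' {l : k} (hl : star l = l) : T l (0 : Fin 3 → k) = 1 :=
  ap_ext fun v => by rw [ap_T hl (B_zero 0), ap_one]; simp

theorem T_inv {l : k} (hl : star l = l) {u : Fin 3 → k} (hu : B u u = 0) :
    (T l u)⁻¹ = T l u := by
  rw [inv_eq_iff_mul_eq_one, T_mul hl hl hu, CharTwo.add_self_eq_zero, T_zero hu]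

theorem T_inj {l m : k} (hl : star l = l) (hm : star m = m) {u : Fin 3 → k} (hu : B u u = 0)
    (hu0 : u ≠ 0) (h : T l u = T m u) : l = m := by
  obtain ⟨w, hw⟩ := exists_B_one hu0
  have := congrArg (fun g => ap g w) h
  simp only [ap_T hl hu, ap_T hm hu, hw, mul_one] at this
  exact smul_left_injective k hu0 (add_left_cancel this)

theorem T_isInv {l : k} (hl : star l = l) (hl0 : l ≠ 0) {u : Fin 3 → k} (hu : B u u = 0)
    (hu0 : u ≠ 0) : IsInv (T l u) := by
  refine ⟨fun h => hl0 ?_, ?_⟩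
  · rw [← T_zero hu] at h
    exact T_inj hl (star_zero k) hu hu0 h
  · rw [T_mul hl hl hu, CharTwo.add_self_eq_zero, T_zero hu]

/-- Transvections with the same centre are equal only along proportional vectors. -/
theorem exists_smul_of_T_eq {l m : k} (hl : star l = l) (hm : star m = m) (hl0 : l ≠ 0)
    {u v : Fin 3 → k} (hu : B u u = 0) (hv : B v v = 0) (hu0 : u ≠ 0) (h : T l u = T m v) :
    ∃ c : k, u = c • v := by
  obtain ⟨w, hw⟩ := exists_B_one hu0
  have := congrArg (fun g => ap g w) h
  simp only [ap_T hl hu, ap_T hm hv, hw, mul_one] at this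
  have := add_left_cancel this
  refine ⟨l⁻¹ * (m * B w v), ?_⟩
  rw [mul_smul, ← this, smul_smul, inv_mul_cancel₀ hl0, one_smul]

theorem T_commute {u v : Fin 3 → k} (hu : B u u = 0) (hv : B v v = 0) (hu0 : u ≠ 0) :
    Commute (T 1 u) (T 1 v) ↔ B u v = 0 := by
  have h1 : star (1 : k) = 1 := star_one k
  have : Commute (T 1 u) (T 1 v) ↔ T 1 v * T 1 u * (T 1 v)⁻¹ = T 1 u := by
    rw [mul_inv_eq_iff_eq_mul]
    exact ⟨fun h => h.eq.symm, fun h => h.symm⟩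
  rw [this, T_conj _ h1 hu]
  constructor
  · intro h
    obtain ⟨c, hc⟩ := exists_smul_of_T_eq h1 h1 one_ne_zero (isotropic_ap hu _) hu
      (ap_ne_zero _ hu0) h
    rw [ap_T h1 hv, one_mul] at hc
    by_contra h0
    have h2 := congrArg (fun z => B z v) hc
    simp only [B_add', B_smul', hv, mul_zero, add_zero] at h2
    have hc1 : c = 1 := by
      have : (c - 1) * B u v = 0 := by linear_combination -h2
      rcases mul_eq_zero.mp this with h | h
      · linear_combination h
      · exact absurd h h0
    rw [hc1, one_smul, add_eq_left, smul_eq_zero] at hc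
    rcases hc with h | h
    · exact h0 h
    · exact h0 (by rw [h, B_zero])
  · intro h
    rw [ap_T h1 hv, h]; simp

variable [Finite k]

theorem exists_sqrt (a : k) : ∃ b : k, a = b ^ 2 := by
  have hc : ringChar k = 2 := ringChar.eq k 2 ▸ rfl
  obtain ⟨b, hb⟩ := FiniteField.isSquare_of_char_two hc a
  exact ⟨b, by rw [sq]; exact hb⟩

/-- Every element fixed by the involution is a norm, even of a fixed element. -/
theorem exists_norm {l : k} (hl : star l = l) : ∃ c : k, star c = c ∧ l = c * star c := by
  obtain ⟨c, rfl⟩ := exists_sqrt l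
  have hc : star c = c := sq_inj (by rw [← star_pow]; exact hl)
  exact ⟨c, hc, by rw [hc, sq]⟩

/-- The involutions of `U k` are transvections. -/
theorem exists_T_of_isInv {g : U k} (hg : IsInv g) : ∃ u, u ≠ 0 ∧ B u u = 0 ∧ g = T 1 u := by
  have hgg : ∀ v, ap g (ap g v) = v := fun v => by rw [← ap_mul, hg.2, ap_one]
  have hgi : g⁻¹ = g := inv_eq_of_mul_eq_one_left hg.2
  obtain ⟨v0, hv0⟩ : ∃ v, ap g v ≠ v := by
    by_contra! h
    exact hg.1 (ap_ext fun v => by rw [h, ap_one])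
  -- the image of `g - 1` is totally isotropic
  have hiso : ∀ v w, B (ap g v + v) (ap g w + w) = 0 := by
    intro v w
    have h1 : B v (ap g w) = B (ap g v) w := by rw [B_ap_left, hgi]
    rw [B_add, B_add', B_add', B_ap, h1]
    grind
  set u := ap g v0 + v0 with hu
  have hu0 : u ≠ 0 := by
    intro h
    apply hv0
    have : ap g v0 = u + v0 := by rw [hu, add_assoc, add_self_v, add_zero]
    rw [this, h, zero_add]
  have huu : B u u = 0 := hiso v0 v0
  have hφ : ∀ v, ∃ c : k, ap g v + v = c • u := fun v =>
    exists_smul_of_isotropic huu (hiso v v) (hiso v0 v) hu0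
  choose φ hφ using hφ
  have hφ' : ∀ v, ap g v = v + φ v • u := by
    intro v
    rw [← hφ, add_comm, add_assoc, add_self_v, add_zero]
  have hrel : ∀ v w, φ v * B u w = star (φ w) * B v u := by
    intro v w
    have h1 := B_ap g v w
    rw [hφ', hφ' w] at h1
    simp only [B_add, B_add', B_smul, B_smul', huu] at h1
    grind
  obtain ⟨w, hw⟩ := exists_B_one hu0
  have hw' := B_swap_one hw
  have h1 : ∀ v, φ v = star (φ w) * B v u := by
    intro v
    rw [← hrel v w, hw', mul_one]
  have h2 : star (φ w) = φ w := by
    conv_rhs => rw [h1 w, hw, mul_one]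
  have hgT : g = T (φ w) u := by
    refine ap_ext fun v => ?_
    rw [ap_T h2 huu, hφ', h1 v, h2]
  obtain ⟨c, hc, hcl⟩ := exists_norm h2
  refine ⟨c • u, ?_, isotropic_smul huu c, ?_⟩
  · refine smul_ne_zero ?_ hu0
    rintro rfl
    apply hg.1
    rw [hgT, hcl, zero_mul, T_zero huu]
  · rw [T_smul (star_one k) huu, one_mul, ← hcl]; exact hgT

theorem invTrans_U : InvTrans (U k) := by
  intro a b c ha hb hc hab hbc
  obtain ⟨u, hu0, hu, rfl⟩ := exists_T_of_isInv ha
  obtain ⟨v, hv0, hv, rfl⟩ := exists_T_of_isInv hb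
  obtain ⟨w, hw0, hw, rfl⟩ := exists_T_of_isInv hc
  rw [T_commute hu hv hu0] at hab
  rw [T_commute hv hw hv0] at hbc
  rw [T_commute hu hw hu0]
  obtain ⟨d, rfl⟩ := exists_smul_of_isotropic hv hu (B_swap_zero hab) hv0
  rw [B_smul', hbc, mul_zero]

variable [UnitaryField k]

omit [CharP k 2] [Finite k] in
theorem exists_trace_one [CharP k 2] : ∃ a : k, a + star a = 1 := by
  obtain ⟨s, hs⟩ := UnitaryField.ns (k := k)
  have h0 : s + star s ≠ 0 := by
    intro h
    apply hs
    grind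
  refine ⟨s / (s + star s), ?_⟩
  have : star (s + star s) = s + star s := by rw [star_add, star_star, add_comm]
  rw [star_div₀, this, ← add_div, div_self h0]

omit [Finite k] in
/-- Every isotropic vector belongs to a hyperbolic pair. -/
theorem exists_hyp_partner {u : Fin 3 → k} (hu : B u u = 0) (hu0 : u ≠ 0) :
    ∃ v, B v v = 0 ∧ B u v = 1 := by
  obtain ⟨w, hw⟩ := exists_B_one hu0
  have hw' := B_swap_one hw
  obtain ⟨a, ha⟩ := exists_trace_one (k := k)
  refine ⟨w + (a * B w w) • u, ?_, ?_⟩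
  · simp only [B_add, B_add', B_smul, B_smul', hu, hw, hw', star_mul', star_B]
    have : (a + star a) * B w w + B w w = 0 := by rw [ha]; grind
    linear_combination this
  · rw [B_add, B_smul, hu, hw']; ring

omit [Finite k] in
theorem exists_ap_e0 {u : Fin 3 → k} (hu : B u u = 0) (hu0 : u ≠ 0) :
    ∃ g : U k, ap g ![1, 0, 0] = u := by
  obtain ⟨v, hv, huv⟩ := exists_hyp_partner hu hu0
  obtain ⟨g, hg, _⟩ := exists_hyp hu hv huv
  exact ⟨g, hg⟩

/-- A primitive cube root of unity, fixed by the involution. -/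
noncomputable def om (k : Type*) [Field k] [StarRing k] [UnitaryField k] : k :=
  (UnitaryField.om (k := k)).choose

omit [CharP k 2] [Finite k] in
theorem om_rel : om k ^ 2 + om k + 1 = 0 := (UnitaryField.om (k := k)).choose_spec.1

omit [CharP k 2] [Finite k] in
theorem star_om : star (om k) = om k := (UnitaryField.om (k := k)).choose_spec.2

omit [Finite k] in
/-- Cube roots of unity are powers of `om k`. -/
theorem cube_root {x : k} (h : x ^ 3 = 1) : x = 1 ∨ x = om k ∨ x = om k ^ 2 := by
  have h1 := om_rel (k := k)
  have : (x - 1) * ((x - om k) * (x - om k ^ 2)) = 0 := by grind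
  rcases mul_eq_zero.mp this with h | h
  · exact Or.inl (sub_eq_zero.mp h)
  rcases mul_eq_zero.mp h with h | h
  · exact Or.inr (Or.inl (sub_eq_zero.mp h))
  · exact Or.inr (Or.inr (sub_eq_zero.mp h))

omit [Finite k] in
theorem norm_one_cube {x : k} (h : x ^ 3 = 1) (hn : x * star x = 1) : x = 1 := by
  have hs : star x = x := by
    rcases cube_root h with h | h | h
    · rw [h, star_one]
    · rw [h, star_om]
    · rw [h, star_pow, star_om]
  rw [hs] at hn
  calc x = x ^ 3 * x⁻¹ ^ 2 := by
        have : x ≠ 0 := by rintro rfl; simp at hn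
        field_simp
    _ = 1 := by
        have h2 : x ^ 2 = 1 := by rw [sq]; exact hn
        rw [h, one_mul, inv_pow, h2, inv_one]

end Unitary

/-! ### Irreducible subgroups of even order -/

section Even

variable {k : Type*} [Field k] [StarRing k]

/-- `L` acts irreducibly on the natural module. -/
def Irred (L : Subgroup (U k)) : Prop :=
  ∀ W : Submodule k (Fin 3 → k), (∀ g ∈ L, ∀ w ∈ W, ap g w ∈ W) → W = ⊥ ∨ W = ⊤

variable [CharP k 2]

/-- A vector is good for `L` if it is nonzero isotropic and its transvection lies in `L`. -/
def Good (L : Subgroup (U k)) (u : Fin 3 → k) : Prop := u ≠ 0 ∧ B u u = 0 ∧ T 1 u ∈ L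

variable {L : Subgroup (U k)}

theorem Good.map {u : Fin 3 → k} (hu : Good L u) {g : U k} (hg : g ∈ L) : Good L (ap g u) := by
  refine ⟨ap_ne_zero g hu.1, isotropic_ap hu.2.1 g, ?_⟩
  rw [← T_conj g (star_one k) hu.2.1]
  exact L.mul_mem (L.mul_mem hg hu.2.2) (L.inv_mem hg)

theorem T_eq_norm {u v : Fin 3 → k} (hu : B u u = 0) (hv : B v v = 0) (hu0 : u ≠ 0)
    (h : T 1 u = T 1 v) : ∃ c : k, c * star c = 1 ∧ u = c • v := by
  have h1 := star_one k
  obtain ⟨c, rfl⟩ := exists_smul_of_T_eq h1 h1 one_ne_zero hu hv hu0 h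
  refine ⟨c, ?_, rfl⟩
  rw [T_smul h1 hv, one_mul] at h
  exact T_inj (star_norm c) h1 hv (fun h => hu0 (by rw [h, smul_zero])) h

/-- An element fixing `e₀` is upper unitriangular. -/
theorem stab_e0 {y : U k} (hy : ap y ![1, 0, 0] = ![1, 0, 0]) :
    ap y ![0, 1, 0] = ![star (ap y ![0, 0, 1] 1), 1, 0] ∧ ap y ![0, 0, 1] 2 = 1 ∧
    ap y ![0, 0, 1] 0 + star (ap y ![0, 0, 1] 0) =
      ap y ![0, 0, 1] 1 * star (ap y ![0, 0, 1] 1) := by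
  have h02 := B_ap y ![0, 0, 1] ![1, 0, 0]
  have h01 := B_ap y ![0, 1, 0] ![1, 0, 0]
  have h12 := B_ap y ![0, 1, 0] ![0, 0, 1]
  have h22 := B_ap y ![0, 0, 1] ![0, 0, 1]
  have hd := det_mat y
  have e0 : ∀ i, mat y i 0 = ap y ![1, 0, 0] i := fun i => by
    simp [ap, Matrix.mulVec, dotProduct, Fin.sum_univ_three]
  have e1 : ∀ i, mat y i 1 = ap y ![0, 1, 0] i := fun i => by
    simp [ap, Matrix.mulVec, dotProduct, Fin.sum_univ_three]
  have e2 : ∀ i, mat y i 2 = ap y ![0, 0, 1] i := fun i => by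
    simp [ap, Matrix.mulVec, dotProduct, Fin.sum_univ_three]
  rw [Matrix.det_fin_three] at hd
  simp only [e0, e1, e2] at hd
  rw [hy] at h02 h01 hd
  generalize ap y ![0, 1, 0] = b at *
  generalize ap y ![0, 0, 1] = c at *
  simp [B] at h02 h01 h12 h22 hd
  rw [h02, h01] at hd
  rw [h01, h02] at h12
  rw [h02] at h22
  simp at h12 h22 hd
  rw [hd] at h12
  refine ⟨?_, h02, by grind⟩
  have hb0 : b 0 = star (c 1) := by grind
  ext i
  fin_cases i <;> simp [hb0, hd, h01]

theorem stab_e0_ap {y : U k} (hy : ap y ![1, 0, 0] = ![1, 0, 0]) (v : Fin 3 → k) :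
    ap y v = ![v 0 + star (ap y ![0, 0, 1] 1) * v 1 + ap y ![0, 0, 1] 0 * v 2,
      v 1 + ap y ![0, 0, 1] 1 * v 2, v 2] := by
  obtain ⟨h1, h2, -⟩ := stab_e0 hy
  rw [ap_basis, hy, h1]
  ext i
  fin_cases i <;> simp [h2] <;> ring

theorem B_e0 : B (![1, 0, 0] : Fin 3 → k) ![1, 0, 0] = 0 := by simp [B]

theorem B_e2 : B (![0, 0, 1] : Fin 3 → k) ![0, 0, 1] = 0 := by simp [B]

theorem e0_ne : (![1, 0, 0] : Fin 3 → k) ≠ 0 := fun h => one_ne_zero (congrFun h 0)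

theorem e2_ne : (![0, 0, 1] : Fin 3 → k) ≠ 0 := fun h => one_ne_zero (congrFun h 2)

/-- An upper unitriangular element whose middle coordinate vanishes is a transvection. -/
theorem stab_e0_T {y : U k} (hy : ap y ![1, 0, 0] = ![1, 0, 0]) (hx : ap y ![0, 0, 1] 1 = 0) :
    star (ap y ![0, 0, 1] 0) = ap y ![0, 0, 1] 0 ∧ y = T (ap y ![0, 0, 1] 0) ![1, 0, 0] := by
  obtain ⟨h1, h2, h3⟩ := stab_e0 hy
  rw [hx, zero_mul] at h3
  have h4 : star (ap y ![0, 0, 1] 0) = ap y ![0, 0, 1] 0 := by grind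
  refine ⟨h4, ap_ext fun v => ?_⟩
  rw [ap_T h4 B_e0, stab_e0_ap hy, hx]
  ext i
  fin_cases i <;> simp [B]

theorem stab_e0_mul {y z : U k} (hy : ap y ![1, 0, 0] = ![1, 0, 0])
    (hz : ap z ![1, 0, 0] = ![1, 0, 0]) : ap (y * z) ![1, 0, 0] = ![1, 0, 0] ∧
    ap (y * z) ![0, 0, 1] 1 = ap y ![0, 0, 1] 1 + ap z ![0, 0, 1] 1 := by
  refine ⟨by rw [ap_mul, hz, hy], ?_⟩
  rw [ap_mul, stab_e0_ap hy (ap z ![0, 0, 1]), (stab_e0 hz).2.1]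
  simp [add_comm]

theorem stab_e0_inv {y : U k} (hy : ap y ![1, 0, 0] = ![1, 0, 0]) :
    ap y⁻¹ ![1, 0, 0] = ![1, 0, 0] := by
  conv_lhs => rw [← hy]
  rw [ap_inv_ap]

/-- The square of an upper unitriangular element. -/
theorem stab_e0_sq {y : U k} (hy : ap y ![1, 0, 0] = ![1, 0, 0]) :
    y * y = T (ap y ![0, 0, 1] 1 * star (ap y ![0, 0, 1] 1)) ![1, 0, 0] := by
  refine ap_ext fun v => ?_
  rw [ap_T (star_norm _) B_e0, ap_mul, stab_e0_ap hy, stab_e0_ap hy v]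
  ext i
  fin_cases i <;> simp [B] <;> grind

theorem exists_stab_e0 {a : k} (ha : a + star a = 1) (x : k) :
    ∃ y : U k, ap y ![1, 0, 0] = ![1, 0, 0] ∧ ap y ![0, 0, 1] 1 = x := by
  obtain ⟨y, hy⟩ := exists_U ![1, 0, 0] ![star x, 1, 0] ![a * (x * star x), x, 1]
    (by simp [B]) (by simp [B]) (by simp [B]) (by simp [B])
    (by simp [B]; grind) (by
      simp [B]
      linear_combination (x * star x) * ha + CharTwo.add_self_eq_zero (x * star x))
    (by simp)
  exact ⟨y, by rw [hy]; simp, by rw [hy]; simp⟩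

variable [Finite k]

/-- If `L` contains two noncommuting involutions, all its involutions are conjugate. -/
theorem exists_ap_eq {u v c d : Fin 3 → k} (hu : Good L u) (hv : Good L v) (huv : B u v ≠ 0)
    (hc : Good L c) (hd : Good L d) : ∃ g ∈ L, ∃ z : k, z * star z = 1 ∧ ap g c = z • d := by
  have h1 := star_one k
  obtain ⟨g, hg, e⟩ := conj_of_two invTrans_U (T_isInv h1 one_ne_zero hu.2.1 hu.1)
    (T_isInv h1 one_ne_zero hv.2.1 hv.1) (T_isInv h1 one_ne_zero hc.2.1 hc.1)
    (T_isInv h1 one_ne_zero hd.2.1 hd.1) hu.2.2 hv.2.2 hc.2.2 hd.2.2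
    (by rw [T_commute hu.2.1 hv.2.1 hu.1]; exact huv)
  rw [T_conj g h1 hc.2.1] at e
  obtain ⟨z, hz, e'⟩ := T_eq_norm (isotropic_ap hc.2.1 g) hd.2.1 (ap_ne_zero g hc.1) e
  exact ⟨g, hg, z, hz, e'⟩

/-- The scalars `l` for which `T l u` lies in `L` form a subfield independent of `u`. -/
theorem exists_goodField {u v : Fin 3 → k} (hu : Good L u) (hv : Good L v) (huv : B u v ≠ 0) :
    ∃ F : Subfield k, (∀ x ∈ F, star x = x) ∧
      ∀ w, Good L w → ∀ l, star l = l → (T l w ∈ L ↔ l ∈ F) := by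
  have aux : ∀ c d, Good L c → Good L d → ∀ l : k, star l = l → T l c ∈ L → T l d ∈ L := by
    intro c d hc hd l hl h
    obtain ⟨g, hg, z, hz, e⟩ := exists_ap_eq hu hv huv hc hd
    have : T l (ap g c) ∈ L := by
      rw [← T_conj g hl hc.2.1]
      exact L.mul_mem (L.mul_mem hg h) (L.inv_mem hg)
    rwa [e, T_smul hl hd.2.1, hz, mul_one] at this
  -- rescaling along an element of the field keeps a vector good
  have aux2 : ∀ l m : k, star l = l → star m = m → m ≠ 0 → T m u ∈ L →
      (T (l * m) u ∈ L ↔ T l u ∈ L) := by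
    intro l m hl hm hm0 h
    obtain ⟨c, -, rfl⟩ := exists_norm hm
    have hc0 : c ≠ 0 := by rintro rfl; simp at hm0
    have hg : Good L (c • u) := by
      refine ⟨smul_ne_zero hc0 hu.1, isotropic_smul hu.2.1 c, ?_⟩
      rwa [T_smul (star_one k) hu.2.1, one_mul]
    rw [← T_smul hl hu.2.1]
    exact ⟨aux _ _ hg hu l hl, aux _ _ hu hg l hl⟩
  let F : Subfield k :=
    { carrier := {l | star l = l ∧ T l u ∈ L}
      zero_mem' := ⟨star_zero k, by rw [T_zero hu.2.1]; exact L.one_mem⟩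
      one_mem' := ⟨star_one k, hu.2.2⟩
      add_mem' := by
        rintro a b ⟨ha, ha'⟩ ⟨hb, hb'⟩
        exact ⟨by rw [star_add, ha, hb], by rw [← T_mul ha hb hu.2.1]; exact L.mul_mem ha' hb'⟩
      neg_mem' := by
        rintro a ⟨ha, ha'⟩
        rw [CharTwo.neg_eq]
        exact ⟨ha, ha'⟩
      mul_mem' := by
        rintro a b ⟨ha, ha'⟩ ⟨hb, hb'⟩
        refine ⟨by rw [star_mul', ha, hb], ?_⟩
        by_cases hb0 : b = 0
        · rw [hb0, mul_zero, T_zero hu.2.1]; exact L.one_mem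
        · rwa [aux2 a b ha hb hb0 hb']
      inv_mem' := by
        rintro a ⟨ha, ha'⟩
        have hi : star a⁻¹ = a⁻¹ := by rw [star_inv₀, ha]
        refine ⟨hi, ?_⟩
        by_cases ha0 : a = 0
        · rw [ha0, inv_zero, T_zero hu.2.1]; exact L.one_mem
        · rw [← aux2 a⁻¹ a hi ha ha0 ha', inv_mul_cancel₀ ha0]
          exact hu.2.2 }
  refine ⟨F, fun x hx => hx.1, fun w hw l hl => ⟨fun h => ⟨hl, aux _ _ hw hu l hl h⟩,
    fun h => aux _ _ hu hw l hl h.2⟩⟩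

end Even

section Even2

variable {k : Type*} [Field k] [StarRing k] [CharP k 2] {L : Subgroup (U k)}

theorem pow_two_inj {c : k} {j : ℕ} (h : c ^ 2 ^ j = 1) : c = 1 := by
  induction j with
  | zero => simpa using h
  | succ j ih =>
    apply ih
    rw [pow_succ, pow_mul] at h
    exact sq_inj (by rw [h, one_pow])

theorem ap_pow_eigen {x : U k} {u : Fin 3 → k} {c : k} (h : ap x u = c • u) (j : ℕ) :
    ap (x ^ j) u = c ^ j • u := by
  induction j with
  | zero => simp [ap_one]
  | succ j ih => rw [pow_succ, ap_mul, h, ap_smul, ih, smul_smul, pow_succ, mul_comm]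

variable [Finite k] [UnitaryField k]

/-- If the field attached to `L` is `{0, 1}`, the `2`-subgroups of `L` are cyclic: such a subgroup
is upper unitriangular, its middle coordinate takes at most one nonzero value, and the kernel of
the middle coordinate has order two. -/
theorem isCyclic_of_prime_field (hF : ∀ w, Good L w → ∀ l, star l = l → T l w ∈ L → l = 0 ∨ l = 1)
    (P : Subgroup (U k)) (hPL : P ≤ L) (hP : IsPGroup 2 P) : IsCyclic P := by
  have : Fact (Nat.Prime 2) := ⟨Nat.prime_two⟩
  rcases subsingleton_or_nontrivial P with hs | hs
  · infer_instance
  have h1 := star_one k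
  obtain ⟨t, htP, ht, htc⟩ : ∃ t ∈ P, IsInv t ∧ ∀ p ∈ P, p * t = t * p := by
    have hc := hP.center_nontrivial
    have h2 : 2 ∣ Nat.card (Subgroup.center P) := by
      rcases (hP.to_subgroup (Subgroup.center P)).card_eq_or_dvd with h | h
      · have := Finite.one_lt_card_iff_nontrivial.mpr hc
        omega
      · exact h
    obtain ⟨z, hz⟩ := exists_prime_orderOf_dvd_card' 2 h2
    have hz1 : z ≠ 1 := by
      rintro rfl
      rw [orderOf_one] at hz
      omega
    have hz2 : z * z = 1 := by rw [← sq, ← hz, pow_orderOf_eq_one]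
    refine ⟨z.1.1, z.1.2, ⟨fun h => hz1 (Subtype.ext (Subtype.ext h)), ?_⟩, ?_⟩
    · exact congrArg (fun x : Subgroup.center P => (x : P).1) hz2
    · intro p hp
      exact congrArg Subtype.val (Subgroup.mem_center_iff.mp z.2 ⟨p, hp⟩)
  obtain ⟨u, hu0, hu, rfl⟩ := exists_T_of_isInv ht
  have hgood : Good L u := ⟨hu0, hu, hPL htP⟩
  obtain ⟨g, hg⟩ := exists_ap_e0 hu hu0
  have hy : ∀ p ∈ P, ap (g⁻¹ * p * g) ![1, 0, 0] = ![1, 0, 0] := by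
    intro p hp
    have h2 : T 1 (ap p u) = T 1 u := by
      rw [← T_conj p h1 hu, htc p hp, mul_inv_cancel_right]
    obtain ⟨c, -, hc⟩ := T_eq_norm (isotropic_ap hu p) hu (ap_ne_zero p hu0) h2
    obtain ⟨j, hj⟩ := hP ⟨p, hp⟩
    have hj' : p ^ 2 ^ j = 1 := congrArg Subtype.val hj
    have h3 := ap_pow_eigen hc (2 ^ j)
    rw [hj', ap_one] at h3
    have hc1 : c = 1 := by
      apply pow_two_inj (j := j)
      have : (1 : k) • u = c ^ 2 ^ j • u := by rw [one_smul]; exact h3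
      exact (smul_left_injective k hu0 this).symm
    rw [hc1, one_smul] at hc
    rw [ap_mul, ap_mul, hg, hc, ← hg, ap_inv_ap]
  have hTu : ∀ l, star l = l → g * T l ![1, 0, 0] * g⁻¹ = T l u := by
    intro l hl
    rw [T_conj g hl B_e0, hg]
  have hpy : ∀ p, p = g * (g⁻¹ * p * g) * g⁻¹ := fun p => by group
  have hK1 : ∀ p ∈ P, ap (g⁻¹ * p * g) ![0, 0, 1] 1 = 0 → p = 1 ∨ p = T 1 u := by
    intro p hp h
    obtain ⟨h2, h3⟩ := stab_e0_T (hy p hp) h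
    have h4 := hpy p
    rw [h3, hTu _ h2] at h4
    rcases hF u hgood _ h2 (by rw [← h4]; exact hPL hp) with h5 | h5
    · left; rw [h4, h5, T_zero hu]
    · right; rw [h5] at h4; exact h4
  have hK2 : ∀ p ∈ P, p * p = T (ap (g⁻¹ * p * g) ![0, 0, 1] 1 *
      star (ap (g⁻¹ * p * g) ![0, 0, 1] 1)) u := by
    intro p hp
    rw [← hTu _ (star_norm _), ← stab_e0_sq (hy p hp)]
    group
  have hK3 : ∀ p ∈ P, ap (g⁻¹ * p * g) ![0, 0, 1] 1 ≠ 0 →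
      ap (g⁻¹ * p * g) ![0, 0, 1] 1 * star (ap (g⁻¹ * p * g) ![0, 0, 1] 1) = 1 := by
    intro p hp h
    rcases hF u hgood _ (star_norm _) (by rw [← hK2 p hp]; exact hPL (P.mul_mem hp hp)) with h2 | h2
    · exact absurd (norm_eq_zero h2) h
    · exact h2
  by_cases hall : ∀ p ∈ P, ap (g⁻¹ * p * g) ![0, 0, 1] 1 = 0
  · refine ⟨⟨⟨T 1 u, htP⟩, fun p => ?_⟩⟩
    rcases hK1 p p.2 (hall p p.2) with h | h
    · exact ⟨0, Subtype.ext (by simp [h])⟩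
    · exact ⟨1, Subtype.ext (by simp [h])⟩
  push Not at hall
  obtain ⟨a, ha, hxa⟩ := hall
  have haa := hK2 a ha
  rw [hK3 a ha hxa] at haa
  have hadd : ∀ p ∈ P, ap (g⁻¹ * (p * a) * g) ![0, 0, 1] 1 =
      ap (g⁻¹ * p * g) ![0, 0, 1] 1 + ap (g⁻¹ * a * g) ![0, 0, 1] 1 := by
    intro p hp
    have h : g⁻¹ * (p * a) * g = g⁻¹ * p * g * (g⁻¹ * a * g) := by group
    rw [h, (stab_e0_mul (hy p hp) (hy a ha)).2]
  refine ⟨⟨⟨a, ha⟩, fun p => ?_⟩⟩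
  have hp1 : ∀ p ∈ P, ap (g⁻¹ * p * g) ![0, 0, 1] 1 = 0 → ∃ n : ℤ, a ^ n = p := by
    intro p hp h
    rcases hK1 p hp h with h | h
    · exact ⟨0, by simp [h]⟩
    · exact ⟨2, by rw [h, ← haa, zpow_ofNat, sq]⟩
  suffices h : ∃ n : ℤ, a ^ n = (p : U k) by
    obtain ⟨n, hn⟩ := h
    exact ⟨n, Subtype.ext hn⟩
  obtain ⟨p, hp⟩ := p
  show ∃ n : ℤ, a ^ n = p
  by_cases hxp : ap (g⁻¹ * p * g) ![0, 0, 1] 1 = 0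
  · exact hp1 p hp hxp
  -- two distinct nonzero values would have a primitive cube root of unity of norm one as quotient
  have heq : ap (g⁻¹ * p * g) ![0, 0, 1] 1 = ap (g⁻¹ * a * g) ![0, 0, 1] 1 := by
    by_contra hne
    have h2 := hadd p hp
    have h3 : ap (g⁻¹ * (p * a) * g) ![0, 0, 1] 1 ≠ 0 := by
      rw [h2]
      intro h
      exact hne (CharTwo.add_eq_zero.mp h)
    have h4 := hK3 _ (P.mul_mem hp ha) h3
    have h5 := hK3 p hp hxp
    have h6 := hK3 a ha hxa
    rw [h2] at h4
    generalize ap (g⁻¹ * p * g) ![0, 0, 1] 1 = x at *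
    generalize ap (g⁻¹ * a * g) ![0, 0, 1] 1 = y at *
    have hsx : star x = x⁻¹ := eq_inv_of_mul_eq_one_right h5
    have hsy : star y = y⁻¹ := eq_inv_of_mul_eq_one_right h6
    have hs : star (x / y) = y / x := by
      rw [star_div₀, hsx, hsy]
      field_simp
    have h7 : (x / y) * star (x / y) = 1 := by rw [hs]; field_simp
    have h8 : x / y + y / x = 1 := by
      rw [← hs]
      rw [star_add] at h4
      have h9 : x / y = x * star y := by rw [hsy, div_eq_mul_inv]
      rw [h9, star_mul', star_star]
      grind
    have h10 : (x / y) ^ 3 = 1 := by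
      have : (x / y) * (y / x) = 1 := by field_simp
      generalize x / y = z at *
      generalize y / x = z' at *
      grind
    have h11 := norm_one_cube h10 h7
    apply hne
    field_simp at h11
    exact h11
  obtain ⟨n, hn⟩ := hp1 (p * a) (P.mul_mem hp ha) (by
    rw [hadd p hp, heq, CharTwo.add_self_eq_zero])
  exact ⟨n - 1, by rw [zpow_sub, hn, zpow_one, mul_inv_cancel_right]⟩

end Even2

section Even3

variable {k : Type*} [Field k] [StarRing k]

/-- The subfield fixed by the involution. -/
def k0 (k : Type*) [Field k] [StarRing k] : Subfield k where
  carrier := {x | star x = x}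
  zero_mem' := star_zero k
  one_mem' := star_one k
  add_mem' := by
    intro a b ha hb
    show star _ = _
    rw [star_add]
    exact congrArg₂ _ ha hb
  neg_mem' := by
    intro a ha
    show star _ = _
    rw [star_neg]
    exact congrArg _ ha
  mul_mem' := by
    intro a b ha hb
    show star _ = _
    rw [star_mul']
    exact congrArg₂ _ ha hb
  inv_mem' := by
    intro a ha
    show star _ = _
    rw [star_inv₀]
    exact congrArg _ ha

theorem mem_k0 {x : k} : x ∈ k0 k ↔ star x = x := Iff.rfl

theorem star_k0 (x : k0 k) : star (x : k) = x := x.2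

variable [CharP k 2]

theorem det_k0 (m : Matrix.SpecialLinearGroup (Fin 2) (k0 k)) :
    (m 0 0 : k) * m 1 1 + (m 0 1 : k) * m 1 0 = 1 := by
  have := m.2
  rw [Matrix.det_fin_two] at this
  have h := congrArg (Subtype.val : k0 k → k) this
  simp only [Subfield.coe_sub, Subfield.coe_mul, Subfield.coe_one] at h
  rw [← h, sub_eq_add_neg, CharTwo.neg_eq]

/-- The element of `U k` that acts by `m ∈ SL(2, k₀)` on `⟨e₀, e₂⟩` and fixes `e₁`. -/
theorem exists_psi (m : Matrix.SpecialLinearGroup (Fin 2) (k0 k)) :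
    ∃ g : U k, ∀ v, ap g v = ![(m 0 0 : k) * v 0 + (m 0 1 : k) * v 2, v 1,
      (m 1 0 : k) * v 0 + (m 1 1 : k) * v 2] := by
  have h := det_k0 m
  obtain ⟨g, hg⟩ := exists_U ![(m 0 0 : k), 0, (m 1 0 : k)] ![0, 1, 0] ![(m 0 1 : k), 0, (m 1 1 : k)]
    (by simp [B, star_k0]; grind) (by simp [B]) (by simp [B, star_k0]; grind) (by simp [B])
    (by simp [B]) (by simp [B, star_k0]; grind) (by simp; grind)
  refine ⟨g, fun v => ?_⟩
  rw [hg]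
  ext i
  fin_cases i <;> simp <;> ring

/-- The embedding of `SL(2, k₀)` as the pointwise stabilizer of `e₁`. -/
noncomputable def psi : Matrix.SpecialLinearGroup (Fin 2) (k0 k) →* U k :=
  MonoidHom.mk' (fun m => (exists_psi m).choose) fun a b => by
    refine ap_ext fun v => ?_
    rw [ap_mul, (exists_psi _).choose_spec, (exists_psi _).choose_spec, (exists_psi _).choose_spec]
    simp only [Matrix.SpecialLinearGroup.coe_mul, Matrix.mul_apply, Fin.sum_univ_two]
    ext i
    fin_cases i <;> simp <;> ring

theorem ap_psi (m : Matrix.SpecialLinearGroup (Fin 2) (k0 k)) (v : Fin 3 → k) :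
    ap (psi m) v = ![(m 0 0 : k) * v 0 + (m 0 1 : k) * v 2, v 1,
      (m 1 0 : k) * v 0 + (m 1 1 : k) * v 2] := (exists_psi m).choose_spec v

instance charP_k0 : CharP (k0 k) 2 :=
  (RingHom.charP_iff (algebraMap (k0 k) k) (algebraMap (k0 k) k).injective 2).mpr ‹_›

/-- The isotropic vector of `⟨e₀, e₂⟩` with the given real coordinates. -/
def emb (w : Fin 2 → k0 k) : Fin 3 → k := ![(w 0 : k), 0, (w 1 : k)]

theorem B_emb (w : Fin 2 → k0 k) : B (emb w) (emb w) = 0 := by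
  simp [B, emb, star_k0]
  grind

theorem psi_tr (l : k0 k) (w : Fin 2 → k0 k) : psi (tr l w) = T (l : k) (emb w) := by
  refine ap_ext fun v => ?_
  rw [ap_T (star_k0 l) (B_emb w), ap_psi]
  ext i
  fin_cases i <;> simp [B, emb, tr, star_k0] <;> ring

variable [Finite k] {L : Subgroup (U k)}

/-- The norms `B u v · star (B u v)` of products of good vectors lie in the field attached to `L`,
provided that field is larger than `{0, 1}`: this is the statement about subgroups of `SL(2, k₀)`
generated by transvections, applied in the stabilizer of a vector orthogonal to `u` and `v`. -/
theorem norm_B_mem {F : Subfield k} (hF : ∀ x ∈ F, star x = x)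
    (hFL : ∀ w, Good L w → ∀ l, star l = l → (T l w ∈ L ↔ l ∈ F)) {f : k} (hf : f ∈ F)
    (hf0 : f ≠ 0) (hf1 : f ≠ 1) {u v : Fin 3 → k} (hu : Good L u) (hv : Good L v) :
    B u v * star (B u v) ∈ F := by
  set b := B u v with hb
  by_cases hb0 : b = 0
  · rw [hb0, zero_mul]; exact F.zero_mem
  have hsb0 : star b ≠ 0 := star_ne_zero.mpr hb0
  obtain ⟨g, hgu, hgv⟩ := exists_hyp (v := (star b)⁻¹ • v) hu.2.1 (isotropic_smul hv.2.1 _) (by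
    rw [B_smul, star_inv₀, star_star, ← hb, inv_mul_cancel₀ hb0])
  have hgv' : v = ap g (star b • ![0, 0, 1]) := by
    rw [ap_smul, hgv, smul_smul, mul_inv_cancel₀ hsb0, one_smul]
  let Y : Subgroup (Matrix.SpecialLinearGroup (Fin 2) (k0 k)) :=
    L.comap ((MulAut.conj g).toMonoidHom.comp psi)
  have hY : ∀ l w, tr l w ∈ Y ↔ T (l : k) (ap g (emb w)) ∈ L := by
    intro l w
    rw [Subgroup.mem_comap, ← T_conj g (star_k0 l) (B_emb w), ← psi_tr]
    rfl
  have hemb0 : ∀ w : Fin 2 → k0 k, w ≠ 0 → emb w ≠ 0 := by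
    intro w hw h
    apply hw
    ext i
    fin_cases i
    · simpa [emb] using congrFun h 0
    · simpa [emb] using congrFun h 2
  obtain ⟨d, hd, hdb⟩ := exists_norm (star_norm b)
  have h1 : tr (1 : k0 k) ![1, 0] ∈ Y := by
    rw [hY]
    have : emb ![(1 : k0 k), 0] = ![1, 0, 0] := by simp [emb]
    rw [this, hgu]
    exact hu.2.2
  have h2 : tr (1 : k0 k) ![0, ⟨d, hd⟩] ∈ Y := by
    rw [hY]
    have : emb ![(0 : k0 k), ⟨d, hd⟩] = d • ![0, 0, 1] := by
      ext i; fin_cases i <;> simp [emb]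
    have h3 := hv.2.2
    have h1' := star_one k
    rw [hgv', ap_smul, T_smul h1' (isotropic_ap B_e2 g), star_star, mul_comm (star b), hdb] at h3
    rw [this, ap_smul, Subfield.coe_one, T_smul h1' (isotropic_ap B_e2 g)]
    exact h3
  have key := dt_mem_of_good (F := F.comap (k0 k).subtype) (Y := Y) (f := ⟨f, hF f hf⟩) hf
    (fun h => hf0 (congrArg Subtype.val h)) (fun h => hf1 (congrArg Subtype.val h)) (by
      intro w hw0 hw l
      rw [hY, Subfield.coe_one] at hw
      rw [hY, hFL _ ⟨ap_ne_zero g (hemb0 w hw0), isotropic_ap (B_emb w) g, hw⟩ _ (star_k0 l)]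
      rfl) h1 h2
  have hd' : d ∈ F := by
    have : dt ![(1 : k0 k), 0] ![0, ⟨d, hd⟩] = ⟨d, hd⟩ := by simp [dt]
    rw [this] at key
    exact key
  rw [hdb, hd]
  exact F.mul_mem hd' hd'

/-- The span of the good vectors is the whole space. -/
theorem span_good (hL : Irred L) {u : Fin 3 → k} (hu : Good L u) :
    Submodule.span k {v | Good L v} = ⊤ := by
  refine (hL _ ?_).resolve_left ?_
  · intro g hg w hw
    induction hw using Submodule.span_induction with
    | mem v hv => exact Submodule.subset_span (hv.map hg)
    | zero => rw [ap_zero]; exact Submodule.zero_mem _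
    | add x y _ _ hx hy => rw [ap_add]; exact Submodule.add_mem _ hx hy
    | smul c x _ hx => rw [ap_smul]; exact Submodule.smul_mem _ _ hx
  · intro h
    have : u ∈ Submodule.span k {v | Good L v} := Submodule.subset_span hu
    rw [h] at this
    exact hu.1 this

theorem exists_good_pair (hL : Irred L) {u : Fin 3 → k} (hu : Good L u) :
    ∃ v, Good L v ∧ B u v ≠ 0 := by
  by_contra! h
  obtain ⟨w, hw⟩ := exists_B_one hu.1
  have key : ∀ w ∈ Submodule.span k {v | Good L v}, B w u = 0 := by
    intro w hw
    induction hw using Submodule.span_induction with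
    | mem v hv => exact B_swap_zero (h v hv)
    | zero => exact B_zero' u
    | add x y _ _ hx hy => rw [B_add', hx, hy, add_zero]
    | smul c x _ hx => rw [B_smul', hx, mul_zero]
  rw [key w (by rw [span_good hL hu]; trivial)] at hw
  exact zero_ne_one hw

variable [UnitaryField k]

/-- The field attached to an irreducible `L` is `{0, 1}` or the whole fixed field: the triple
product of three independent good vectors would otherwise be real, by the chain condition, and
their Gram determinant would vanish. -/
theorem goodField_full (hL : Irred L) {F : Subfield k} (hF : ∀ x ∈ F, star x = x)
    (hFL : ∀ w, Good L w → ∀ l, star l = l → (T l w ∈ L ↔ l ∈ F)) {f : k} (hf : f ∈ F)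
    (hf0 : f ≠ 0) (hf1 : f ≠ 1) {u : Fin 3 → k} (hu : Good L u) : ∀ x : k, star x = x → x ∈ F := by
  by_contra! hx
  have hnorm : ∀ {u v}, Good L u → Good L v → B u v * star (B u v) ∈ F := fun hu hv =>
    norm_B_mem hF hFL hf hf0 hf1 hu hv
  obtain ⟨v, hv, huv⟩ := exists_good_pair hL hu
  have hvu : B v u ≠ 0 := fun h => huv (B_swap_zero h)
  obtain ⟨w, hw, hwuv⟩ : ∃ w, Good L w ∧ w ∉ Submodule.span k {u, v} := by
    by_contra! h
    have h1 : Submodule.span k {v | Good L v} ≤ Submodule.span k {u, v} :=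
      Submodule.span_le.mpr h
    rw [span_good hL hu, top_le_iff] at h1
    have h2 := finrank_span_finset_le_card (R := k) ({u, v} : Finset (Fin 3 → k))
    rw [Set.finrank, Finset.coe_pair, h1, finrank_top, Module.finrank_fin_fun] at h2
    have h3 := Finset.card_le_two (a := u) (b := v)
    omega
  set Δ := B u v * B v w * B w u with hΔ
  have hsuv := star_B u v
  have hsvw := star_B v w
  have hswu := star_B w u
  have hΔs : star Δ = B v u * B w v * B u w := by
    rw [hΔ, star_mul', star_mul', hsuv, hsvw, hswu]
  have hne : Δ + star Δ ≠ 0 := by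
    intro h0
    -- the component of `w` orthogonal to `u` and `v`
    set z := w + (B w v / B u v) • u + (B w u / B v u) • v with hz
    have hzu : B z u = 0 := by
      rw [hz]
      simp only [B_add', B_smul', hu.2.1]
      field_simp
      grind
    have hzv : B z v = 0 := by
      rw [hz]
      simp only [B_add', B_smul', hv.2.1]
      field_simp
      grind
    have hzz : B z z = 0 := by
      have h1 : B z z = B w z := by
        conv_lhs => rw [hz]
        rw [B_add', B_add', B_smul', B_smul', B_swap_zero hzu, B_swap_zero hzv]
        ring
      have h2 : B v u * B u v * B w z = Δ + star Δ := by
        rw [hz, B_add, B_add, B_smul, B_smul, hw.2.1, star_div₀, star_div₀, star_B, star_B, star_B,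
          star_B, hΔs, hΔ]
        field_simp
        ring
      rw [h0] at h2
      rw [h1]
      exact (mul_eq_zero.mp h2).resolve_left (mul_ne_zero hvu huv)
    obtain ⟨c, hc⟩ := exists_smul_of_isotropic hu.2.1 hzz (B_swap_zero hzu) hu.1
    apply hwuv
    have h3 : w = z + (B w v / B u v) • u + (B w u / B v u) • v := by
      rw [hz]
      have h4 := add_self_v ((B w v / B u v) • u)
      have h5 := add_self_v ((B w u / B v u) • v)
      calc w = w + ((B w v / B u v) • u + (B w v / B u v) • u) +
          ((B w u / B v u) • v + (B w u / B v u) • v) := by rw [h4, h5]; simp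
        _ = _ := by abel
    rw [h3, hc]
    have hu' : u ∈ Submodule.span k {u, v} := Submodule.subset_span (by simp)
    have hv' : v ∈ Submodule.span k {u, v} := Submodule.subset_span (by simp)
    exact Submodule.add_mem _ (Submodule.add_mem _ (Submodule.smul_mem _ _ hu')
      (Submodule.smul_mem _ _ hu')) (Submodule.smul_mem _ _ hv')
  have h1 := hnorm hu hv
  have h2 := hnorm hv hw
  have h3 := hnorm hw hu
  have h4 := hnorm (hu.map hv.2.2) hw
  rw [ap_T (star_one k) hv.2.1, one_mul, B_add', B_smul'] at h4
  have h5 : Δ * star Δ ∈ F := by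
    have := F.mul_mem (F.mul_mem h1 h2) h3
    rw [hΔs, hΔ]
    rw [hsuv, hsvw, hswu] at this
    convert this using 1
    ring
  have h6 : Δ + star Δ ∈ F := by
    have := F.add_mem (F.add_mem h4 h3) (F.mul_mem h1 h2)
    rw [hΔs, hΔ]
    rw [star_add, star_mul', hsuv, hsvw, hswu, star_B] at this
    convert this using 1
    grind
  have h7 := UnitaryField.chain F hF hx Δ h6 h5
  rw [h7] at hne
  exact hne (CharTwo.add_self_eq_zero _)

end Even3

section Even4

variable {k : Type*} [Field k] [StarRing k] [CharP k 2] [Finite k] {L : Subgroup (U k)}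

/-- Second coordinates of good vectors with last coordinate `1` are closed under the
non-real affine combinations, through the action of a transvection in one vector on another. -/
theorem good_step (hsc : ∀ u, Good L u → ∀ c : k, c ≠ 0 → Good L (c • u)) {x x' : k} (hxx : x ≠ x')
    (hx : ∀ y, y + star y = x * star x → Good L ![y, x, 1])
    (hx' : ∀ y, y + star y = x' * star x' → Good L ![y, x', 1]) {a : k} (ha : a + star a = 1)
    {s : k} (hs : star s ≠ s) : ∃ y, Good L ![y, x + s * (x' + x), 1] := by
  have hs1 : 1 + s ≠ 0 := by
    intro h
    have : s = 1 := (CharTwo.add_eq_zero.mp h).symm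
    rw [this, star_one] at hs
    exact hs rfl
  set β := s / (1 + s) with hβ
  have hβ' : β + s * β = s := by rw [hβ]; field_simp
  have hβ1 : (1 + β) * (1 + s) = 1 := by grind
  have hβ2 : 1 + β ≠ 0 := left_ne_zero_of_mul_eq_one hβ1
  have hτ : (x + x') * star (x + x') ≠ 0 := by
    intro h
    exact hxx (CharTwo.add_eq_zero.mp (norm_eq_zero h))
  set τ := (x + x') * star (x + x') with hτd
  have hsτ : star τ = τ := star_norm _
  have hβs : β + star β ≠ 0 := by
    intro h
    apply hs
    have h1 : star β = β := (CharTwo.add_eq_zero.mp h).symm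
    have h2 : s = β / (1 + β) := by field_simp; grind
    rw [h2, star_div₀, star_add, star_one, h1]
  set l := (β + star β) / τ with hl
  have hl0 : l ≠ 0 := div_ne_zero hβs hτ
  have hsl : star l = l := by rw [hl, star_div₀, star_add, star_star, hsτ, add_comm]
  set b := β / l with hb
  have hlb : l * b = β := by rw [hb]; field_simp
  have hbτ : b + star b = τ := by
    rw [hb, star_div₀, hsl, ← add_div, hl]
    field_simp
  clear_value b l τ β
  have hy : a * (x * star x) + star (a * (x * star x)) = x * star x := by
    rw [star_mul', star_norm]; grind
  have h1 := hx _ hy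
  set y := a * (x * star x) with hyd
  clear_value y
  have h2 := hx' (star (b + y + x * star x')) (by
    rw [star_star]
    simp only [star_add, star_mul', star_star] at hbτ hτd hy ⊢
    grind)
  set y' := star (b + y + x * star x') with hyd'
  have hBb : B ![y, x, 1] ![y', x', 1] = b := by
    simp [B]
    rw [hyd', star_star]
    grind
  have hT : T l ![y', x', 1] ∈ L := by
    obtain ⟨c, -, hc⟩ := exists_norm hsl
    have hc0 : c ≠ 0 := by rintro rfl; simp at hc; exact hl0 hc
    have := (hsc _ h2 c hc0).2.2
    rwa [T_smul (star_one k) h2.2.1, one_mul, ← hc] at this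
  have h3 := hsc _ (h1.map hT) (1 + β)⁻¹ (inv_ne_zero hβ2)
  rw [ap_T hsl h2.2.1, hBb, hlb] at h3
  have h4 : (1 + β)⁻¹ = 1 + s := inv_eq_of_mul_eq_one_right hβ1
  refine ⟨(1 + β)⁻¹ * (y + β * y'), ?_⟩
  convert h3 using 1
  rw [h4]
  ext i
  fin_cases i
  · simp
  · simp; grind
  · simp; grind

/-- If real multiples cause no loss and some good vector leaves the hyperbolic plane of two good
ones, every isotropic vector is good. -/
theorem all_good (hsc : ∀ u, Good L u → ∀ c : k, c ≠ 0 → Good L (c • u))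
    (h0 : Good L ![1, 0, 0]) (h2 : Good L ![0, 0, 1]) (h1 : ∃ u, Good L u ∧ u 1 ≠ 0)
    {a : k} (ha : a + star a = 1) : ∀ u, u ≠ 0 → B u u = 0 → Good L u := by
  have aux : ∀ z : Fin 3 → k, B z z = 0 → z 2 = 0 → z 1 = 0 := by
    intro z hz h2
    simp [B, h2] at hz
    exact hz
  have hstep : ∀ x, (∃ y, Good L ![y, x, 1]) → ∀ y, y + star y = x * star x → Good L ![y, x, 1] := by
    rintro x ⟨y, hy⟩ y' hy'
    have h3 := hy.2.1
    simp [B] at h3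
    have h4 : star (y + y') = y + y' := by rw [star_add]; grind
    by_cases h5 : y + y' = 0
    · rwa [← CharTwo.add_eq_zero.mp h5]
    obtain ⟨c, -, hc⟩ := exists_norm h4
    have hc0 : c ≠ 0 := by rintro rfl; simp at hc; exact h5 hc
    have hT := (hsc _ h0 c hc0).2.2
    rw [T_smul (star_one k) B_e0, one_mul, ← hc] at hT
    have := hy.map hT
    rw [ap_T h4 B_e0] at this
    convert this using 1
    ext i
    fin_cases i
    · simp [B]; grind
    · simp
    · simp
  have hs0 : ∃ s : k, star s ≠ s := by
    by_contra! h
    rw [h a, CharTwo.add_self_eq_zero] at ha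
    exact zero_ne_one ha
  obtain ⟨s, hs⟩ := hs0
  have hsn : s ≠ 0 := by rintro rfl; exact hs (star_zero k)
  have hX0 := hstep 0 ⟨0, h2⟩
  obtain ⟨u, hu, hu1⟩ := h1
  have hu2 : u 2 ≠ 0 := fun h => hu1 (aux u hu.2.1 h)
  have hXx := hstep (u 1 / u 2) ⟨u 0 / u 2, by
    convert hsc u hu (u 2)⁻¹ (inv_ne_zero hu2) using 1
    ext i
    fin_cases i <;> simp [hu2] <;> ring⟩
  set x := u 1 / u 2 with hx
  have hx0 : x ≠ 0 := div_ne_zero hu1 hu2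
  have hX1 : ∀ s : k, star s ≠ s → ∀ y, y + star y = (s * x) * star (s * x) → Good L ![y, s * x, 1] := by
    intro s hs
    apply hstep
    obtain ⟨y, hy⟩ := good_step hsc (Ne.symm hx0) hX0 hXx ha hs
    exact ⟨y, by rwa [zero_add, add_zero] at hy⟩
  have hX2 : ∀ r : k, ∀ y, y + star y = (r * x) * star (r * x) → Good L ![y, r * x, 1] := by
    intro r
    by_cases hr : star r = r
    swap
    · exact hX1 r hr
    by_cases hr0 : r = 0
    · rw [hr0, zero_mul]; exact hX0
    apply hstep
    -- two nonreal steps: first to `s x`, then by the ratio `r / s + 1`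
    obtain ⟨y, hy⟩ := good_step hsc (mul_ne_zero hsn hx0) (hX1 s hs) hX0 ha (s := r / s + 1) (by
      rw [star_add, star_one, star_div₀, hr]
      intro h
      have h3 := add_right_cancel h
      apply hs
      have hss : star s ≠ 0 := star_ne_zero.mpr hsn
      field_simp at h3
      exact h3.symm)
    refine ⟨y, ?_⟩
    convert hy using 2
    have : r * x = s * x + (r / s + 1) * (0 + s * x) := by
      field_simp
      grind
    rw [this]
  intro u hu0 huu
  by_cases h : u 2 = 0
  · have h3 := aux u huu h
    have h4 : u 0 ≠ 0 := fun h4 => hu0 (by ext i; fin_cases i <;> simp [h, h3, h4])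
    convert hsc _ h0 (u 0) h4 using 1
    ext i; fin_cases i <;> simp [h, h3]
  · have h3 := hX2 (u 1 / u 2 / x) (u 0 / u 2) (by
      rw [div_mul_cancel₀ _ hx0, star_div₀, star_div₀]
      have hss : star (u 2) ≠ 0 := star_ne_zero.mpr h
      field_simp
      simp only [B] at huu
      grind)
    rw [div_mul_cancel₀ _ hx0] at h3
    convert hsc _ h3 (u 2) h using 1
    ext i; fin_cases i <;> simp <;> field_simp

/-- The normal subgroup generated by the transvections is transitive on isotropic vectors. -/
theorem exists_mem_ap_e0 {N : Subgroup (U k)} (hN : ∀ l u, star l = l → B u u = 0 → T l u ∈ N)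
    {a : k} (ha : a + star a = 1) {u : Fin 3 → k} (hu0 : u ≠ 0) (hu : B u u = 0) :
    ∃ t ∈ N, ap t u = ![1, 0, 0] := by
  have h1 := star_one k
  have step : ∀ u v : Fin 3 → k, B u u = 0 → B v v = 0 → B u v = 1 → ∃ t ∈ N, ap t u = v := by
    intro u v hu hv huv
    have hz : B (u + v) (u + v) = 0 := by
      simp only [B_add, B_add', hu, hv, huv, B_swap_one huv]
      grind
    refine ⟨T 1 (u + v), hN _ _ h1 hz, ?_⟩
    rw [ap_T h1 hz, B_add, hu, huv, zero_add, one_mul, one_smul, ← add_assoc, add_self_v, zero_add]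
  have trans : ∀ {u v w : Fin 3 → k}, (∃ t ∈ N, ap t u = v) → (∃ t ∈ N, ap t v = w) →
      ∃ t ∈ N, ap t u = w := by
    rintro u v w ⟨t, ht, rfl⟩ ⟨t', ht', rfl⟩
    exact ⟨t' * t, N.mul_mem ht' ht, ap_mul _ _ _⟩
  have hγ : ∀ γ : k, γ ≠ 0 → ∃ t ∈ N, ap t (γ • ![1, 0, 0]) = ![1, 0, 0] := by
    intro γ hγ
    have hsγ : star γ ≠ 0 := star_ne_zero.mpr hγ
    obtain ⟨b, -, hb⟩ := exists_norm (l := γ⁻¹ + star γ⁻¹) (by rw [star_add, star_star, add_comm])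
    rw [star_inv₀] at hb
    have hz : B ![1, b, (star γ)⁻¹] ![1, b, (star γ)⁻¹] = 0 := by simp [B]; grind
    refine trans (step _ ![1, b, (star γ)⁻¹] (isotropic_smul B_e0 γ) hz ?_)
      (trans (step _ ![0, 0, 1] hz B_e2 ?_) (step _ _ B_e2 B_e0 ?_))
    all_goals simp [B, hγ]
  by_cases h : u 2 = 0
  · have h3 : u 1 = 0 := by
      simp [B, h] at hu
      exact hu
    have h4 : u 0 ≠ 0 := fun h4 => hu0 (by ext i; fin_cases i <;> simp [h, h3, h4])
    have h5 : u = u 0 • ![1, 0, 0] := by ext i; fin_cases i <;> simp [h, h3]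
    rw [h5]
    exact hγ _ h4
  · have hs : star (u 2) ≠ 0 := star_ne_zero.mpr h
    refine trans (step u ((star (u 2))⁻¹ • ![1, 0, 0]) hu (isotropic_smul B_e0 _) ?_)
      (hγ _ (inv_ne_zero hs))
    simp [B, h]

variable [UnitaryField k]

/-- The group is generated by transvections, as no proper normal subgroup contains them. -/
theorem eq_top_of_normal {N : Subgroup (U k)} [N.Normal]
    (hN : ∀ l u, star l = l → B u u = 0 → T l u ∈ N) : N = ⊤ := by
  obtain ⟨a, ha⟩ := exists_trace_one (k := k)
  have hω := om_rel (k := k)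
  have hω3 : om k ^ 3 = 1 := by grind
  have hω0 : om k ≠ 0 := by intro h; rw [h] at hω3; simp at hω3
  -- the diagonal element `h` of order three is congruent to an element of exponent four
  obtain ⟨h, hh⟩ := exists_U ![om k, 0, 0] ![0, 1, 0] ![0, 0, om k ^ 2] (by simp [B]) (by simp [B])
    (by simp [B, star_om]; grind) (by simp [B]) (by simp [B]) (by simp [B]) (by simp; grind)
  have hh3 : h ^ 3 = 1 := by
    refine ap_ext fun v => ?_
    rw [pow_succ, pow_two, ap_mul, ap_mul, hh, hh, hh, ap_one]
    ext i
    fin_cases i <;> simp <;> grind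
  have hsplit : ∀ g : U k, ∃ t ∈ N, ap (t * g) ![1, 0, 0] = ![1, 0, 0] := by
    intro g
    obtain ⟨t, ht, e⟩ := exists_mem_ap_e0 hN ha (ap_ne_zero g e0_ne) (isotropic_ap B_e0 g)
    exact ⟨t, ht, by rw [ap_mul, e]⟩
  have hhN : h ∈ N := by
    obtain ⟨t, ht, e⟩ := hsplit h
    have h4 : (t * h) * (t * h) ∈ N := by
      rw [stab_e0_sq e]
      exact hN _ _ (star_norm _) B_e0
    have ht1 : (t : U k ⧸ N) = 1 := (QuotientGroup.eq_one_iff t).mpr ht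
    have h5 : ((t * h * (t * h) : U k) : U k ⧸ N) = 1 := (QuotientGroup.eq_one_iff _).mpr h4
    have h6 : ((h * h : U k) : U k ⧸ N) = 1 := by
      rw [← h5]
      simp only [QuotientGroup.mk_mul, ht1, one_mul]
    have h7 := (QuotientGroup.eq_one_iff _).mp h6
    have h8 : h = (h * h) * (h * h) := by
      have : (h * h) * (h * h) = h ^ 3 * h := by simp only [pow_succ, pow_zero, one_mul, mul_assoc]
      rw [this, hh3, one_mul]
    rw [h8]
    exact N.mul_mem h7 h7
  have hstab : ∀ y : U k, ap y ![1, 0, 0] = ![1, 0, 0] → y ∈ N := by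
    intro y hy
    obtain ⟨z, hz, hzx⟩ := exists_stab_e0 ha (om k * ap y ![0, 0, 1] 1)
    have hhi : ∀ v : Fin 3 → k, ap h⁻¹ v = ![om k ^ 2 * v 0, v 1, om k * v 2] := by
      intro v
      have : v = ap h ![om k ^ 2 * v 0, v 1, om k * v 2] := by
        rw [hh]
        ext i
        fin_cases i <;> simp <;> grind
      conv_lhs => rw [this]
      rw [ap_inv_ap]
    have hc0 : ap (h * z * h⁻¹) ![1, 0, 0] = ![1, 0, 0] := by
      rw [ap_mul, ap_mul, hhi, stab_e0_ap hz, hh]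
      ext i
      fin_cases i <;> simp; grind
    have hc1 : ap (h * z * h⁻¹) ![0, 0, 1] 1 = om k * ap z ![0, 0, 1] 1 := by
      rw [ap_mul, ap_mul, hhi, stab_e0_ap hz, hh]
      simp
      ring
    have hcN : h * z * h⁻¹ * z⁻¹ ∈ N := by
      have : h * z * h⁻¹ * z⁻¹ = h * (z * h⁻¹ * z⁻¹) := by group
      rw [this]
      exact N.mul_mem hhN (‹N.Normal›.conj_mem _ (N.inv_mem hhN) z)
    -- multiplying `y` by the commutator cancels its middle coordinate
    have hzi := stab_e0_inv hz
    have hzi1 : ap z⁻¹ ![0, 0, 1] 1 = ap z ![0, 0, 1] 1 := by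
      have h1 := (stab_e0_mul hz hzi).2
      rw [mul_inv_cancel, ap_one] at h1
      simp at h1
      exact (CharTwo.add_eq_zero.mp h1.symm).symm
    obtain ⟨m1, m2⟩ := stab_e0_mul hc0 hzi
    obtain ⟨m3, m4⟩ := stab_e0_mul m1 hy
    have h9 := (stab_e0_T m3 (by rw [m4, m2, hc1, hzi1, hzx]; grind))
    have h10 : h * z * h⁻¹ * z⁻¹ * y ∈ N := by
      rw [h9.2]; exact hN _ _ h9.1 B_e0
    exact (N.mul_mem_cancel_left hcN).mp h10
  rw [eq_top_iff]
  intro g _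
  obtain ⟨t, ht, e⟩ := hsplit g
  exact (N.mul_mem_cancel_left ht).mp (hstab _ e)

/-- An irreducible subgroup of even order is the whole group or has a normal `2`-complement. -/
theorem even_irred (hL : Irred L) {t : U k} (htL : t ∈ L) (ht : IsInv t) :
    L = ⊤ ∨ ∃ O ≤ L, (∀ g ∈ L, ∀ r ∈ O, g * r * g⁻¹ ∈ O) ∧ Odd (Nat.card O) ∧
      ∀ g ∈ L, Odd (orderOf g) → g ∈ O := by
  obtain ⟨u, hu0, hu, rfl⟩ := exists_T_of_isInv ht
  have hgu : Good L u := ⟨hu0, hu, htL⟩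
  obtain ⟨v, hgv, huv⟩ := exists_good_pair hL hgu
  obtain ⟨F, hF, hFL⟩ := exists_goodField hgu hgv huv
  by_cases hF1 : ∀ f ∈ F, f = 0 ∨ f = 1
  · right
    exact exists_two_compl fun P hPL hP => isCyclic_of_prime_field
      (fun w hw l hl h => hF1 l ((hFL w hw l hl).mp h)) P hPL hP
  left
  push Not at hF1
  obtain ⟨f, hf, hf0, hf1⟩ := hF1
  have hfull := goodField_full hL hF hFL hf hf0 hf1 hgu
  have hsc : ∀ u, Good L u → ∀ c : k, c ≠ 0 → Good L (c • u) := by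
    intro u hu c hc
    refine ⟨smul_ne_zero hc hu.1, isotropic_smul hu.2.1 c, ?_⟩
    rw [T_smul (star_one k) hu.2.1, one_mul, hFL u hu _ (star_norm c)]
    exact hfull _ (star_norm c)
  have hsb : star (B u v) ≠ 0 := star_ne_zero.mpr huv
  have hgv' := hsc v hgv (star (B u v))⁻¹ (inv_ne_zero hsb)
  obtain ⟨g, hg0, hg2⟩ := exists_hyp (v := (star (B u v))⁻¹ • v) hu hgv'.2.1 (by
    rw [B_smul, star_inv₀, star_star, inv_mul_cancel₀ huv])
  have hcomap : ∀ w, Good (L.comap (MulAut.conj g).toMonoidHom) w ↔ Good L (ap g w) := by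
    intro w
    constructor
    · rintro ⟨h1, h2, h3⟩
      refine ⟨ap_ne_zero g h1, isotropic_ap h2 g, ?_⟩
      rw [← T_conj g (star_one k) h2]
      exact h3
    · rintro ⟨h1, h2, h3⟩
      have h2' : B w w = 0 := by rwa [B_ap] at h2
      refine ⟨fun h => h1 (by rw [h, ap_zero]), h2', ?_⟩
      rw [← T_conj g (star_one k) h2'] at h3
      exact h3
  obtain ⟨a, ha⟩ := exists_trace_one (k := k)
  have hall := all_good (L := L.comap (MulAut.conj g).toMonoidHom) (by
      intro u hu c hc
      rw [hcomap, ap_smul]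
      exact hsc _ ((hcomap u).mp hu) c hc) (by rw [hcomap, hg0]; exact hgu)
      (by rw [hcomap, hg2]; exact hgv') (by
      by_contra! h
      have h1 : Submodule.span k {v | Good L v} ≤
          LinearMap.ker ((LinearMap.proj (R := k) (φ := fun _ : Fin 3 => k) 1).comp
            (Matrix.mulVecLin (mat g⁻¹))) := by
        rw [Submodule.span_le]
        intro w hw
        have := h (ap g⁻¹ w) (by rw [hcomap, ap_ap_inv]; exact hw)
        exact this
      rw [span_good hL hgu, top_le_iff, LinearMap.ker_eq_top] at h1
      have h2 : ap g⁻¹ (ap g ![0, 1, 0]) 1 = 0 := congrArg (fun f => f (ap g ![0, 1, 0])) h1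
      rw [ap_inv_ap] at h2
      simp at h2) ha
  have hall' : ∀ w, w ≠ 0 → B w w = 0 → Good L w := by
    intro w hw0 hw
    have := (hcomap _).mp (hall (ap g⁻¹ w) (ap_ne_zero _ hw0) (isotropic_ap hw _))
    rwa [ap_ap_inv] at this
  -- the transvections form a set closed under conjugation
  let S : Set (U k) := {x | ∃ w, w ≠ 0 ∧ B w w = 0 ∧ x = T 1 w}
  have hS : Subgroup.normalClosure S ≤ L := by
    rw [Subgroup.normalClosure, Subgroup.closure_le]
    intro x hx
    obtain ⟨y, ⟨w, hw0, hw, rfl⟩, hy⟩ := Group.mem_conjugatesOfSet_iff.mp hx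
    obtain ⟨c, rfl⟩ := isConj_iff.mp hy
    rw [T_conj c (star_one k) hw]
    exact (hall' _ (ap_ne_zero c hw0) (isotropic_ap hw c)).2.2
  rw [eq_top_iff, ← eq_top_of_normal (N := Subgroup.normalClosure S)]
  · exact hS
  · intro l w hl hw
    obtain ⟨c, -, rfl⟩ := exists_norm hl
    rw [← one_mul (c * star c), ← T_smul (star_one k) hw]
    by_cases h : c • w = 0
    · rw [h, T_zero' (star_one k)]; exact Subgroup.one_mem _
    · exact Subgroup.subset_normalClosure ⟨_, h, isotropic_smul hw c, rfl⟩

end Even4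

/-! ### Subgroups of order prime to six are abelian -/

section Weights

variable {K V G : Type*} [Field K] [IsAlgClosed K] [CharP K 2] [AddCommGroup V] [Module K V]
  [FiniteDimensional K V] [Group G] [Finite G]

/-- Operators of odd finite order are semisimple in characteristic two. -/
theorem maxGen_eq (ρ : G →* Module.End K V) {z : G} (ho : Odd (orderOf z)) (c : K) :
    (ρ z).maxGenEigenspace c = (ρ z).eigenspace c := by
  apply Module.End.IsFinitelySemisimple.maxGenEigenspace_eq_eigenspace
  apply Module.End.IsSemisimple.isFinitelySemisimple
  apply Module.End.isSemisimple_of_squarefree_aeval_eq_zero (p := Polynomial.X ^ orderOf z - 1)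
  · apply Polynomial.Separable.squarefree
    rw [Polynomial.X_pow_sub_one_separable_iff]
    intro h
    rw [CharP.cast_eq_zero_iff K 2] at h
    exact (Nat.not_even_iff_odd.mpr ho) (even_iff_two_dvd.mpr h)
  · rw [map_sub, map_pow, Polynomial.aeval_X, ← map_pow, pow_orderOf_eq_one, map_one, map_one,
      sub_self]

/-- An abelian group of odd order acting faithfully in dimension three is diagonalizable with at
most three weights. A normalizing element permutes the weights, so its sixth power centralizes. -/
theorem normalizing_commutes (hd : Module.finrank K V = 3) (ρ : G →* Module.End K V)
    (hρ : Function.Injective ρ) (Z : Subgroup G) (hc : ∀ x ∈ Z, ∀ y ∈ Z, x * y = y * x)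
    (ho : Odd (Nat.card Z)) {r : G} (hr : ∀ z ∈ Z, r * z * r⁻¹ ∈ Z)
    (h6 : (orderOf r).Coprime 6) : ∀ z ∈ Z, r * z = z * r := by
  have hoz : ∀ z : Z, Odd (orderOf (z : G)) := fun z => by
    rw [Subgroup.orderOf_coe]
    exact ho.of_dvd_nat (orderOf_dvd_natCard z)
  set f : Z → Module.End K V := fun z => ρ z with hf
  have hcomm : ∀ i j, Commute (f i) (f j) := fun i j => by
    change ρ i * ρ j = ρ j * ρ i
    rw [← map_mul, ← map_mul, hc i i.2 j j.2]
  have hmaps : ∀ i j φ, Set.MapsTo (f i) ((f j).maxGenEigenspace φ) ((f j).maxGenEigenspace φ) :=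
    fun i j φ => Module.End.mapsTo_maxGenEigenspace_of_comm (hcomm j i) φ
  have hind := Module.End.independent_iInf_maxGenEigenspace_of_forall_mapsTo f hmaps
  have htop := Module.End.iSup_iInf_maxGenEigenspace_eq_top_of_forall_mapsTo f hmaps
    (fun i => Module.End.iSup_maxGenEigenspace_eq_top (f i))
  set W : (Z → K) → Submodule K V := fun χ => ⨅ i, (f i).maxGenEigenspace (χ i) with hW
  have hmem : ∀ χ v, v ∈ W χ ↔ ∀ z : Z, ρ z v = χ z • v := by
    intro χ v
    rw [hW]
    simp only [Submodule.mem_iInf]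
    refine forall_congr' fun z => ?_
    rw [hf]
    dsimp only
    rw [maxGen_eq ρ (hoz z), Module.End.mem_eigenspace_iff]
  clear_value W
  let _ : Fintype {χ // W χ ≠ ⊥} := hind.fintypeNeBotOfFiniteDimensional
  have hcard : Fintype.card {χ // W χ ≠ ⊥} ≤ 3 := hd ▸ hind.subtype_ne_bot_le_finrank
  let τ : Z → Z := fun z => ⟨r * z * r⁻¹, hr z z.2⟩
  have hτs : Function.Surjective τ := by
    apply Finite.surjective_of_injective
    intro x y h
    have := congrArg Subtype.val h
    simpa [τ] using this
  have hσ : ∀ χ, W χ ≠ ⊥ → W (χ ∘ τ) ≠ ⊥ := by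
    intro χ hχ
    obtain ⟨v, hv, hv0⟩ := (Submodule.ne_bot_iff _).mp hχ
    refine (Submodule.ne_bot_iff _).mpr ⟨ρ r⁻¹ v, ?_, ?_⟩
    · rw [hmem] at hv ⊢
      intro z
      have h1 := hv (τ z)
      have h2 : ρ z (ρ r⁻¹ v) = ρ r⁻¹ (ρ (τ z) v) := by
        rw [← Module.End.mul_apply, ← Module.End.mul_apply, ← map_mul, ← map_mul]
        congr 2
        simp [τ, mul_assoc]
      rw [h2, h1, map_smul]
      rfl
    · intro h
      apply hv0
      have : ρ r (ρ r⁻¹ v) = v := by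
        rw [← Module.End.mul_apply, ← map_mul, mul_inv_cancel, map_one, Module.End.one_apply]
      rw [← this, h, map_zero]
  let s : {χ // W χ ≠ ⊥} → {χ // W χ ≠ ⊥} := fun χ => ⟨χ.1 ∘ τ, hσ _ χ.2⟩
  have hsinj : Function.Injective s := by
    intro a b h
    have := congrArg Subtype.val h
    exact Subtype.ext (hτs.injective_comp_right this)
  let e : Equiv.Perm {χ // W χ ≠ ⊥} := Equiv.ofBijective s (Finite.injective_iff_bijective.mp hsinj)
  have he6 : e ^ 6 = 1 := by
    have h1 : e ^ Fintype.card (Equiv.Perm {χ // W χ ≠ ⊥}) = 1 := pow_card_eq_one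
    rw [Fintype.card_perm] at h1
    obtain ⟨c, hc⟩ := Nat.factorial_dvd_factorial hcard
    have : (6 : ℕ) = (Fintype.card {χ // W χ ≠ ⊥}).factorial * c := by rw [← hc]; rfl
    rw [this, pow_mul, h1, one_pow]
  have hfix : ∀ χ, W χ ≠ ⊥ → ∀ z, χ (τ^[6] z) = χ z := by
    intro χ hχ z
    have h1 := congrArg (fun e : Equiv.Perm {χ // W χ ≠ ⊥} => (e ⟨χ, hχ⟩).1 z) he6
    simpa [pow_succ, e, s] using h1
  have hfix' : ∀ z : Z, ρ (τ^[6] z : Z) = ρ z := by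
    intro z
    apply LinearMap.ext
    intro v
    have : (⊤ : Submodule K V) ≤ LinearMap.ker (ρ (τ^[6] z : Z) - ρ z) := by
      rw [← htop]
      refine iSup_le fun χ => ?_
      by_cases hχ : W χ = ⊥
      · rw [hχ]; exact bot_le
      · intro v hv
        rw [hmem] at hv
        rw [LinearMap.mem_ker, LinearMap.sub_apply, hv, hv, hfix χ hχ, sub_self]
    have h2 := this (Submodule.mem_top (x := v))
    rw [LinearMap.mem_ker, LinearMap.sub_apply, sub_eq_zero] at h2
    exact h2
  have hτ6 : ∀ n : ℕ, ∀ z : Z, ((τ^[n] z : Z) : G) = r ^ n * z * (r ^ n)⁻¹ := by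
    intro n z
    induction n with
    | zero => simp
    | succ n ih =>
      rw [Function.iterate_succ_apply']
      change r * ((τ^[n] z : Z) : G) * r⁻¹ = _
      rw [ih, pow_succ' r n]
      group
  intro z hz
  have h1 := hρ (hfix' ⟨z, hz⟩)
  rw [hτ6] at h1
  have h2 : Commute (r ^ 6) z := by
    change r ^ 6 * z = z * r ^ 6
    exact mul_inv_eq_iff_eq_mul.mp h1
  obtain ⟨m, hm⟩ := exists_pow_eq_self_of_coprime h6.symm
  rw [← hm]
  exact h2.pow_left m

end Weights

section Abelian

variable {G : Type*} [Group G] [Finite G]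

/-- If normalizing an abelian subgroup of `G` implies centralizing it, then `G` is abelian:
take a minimal counterexample, and use Burnside's transfer theorem when it is not a `p`-group. -/
theorem abelian_aux (P : ∀ Z : Subgroup G, (∀ x ∈ Z, ∀ y ∈ Z, x * y = y * x) →
      ∀ r : G, (∀ z ∈ Z, r * z * r⁻¹ ∈ Z) → ∀ z ∈ Z, r * z = z * r) :
    ∀ x y : G, x * y = y * x := by
  suffices h : ∀ n, ∀ W : Subgroup G, Nat.card W = n → ∀ x ∈ W, ∀ y ∈ W, x * y = y * x from
    fun x y => h _ ⊤ rfl x trivial y trivial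
  intro n
  induction n using Nat.strong_induction_on with
  | _ n ih =>
  intro W hW
  have ih' : ∀ Z : Subgroup W, Z ≠ ⊤ → ∀ x ∈ Z, ∀ y ∈ Z, x * y = y * x := by
    intro Z hZ x hx y hy
    have hlt : Nat.card (Z.map W.subtype) < n := by
      rw [Subgroup.card_map_of_injective W.subtype_injective, ← hW]
      exact lt_of_le_of_ne (Subgroup.card_le_card_group Z)
        (fun h => hZ (Subgroup.eq_top_of_card_eq Z h))
    have := ih _ hlt _ rfl x ⟨x, hx, rfl⟩ y ⟨y, hy, rfl⟩
    exact Subtype.ext this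
  have P' : ∀ Z : Subgroup W, Z ≠ ⊤ → ∀ r : W, (∀ z ∈ Z, r * z * r⁻¹ ∈ Z) →
      ∀ z ∈ Z, r * z = z * r := by
    intro Z hZ r hr z hz
    have := P (Z.map W.subtype) ?_ r ?_ z ⟨z, hz, rfl⟩
    · exact Subtype.ext this
    · rintro _ ⟨x, hx, rfl⟩ _ ⟨y, hy, rfl⟩
      exact congrArg Subtype.val (ih' Z hZ x hx y hy)
    · rintro _ ⟨x, hx, rfl⟩
      exact ⟨r * x * r⁻¹, hr x hx, rfl⟩
  have hcen : ∀ Z : Subgroup W, Z.Normal → Z ≠ ⊤ → ∀ z ∈ Z, ∀ r, r * z = z * r :=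
    fun Z hZn hZ z hz r => P' Z hZ r (fun z hz => hZn.conj_mem z hz r) z hz
  suffices hWc : ∀ x y : W, x * y = y * x from
    fun x hx y hy => congrArg Subtype.val (hWc ⟨x, hx⟩ ⟨y, hy⟩)
  clear ih
  rcases subsingleton_or_nontrivial W with hs | hnt
  · intro x y; exact Subsingleton.elim _ _
  have hcard : Nat.card W ≠ 1 := fun h => by
    rw [Nat.card_eq_one_iff_unique] at h
    exact not_subsingleton W h.1
  obtain ⟨p, hp, hpd⟩ := Nat.exists_prime_and_dvd hcard
  have : Fact p.Prime := ⟨hp⟩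
  by_cases hpg : IsPGroup p W
  · have hnil := hpg.isNilpotent
    obtain ⟨M, hM⟩ := (IsCoatomic.eq_top_or_exists_le_coatom (⊥ : Subgroup W)).resolve_left
      bot_ne_top
    have hMn := Subgroup.NormalizerCondition.normal_of_coatom M
      (normalizerCondition_of_isNilpotent (G := W)) hM.1
    have hMc := hcen M hMn hM.1.1
    have hex : ∃ x, x ∉ M := by
      by_contra h
      push Not at h
      exact hM.1.1 (eq_top_iff.mpr fun x _ => h x)
    obtain ⟨x, hx⟩ := hex
    -- adjoining one element to a central maximal subgroup gives everything
    have hgen : M ⊔ Subgroup.zpowers x = ⊤ := by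
      apply hM.1.2
      refine lt_of_le_of_ne le_sup_left fun h => hx ?_
      rw [h]
      exact Subgroup.mem_sup_right (Subgroup.mem_zpowers x)
    have hform : ∀ y : W, ∃ m ∈ M, ∃ i : ℤ, m * x ^ i = y := by
      intro y
      have : y ∈ M ⊔ Subgroup.zpowers x := hgen ▸ Subgroup.mem_top y
      rw [Subgroup.mem_sup_of_normal_left] at this
      obtain ⟨m, hm, z, ⟨i, rfl⟩, h⟩ := this
      exact ⟨m, hm, i, h⟩
    intro y z
    obtain ⟨m, hm, i, rfl⟩ := hform y
    obtain ⟨m', hm', j, rfl⟩ := hform z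
    have c1 : Commute m (m' * x ^ j) := (hMc m hm _).symm
    have c2 : Commute (x ^ i) m' := hMc m' hm' _
    have c3 : Commute (x ^ i) (x ^ j) := (Commute.refl x).zpow_zpow i j
    exact (c1.mul_left (c2.mul_right c3)).eq
  · obtain ⟨S⟩ : Nonempty (Sylow p W) := inferInstance
    have hS : (S : Subgroup W) ≠ ⊤ := fun h => hpg (by
      have := S.isPGroup'
      rw [h] at this
      exact this.of_equiv Subgroup.topEquiv)
    have hN : Subgroup.normalizer (S : Set W) ≤ Subgroup.centralizer (S : Set W) := by
      intro r hr
      rw [Subgroup.mem_centralizer_iff]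
      intro z hz
      refine (P' S hS r (fun z hz => ?_) z hz).symm
      exact (Subgroup.mem_normalizer_iff.mp hr z).mp hz
    have hcomp := MonoidHom.ker_transferSylow_isComplement' S hN
    set Q := (MonoidHom.transferSylow S hN).ker with hQ
    have hSbot : Nat.card S ≠ 1 := by
      intro h
      have h2 := S.card_eq_multiplicity
      rw [h] at h2
      have := hp.factorization_pos_of_dvd (Nat.card_pos.ne') hpd
      have h3 := Nat.one_lt_pow this.ne' hp.one_lt
      omega
    have hQt : Q ≠ ⊤ := by
      intro h
      apply hSbot
      have h1 := hcomp.card_mul_card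
      rw [h, Subgroup.card_top] at h1
      exact Nat.eq_of_mul_eq_mul_left Nat.card_pos (h1.trans (mul_one _).symm)
    have hQc := hcen Q (MonoidHom.normal_ker _) hQt
    have hSc := ih' S hS
    have hform : ∀ y : W, ∃ a ∈ Q, ∃ b ∈ (S : Subgroup W), a * b = y := by
      intro y
      obtain ⟨⟨a, b⟩, h⟩ := hcomp.2 y
      exact ⟨a, a.2, b, b.2, h⟩
    intro y z
    obtain ⟨m, hm, i, hi, rfl⟩ := hform y
    obtain ⟨m', hm', j, hj, rfl⟩ := hform z
    have c1 : Commute m (m' * j) := (hQc m hm _).symm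
    have c2 : Commute i m' := hQc m' hm' _
    have c3 : Commute i j := hSc i hi j hj
    exact (c1.mul_left (c2.mul_right c3)).eq

variable {k : Type*} [Field k] [StarRing k] [CharP k 2] [Finite k]

/-- Subgroups of the unitary group of order prime to six are abelian. -/
theorem abelian_of_coprime_six {W : Subgroup (U k)} (hW : (Nat.card W).Coprime 6) :
    ∀ x ∈ W, ∀ y ∈ W, x * y = y * x := by
  let Ω := AlgebraicClosure k
  have : CharP Ω 2 := charP_of_injective_algebraMap (algebraMap k Ω).injective 2
  let ρ : W →* Module.End Ω (Fin 3 → Ω) :=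
    { toFun := fun g => Matrix.toLin' ((mat (g : U k)).map (algebraMap k Ω))
      map_one' := by
        change Matrix.toLin' ((mat (1 : U k)).map (algebraMap k Ω)) = 1
        rw [mat_one, Matrix.map_one _ (map_zero _) (map_one _), Matrix.toLin'_one]
        rfl
      map_mul' := fun g h => by
        change Matrix.toLin' ((mat ((g : U k) * (h : U k))).map (algebraMap k Ω)) = _
        rw [mat_mul, Matrix.map_mul, Matrix.toLin'_mul]
        rfl }
  have hρ : Function.Injective ρ := by
    intro g h e
    apply Subtype.ext
    apply mat_inj
    have : (mat (g : U k)).map (algebraMap k Ω) = (mat (h : U k)).map (algebraMap k Ω) :=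
      Matrix.toLin'.injective e
    exact Matrix.map_injective (algebraMap k Ω).injective this
  have h2 : Odd (Nat.card W) :=
    Nat.coprime_two_right.mp (Nat.Coprime.coprime_dvd_right (by norm_num) hW)
  have key : ∀ x y : W, x * y = y * x := by
    apply abelian_aux
    intro Z hZ r hr
    apply normalizing_commutes (by simp) ρ hρ Z hZ (h2.of_dvd_nat (Subgroup.card_subgroup_dvd_card Z)) hr
    exact Nat.Coprime.coprime_dvd_left (orderOf_dvd_natCard r) hW
  exact fun x hx y hy => congrArg Subtype.val (key ⟨x, hx⟩ ⟨y, hy⟩)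

end Abelian

/-! ### Singer cycles normalized by an element of order three -/

section Torus

variable {k : Type*} [Field k] [StarRing k]

/-- The weighted cyclic permutation matrices. The algebra `k[X a]` is a cubic extension of `k` when
`a` is not a cube, and its unitary elements form a maximal torus of order dividing `q² - q + 1`. -/
def X (a : k) : Matrix (Fin 3) (Fin 3) k := !![0, a, 0; 0, 0, star a; 1, 0, 0]

/-- The general element `x + y X + z X²` of `k[X a]`. -/
def Zm (a x y z : k) : Matrix (Fin 3) (Fin 3) k :=
  !![x, a * y, a * star a * z; star a * z, x, star a * y; y, a * z, x]

theorem X_eq (a : k) : X a = Zm a 0 1 0 := by simp [X, Zm]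

theorem Zm_mul (a x y z x' y' z' : k) : Zm a x y z * Zm a x' y' z' =
    Zm a (x * x' + a * star a * (y * z' + z * y')) (x * y' + y * x' + a * star a * (z * z'))
      (x * z' + y * y' + z * x') := by
  ext i j
  fin_cases i <;> fin_cases j <;>
    simp [Zm, Matrix.mul_apply, Fin.sum_univ_three] <;> ring

theorem Zm_comm (a x y z x' y' z' : k) : Commute (Zm a x y z) (Zm a x' y' z') := by
  change _ * _ = _ * _
  rw [Zm_mul, Zm_mul]
  congr 1 <;> ring

/-- The algebra `k[X a]` is its own centralizer. -/
theorem comm_X {a : k} (ha : a ≠ 0) {Y : Matrix (Fin 3) (Fin 3) k} :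
    Commute Y (X a) ↔ ∃ x y z, Y = Zm a x y z := by
  constructor
  · intro h
    have e : ∀ i j, (Y * X a) i j = (X a * Y) i j := fun i j => by rw [h.eq]
    have sa : star a ≠ 0 := star_ne_zero.mpr ha
    simp only [X, Matrix.mul_apply, Fin.sum_univ_three] at e
    have e00 := e 0 0
    have e01 := e 0 1
    have e02 := e 0 2
    have e10 := e 1 0
    have e11 := e 1 1
    have e12 := e 1 2
    have e20 := e 2 0
    have e21 := e 2 1
    have e22 := e 2 2
    simp at e00 e01 e02 e10 e11 e12 e20 e21 e22
    refine ⟨Y 1 1, Y 2 0, Y 2 1 / a, ?_⟩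
    ext i j
    fin_cases i <;> fin_cases j <;> simp [Zm] <;> grind
  · rintro ⟨x, y, z, rfl⟩
    rw [X_eq]
    exact Zm_comm _ _ _ _ _ _ _

theorem comm_comm_X {a : k} (ha : a ≠ 0) {Y Z : Matrix (Fin 3) (Fin 3) k} (hY : Commute Y (X a))
    (hZ : Commute Z (X a)) : Commute Y Z := by
  obtain ⟨x, y, z, rfl⟩ := (comm_X ha).mp hY
  obtain ⟨x', y', z', rfl⟩ := (comm_X ha).mp hZ
  exact Zm_comm _ _ _ _ _ _ _

theorem X_inj {a b : k} (h : Commute (X a) (X b)) : a = b := by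
  have e : (X a * X b) 2 1 = (X b * X a) 2 1 := by rw [h.eq]
  simp [X, Matrix.mul_apply, Fin.sum_univ_three] at e
  exact e.symm

theorem X_cube (a : k) : X a ^ 3 = (a * star a) • 1 := by
  rw [pow_succ, sq, X_eq, Zm_mul, Zm_mul]
  ext i j
  fin_cases i <;> fin_cases j <;> simp [Zm]

/-- The subgroup of `U k` normalizing the algebra `k[X a]`. -/
def Ma (a : k) : Subgroup (U k) where
  carrier := {g | ∀ Y, Commute (mat g * Y * mat g⁻¹) (X a) ↔ Commute Y (X a)}
  one_mem' := by
    intro Y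
    simp only [inv_one, mat_one, one_mul, mul_one]
  mul_mem' := by
    intro g h hg hh Y
    rw [mul_inv_rev, mat_mul, mat_mul]
    have : mat g * mat h * Y * (mat h⁻¹ * mat g⁻¹) = mat g * (mat h * Y * mat h⁻¹) * mat g⁻¹ := by
      simp only [mul_assoc]
    rw [this, hg, hh]
  inv_mem' := by
    intro g hg Y
    rw [← hg]
    have : mat g * (mat g⁻¹ * Y * mat g⁻¹⁻¹) * mat g⁻¹ = Y := by
      rw [inv_inv]
      calc _ = (mat g * mat g⁻¹) * Y * (mat g * mat g⁻¹) := by simp only [mul_assoc]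
        _ = Y := by rw [mat_mul_inv, one_mul, mul_one]
    rw [this]

theorem mem_Ma {a : k} {g : U k} :
    g ∈ Ma a ↔ ∀ Y, Commute (mat g * Y * mat g⁻¹) (X a) ↔ Commute Y (X a) := Iff.rfl

theorem commute_mat {g : U k} {Y Z : Matrix (Fin 3) (Fin 3) k} :
    Commute (mat g * Y * mat g⁻¹) (mat g * Z * mat g⁻¹) ↔ Commute Y Z := by
  have e : ∀ Y Z : Matrix (Fin 3) (Fin 3) k, (mat g * Y * mat g⁻¹) * (mat g * Z * mat g⁻¹) =
      mat g * (Y * Z) * mat g⁻¹ := by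
    intro Y Z
    calc _ = mat g * Y * (mat g⁻¹ * mat g) * Z * mat g⁻¹ := by simp only [mul_assoc]
      _ = _ := by rw [mat_inv_mul, mul_one]; simp only [mul_assoc]
  have e2 : ∀ Y : Matrix (Fin 3) (Fin 3) k, mat g⁻¹ * (mat g * Y * mat g⁻¹) * mat g = Y := by
    intro Y
    calc _ = (mat g⁻¹ * mat g) * Y * (mat g⁻¹ * mat g) := by simp only [mul_assoc]
      _ = Y := by rw [mat_inv_mul, one_mul, mul_one]
  constructor
  · intro h
    have h1 := h.eq
    rw [e, e] at h1
    have h2 := congrArg (fun M => mat g⁻¹ * M * mat g) h1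
    simp only [e2] at h2
    exact h2
  · intro h
    change _ * _ = _ * _
    rw [e, e, h.eq]

theorem mem_Ma_of_commute {a : k} (ha : a ≠ 0) {g : U k} (h : Commute (mat g) (X a)) :
    g ∈ Ma a := by
  intro Y
  have : X a = mat g * X a * mat g⁻¹ := by rw [h.eq, mul_assoc, mat_mul_inv, mul_one]
  nth_rw 1 [this]
  exact commute_mat

/-- Normalizing a group whose commutant is `k[X a]` implies normalizing `k[X a]`. -/
theorem mem_Ma_of_normalizes {a : k} {R : Subgroup (U k)}
    (hR : ∀ Y, (∀ r ∈ R, Commute (mat r) Y) ↔ Commute Y (X a)) {g : U k}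
    (hg : ∀ r ∈ R, g * r * g⁻¹ ∈ R) (hg' : ∀ r ∈ R, g⁻¹ * r * g ∈ R) : g ∈ Ma a := by
  intro Y
  rw [← hR, ← hR]
  constructor
  · intro h r hr
    have h1 := h _ (hg r hr)
    rw [mat_mul, mat_mul] at h1
    exact commute_mat.mp h1
  · intro h r hr
    have h1 := commute_mat (g := g).mpr (h _ (hg' r hr))
    rw [← mat_mul, ← mat_mul] at h1
    have : g * (g⁻¹ * r * g) * g⁻¹ = r := by group
    rwa [this] at h1

variable [CharP k 2]

theorem Ma_ne_top {a : k} (ha : a ≠ 0) : Ma a ≠ ⊤ := by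
  intro h
  obtain ⟨g, hg⟩ : ∃ g : U k, mat g = !![1, 0, 1; 0, 1, 0; 0, 0, 1] := by
    obtain ⟨g, hg⟩ := exists_U (![1, 0, 0] : Fin 3 → k) ![0, 1, 0] ![1, 0, 1] (by simp [B])
      (by simp [B]) (by simp [B]) (by simp [B]) (by simp [B])
      (by simp [B, CharTwo.add_self_eq_zero]) (by simp)
    refine ⟨g, ?_⟩
    apply Matrix.mulVec_injective
    funext v
    change ap g v = _
    rw [hg]
    ext i
    fin_cases i <;> simp [Matrix.mulVec, dotProduct, Fin.sum_univ_three]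
  have hg1 : g⁻¹ = g := by
    rw [inv_eq_iff_mul_eq_one]
    apply mat_inj
    rw [mat_mul, hg, mat_one]
    ext i j
    fin_cases i <;> fin_cases j <;>
      simp [Matrix.mul_apply, Fin.sum_univ_three, CharTwo.add_self_eq_zero]
  have hm : g ∈ Ma a := h ▸ Subgroup.mem_top g
  have h1 := (hm (X a)).mpr (Commute.refl _)
  rw [hg1, hg] at h1
  have e : ∀ i j : Fin 3, _ = _ := fun i j => congrFun (congrFun h1.eq i) j
  have e00 := e 0 0
  simp [X, Matrix.mul_apply, Fin.sum_univ_three] at e00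

section Noncube

variable {a : k} [Finite k] [UnitaryField k]

omit [CharP k 2] in
/-- Cubing is bijective on elements of norm one. -/
theorem exists_cube_of_norm_one [CharP k 2] {x : k} (hx : x * star x = 1) :
    ∃ y, y * star y = 1 ∧ y ^ 3 = x := by
  let S := {y : k // y * star y = 1}
  let f : S → S := fun y => ⟨y.1 ^ 3, by rw [star_pow, ← mul_pow, y.2, one_pow]⟩
  have hf : Function.Injective f := by
    intro y z h
    have h1 : y.1 ^ 3 = z.1 ^ 3 := congrArg Subtype.val h
    have hz : z.1 ≠ 0 := by
      intro h0
      have := z.2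
      rw [h0, zero_mul] at this
      exact zero_ne_one this
    have h2 : y.1 / z.1 = 1 := by
      apply norm_one_cube
      · rw [div_pow, h1, div_self (pow_ne_zero 3 hz)]
      · rw [star_div₀, div_mul_div_comm, y.2, z.2, div_one]
    apply Subtype.ext
    rw [div_eq_one_iff_eq hz] at h2
    exact h2
  obtain ⟨y, hy⟩ := Finite.surjective_of_injective hf ⟨x, hx⟩
  exact ⟨y.1, y.2, congrArg Subtype.val hy⟩

omit [CharP k 2] in
theorem norm_noncube [CharP k 2] (hc : ∀ b : k, b ^ 3 ≠ a) : ∀ b : k, b ^ 3 ≠ a * star a := by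
  intro b hb
  have ha : a ≠ 0 := fun h => hc 0 (by rw [h]; simp)
  have sa : star a ≠ 0 := star_ne_zero.mpr ha
  obtain ⟨y, _, hy⟩ := exists_cube_of_norm_one (x := star a / a) (by
    rw [star_div₀, star_star]; field_simp)
  have hs : star a = a * y ^ 3 := by rw [hy]; field_simp
  have hy0 : y ≠ 0 := fun h => sa (by rw [hs, h]; simp)
  have hb0 : b ≠ 0 := fun h => mul_ne_zero ha sa (by rw [← hb, h]; simp)
  apply hc (a * y / b)
  have : b ^ 3 = a ^ 2 * y ^ 3 := by rw [hb, hs]; ring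
  rw [div_pow, mul_pow, this]
  field_simp

/-- When `a` is not a cube, nonzero elements of `k[X a]` are invertible. -/
theorem Zm_inv (hc : ∀ b : k, b ^ 3 ≠ a) {x y z : k} (h0 : Zm a x y z ≠ 0) :
    ∃ Y, Y * Zm a x y z = 1 ∧ Zm a x y z * Y = 1 := by
  have hirr : Irreducible (Polynomial.X ^ 3 - Polynomial.C (a * star a)) :=
    X_pow_sub_C_irreducible_of_prime Nat.prime_three (norm_noncube hc)
  set P : Polynomial k := Polynomial.C x + Polynomial.C y * Polynomial.X +
    Polynomial.C z * Polynomial.X ^ 2 with hP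
  have hev : Polynomial.aeval (X a) P = Zm a x y z := by
    rw [hP]
    simp only [map_add, map_mul, Polynomial.aeval_C, Polynomial.aeval_X, map_pow,
      Algebra.algebraMap_eq_smul_one, smul_mul_assoc, one_mul]
    rw [X_eq, sq, Zm_mul]
    ext i j
    fin_cases i <;> fin_cases j <;> simp [Zm] <;> ring
  have hP0 : P ≠ 0 := by
    intro h
    rw [h, map_zero] at hev
    exact h0 hev.symm
  have hdeg : P.natDegree < 3 := by
    rw [hP]
    have : (Polynomial.C x + Polynomial.C y * Polynomial.X +
      Polynomial.C z * Polynomial.X ^ 2).natDegree ≤ 2 := by compute_degree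
    omega
  have hcop : IsCoprime (Polynomial.X ^ 3 - Polynomial.C (a * star a)) P := by
    rw [hirr.coprime_iff_not_dvd]
    intro hd
    have := Polynomial.natDegree_le_of_dvd hd hP0
    rw [Polynomial.natDegree_X_pow_sub_C] at this
    omega
  obtain ⟨u, v, huv⟩ := hcop
  have h1 := congrArg (Polynomial.aeval (X a)) huv
  have hQ : Polynomial.aeval (X a) (Polynomial.X ^ 3 - Polynomial.C (a * star a)) = 0 := by
    rw [map_sub, map_pow, Polynomial.aeval_X, Polynomial.aeval_C, X_cube,
      Algebra.algebraMap_eq_smul_one, sub_self]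
  rw [map_add, map_mul (Polynomial.aeval (X a)), map_mul (Polynomial.aeval (X a)), hQ, mul_zero, zero_add, hev, map_one] at h1
  refine ⟨_, h1, ?_⟩
  exact mul_eq_one_comm.mp h1

end Noncube

end Torus

section Torus2

variable {k : Type*} [Field k] [StarRing k]

/-- The stabilizer of the line spanned by the second basis vector. -/
def N (k : Type*) [Field k] [StarRing k] : Subgroup (U k) where
  carrier := {g | ∃ c : k, c ≠ 0 ∧ ap g ![0, 1, 0] = c • ![0, 1, 0]}
  one_mem' := ⟨1, one_ne_zero, by rw [ap_one, one_smul]⟩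
  mul_mem' := by
    rintro g h ⟨c, hc, e⟩ ⟨d, hd, e'⟩
    exact ⟨d * c, mul_ne_zero hd hc, by rw [ap_mul, e', ap_smul, e, smul_smul]⟩
  inv_mem' := by
    rintro g ⟨c, hc, e⟩
    refine ⟨c⁻¹, inv_ne_zero hc, ?_⟩
    have : ap g⁻¹ (ap g ![0, 1, 0]) = ![0, 1, 0] := ap_inv_ap _ _
    rw [e, ap_smul] at this
    calc _ = c⁻¹ • c • ap g⁻¹ ![0, 1, 0] := by
          rw [smul_smul, inv_mul_cancel₀ hc, one_smul]
      _ = _ := by rw [this]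

theorem mem_N {g : U k} : g ∈ N k ↔ ∃ c : k, c ≠ 0 ∧ ap g ![0, 1, 0] = c • ![0, 1, 0] := Iff.rfl

theorem mem_N' {g : U k} : g ∈ N k ↔ mat g 0 1 = 0 ∧ mat g 2 1 = 0 := by
  rw [mem_N]
  have e : ∀ i, ap g ![0, 1, 0] i = mat g i 1 := fun i => by
    simp [ap, Matrix.mulVec, dotProduct, Fin.sum_univ_three]
  constructor
  · rintro ⟨c, hc, h⟩
    rw [← e, ← e, h]
    simp
  · rintro ⟨h0, h2⟩
    have h : ap g ![0, 1, 0] = mat g 1 1 • ![0, 1, 0] := by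
      ext i
      rw [e]
      fin_cases i <;> simp [h0, h2]
    refine ⟨mat g 1 1, fun h1 => ?_, h⟩
    rw [h1, zero_smul] at h
    exact ap_ne_zero g (v := ![0, 1, 0]) (fun h => one_ne_zero (congrFun h 1)) h

variable [CharP k 2]

theorem mat_eq_of_ap {g : U k} {a b c : Fin 3 → k}
    (hg : ∀ v, ap g v = v 0 • a + v 1 • b + v 2 • c) :
    mat g = !![a 0, b 0, c 0; a 1, b 1, c 1; a 2, b 2, c 2] := by
  apply Matrix.mulVec_injective
  funext v
  change ap g v = _
  rw [hg]
  ext i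
  fin_cases i <;> simp [Matrix.mulVec, dotProduct, Fin.sum_univ_three] <;> ring

variable [Finite k] [UnitaryField k]

theorem N_ne_top : N k ≠ ⊤ := by
  intro h
  obtain ⟨b, hb⟩ := exists_trace_one (k := k)
  obtain ⟨g, hg⟩ := exists_U (![1, 0, 0] : Fin 3 → k) ![1, 1, 0] ![star b, 1, 1] (by simp [B])
    (by simp [B]) (by simp [B]) (by simp [B])
    (by simp [B, CharTwo.add_self_eq_zero]) (by simp [B]; grind) (by simp)
  have := (mem_N'.mp (h ▸ Subgroup.mem_top g)).1
  rw [mat_eq_of_ap hg] at this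
  simp at this

theorem exists_h : ∃ h : U k, mat h = !![om k, 0, 0; 0, 1, 0; 0, 0, om k ^ 2] := by
  have h1 := om_rel (k := k)
  have h2 := star_om (k := k)
  obtain ⟨g, hg⟩ := exists_U (![om k, 0, 0] : Fin 3 → k) ![0, 1, 0] ![0, 0, om k ^ 2] (by simp [B])
    (by simp [B]) (by simp [B, h2]; grind) (by simp [B]) (by simp [B]) (by simp [B])
    (by simp; grind)
  exact ⟨g, by rw [mat_eq_of_ap hg]; simp⟩

/-- The diagonal element of order three with eigenvalues the cube roots of unity. -/
noncomputable def h3 (k : Type*) [Field k] [StarRing k] [CharP k 2] [Finite k] [UnitaryField k] :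
    U k := (exists_h (k := k)).choose

theorem mat_h3 : mat (h3 k) = !![om k, 0, 0; 0, 1, 0; 0, 0, om k ^ 2] :=
  (exists_h (k := k)).choose_spec

theorem h3_cube : h3 k ^ 3 = 1 := by
  have h1 := om_rel (k := k)
  apply mat_inj
  rw [pow_succ, sq, mat_mul, mat_mul, mat_h3, mat_one]
  ext i j
  fin_cases i <;> fin_cases j <;> simp [Matrix.mul_apply, Fin.sum_univ_three] <;> grind

theorem h3_ne : h3 k ≠ 1 := by
  intro h
  have h1 := om_rel (k := k)
  have e : (mat (h3 k)) 0 0 = 1 := by rw [h, mat_one]; simp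
  rw [mat_h3] at e
  simp at e
  rw [e] at h1
  grind

theorem h3_inv : (h3 k)⁻¹ = h3 k ^ 2 := by
  rw [inv_eq_iff_mul_eq_one, ← pow_succ', h3_cube]

theorem mat_h3_sq : mat (h3 k ^ 2) = !![om k ^ 2, 0, 0; 0, 1, 0; 0, 0, om k] := by
  have h1 := om_rel (k := k)
  rw [sq, mat_mul, mat_h3]
  ext i j
  fin_cases i <;> fin_cases j <;> simp [Matrix.mul_apply, Fin.sum_univ_three] <;> grind

/-- The group of order three generated by `h3 k`. -/
noncomputable def H0 (k : Type*) [Field k] [StarRing k] [CharP k 2] [Finite k] [UnitaryField k] :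
    Subgroup (U k) := Subgroup.zpowers (h3 k)

theorem card_H0 : Nat.card (H0 k) = 3 := by
  unfold H0
  rw [Nat.card_zpowers]
  exact orderOf_eq_prime h3_cube h3_ne

theorem h3_mem : h3 k ∈ H0 k := Subgroup.mem_zpowers _

theorem mem_H0 {g : U k} : g ∈ H0 k ↔ g = 1 ∨ g = h3 k ∨ g = h3 k ^ 2 := by
  constructor
  · intro h
    have hf : IsOfFinOrder (h3 k) := isOfFinOrder_of_finite _
    obtain ⟨i, hi⟩ := (hf.mem_zpowers_iff_mem_range_orderOf).mp h |> Finset.mem_image.mp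
    rw [orderOf_eq_prime h3_cube h3_ne] at hi
    obtain ⟨hi, rfl⟩ := hi
    have : i < 3 := Finset.mem_range.mp hi
    interval_cases i
    · left; simp
    · right; left; simp
    · right; right; rfl
  · rintro (rfl | rfl | rfl)
    · exact one_mem _
    · exact h3_mem
    · exact pow_mem h3_mem 2

theorem h3_mem_N : h3 k ∈ N k := by
  rw [mem_N', mat_h3]
  simp

theorem H0_le_N : H0 k ≤ N k := by
  unfold H0
  rw [Subgroup.zpowers_le]
  exact h3_mem_N

theorem om_ne : om k ≠ 1 ∧ om k ≠ 0 ∧ om k ^ 2 ≠ 1 ∧ om k ^ 2 ≠ om k := by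
  have h1 := om_rel (k := k)
  refine ⟨fun h => ?_, fun h => ?_, fun h => ?_, fun h => ?_⟩
  · rw [h] at h1; grind
  · rw [h] at h1; grind
  · rw [h] at h1; grind
  · rw [h] at h1; grind

theorem mem_N_of_normalizes {g : U k} (hg : ∀ x ∈ H0 k, g * x * g⁻¹ ∈ H0 k) : g ∈ N k := by
  have h1 := om_ne (k := k)
  have h2 := om_rel (k := k)
  have hx := hg _ h3_mem
  have hne : g * h3 k * g⁻¹ ≠ 1 := by
    intro h
    apply h3_ne (k := k)
    have : h3 k = g⁻¹ * (g * h3 k * g⁻¹) * g := by group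
    rw [this, h]; group
  rw [mem_N']
  rcases mem_H0.mp hx with h | h | h
  · exact absurd h hne
  all_goals
    have e := congrArg mat (mul_inv_eq_iff_eq_mul.mp h)
    rw [mat_mul, mat_mul] at e
    simp only [mat_h3, mat_h3_sq] at e
    have e01 := congrFun (congrFun e 0) 1
    have e21 := congrFun (congrFun e 2) 1
    simp [Matrix.mul_apply, Fin.sum_univ_three] at e01 e21
    constructor <;> grind

/-- Matrices commuting with `h3 k` are diagonal. -/
theorem commute_h3 {g : U k} (hg : g * h3 k = h3 k * g) :
    mat g = !![mat g 0 0, 0, 0; 0, mat g 1 1, 0; 0, 0, mat g 2 2] := by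
  have h1 := om_ne (k := k)
  have h2 := om_rel (k := k)
  have e := congrArg mat hg
  rw [mat_mul, mat_mul, mat_h3] at e
  have e' : ∀ i j, _ = _ := fun i j => congrFun (congrFun e i) j
  have e01 := e' 0 1
  have e02 := e' 0 2
  have e10 := e' 1 0
  have e12 := e' 1 2
  have e20 := e' 2 0
  have e21 := e' 2 1
  clear e' e
  simp [Matrix.mul_apply, Fin.sum_univ_three] at e01 e02 e10 e12 e20 e21
  ext i j
  fin_cases i <;> fin_cases j <;> simp <;> grind

/-- The Sylow 3-subgroups of subgroups containing `H0 k` have order three: a group of order nine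
containing `H0 k` would be diagonal with entries ninth roots of unity, hence cube roots of unity. -/
theorem nine_not_dvd {L : Subgroup (U k)} (hL : H0 k ≤ L) : ¬ 9 ∣ Nat.card L := by
  intro h9
  have hp : Fact (Nat.Prime 3) := ⟨Nat.prime_three⟩
  have hc : Nat.card ((H0 k).subgroupOf L) = 3 ^ 1 := by
    exact (Nat.card_congr (Subgroup.subgroupOfEquivOfLe hL).toEquiv).trans card_H0
  obtain ⟨P, hP, hle⟩ := Sylow.exists_subgroup_card_pow_prime_le 3 (n := 1) (m := 2) h9 _ hc
    (by norm_num)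
  have hcomm : ∀ a b : P, a * b = b * a := IsPGroup.commutative_of_card_eq_prime_sq hP
  have hh : (⟨h3 k, hL h3_mem⟩ : L) ∈ P := hle (by
    rw [Subgroup.mem_subgroupOf]; exact h3_mem)
  have hPle : P ≤ (H0 k).subgroupOf L := by
    intro x hx
    rw [Subgroup.mem_subgroupOf]
    have hxh : (x : U k) * h3 k = h3 k * x := congrArg (fun z : P => ((z : L) : U k))
      (hcomm ⟨x, hx⟩ ⟨_, hh⟩)
    have hx9 : (x : U k) ^ 9 = 1 := by
      have : (⟨x, hx⟩ : P) ^ Nat.card P = 1 := pow_card_eq_one'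
      rw [hP] at this
      exact congrArg (fun z : P => ((z : L) : U k)) this
    generalize (x : U k) = g at hxh hx9
    have hd := commute_h3 hxh
    set α := mat g 0 0
    set β := mat g 1 1
    set γ := mat g 2 2
    have hap : ∀ v, ap g v = ![α * v 0, β * v 1, γ * v 2] := by
      intro v
      unfold ap
      rw [hd]
      ext i
      fin_cases i <;> simp [Matrix.mulVec, dotProduct, Fin.sum_univ_three]
    have hpow : ∀ n v, ap (g ^ n) v = ![α ^ n * v 0, β ^ n * v 1, γ ^ n * v 2] := by
      intro n
      induction n with
      | zero => intro v; rw [pow_zero, ap_one]; ext i; fin_cases i <;> simp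
      | succ n ih =>
        intro v
        rw [pow_succ', ap_mul, ih, hap]
        ext i
        fin_cases i <;> simp [pow_succ'] <;> ring
    have h9' : ∀ v, ![α ^ 9 * v 0, β ^ 9 * v 1, γ ^ 9 * v 2] = v := fun v => by
      rw [← hpow, hx9, ap_one]
    have hα9 : α ^ 9 = 1 := by simpa using congrFun (h9' ![1, 0, 0]) 0
    have hγ9 : γ ^ 9 = 1 := by simpa using congrFun (h9' ![0, 0, 1]) 2
    have hα := cube_root (UnitaryField.nine _ hα9)
    have hγ := cube_root (UnitaryField.nine _ hγ9)
    have hdet : α * β * γ = 1 := by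
      have := det_mat g
      rw [hd, Matrix.det_fin_three] at this
      simpa using this
    have hαγ : α * star γ = 1 := by
      have := B_ap g ![1, 0, 0] ![0, 0, 1]
      rw [hap, hap] at this
      simpa [B] using this
    have hs := star_om (k := k)
    have hr := om_rel (k := k)
    have hn := om_ne (k := k)
    have hsγ : star γ = γ := by
      rcases hγ with h | h | h <;> rw [h] <;> simp [hs]
    rw [hsγ] at hαγ
    have hβ : β = 1 := by grind
    rw [mem_H0]
    clear_value α β γ
    clear hap hpow h9' hsγ hs
    rcases hα with h | h | h
    · left
      apply mat_inj
      rw [hd, mat_one]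
      have : γ = 1 := by grind
      ext i j
      fin_cases i <;> fin_cases j <;> simp [h, hβ, this]
    · right; left
      apply mat_inj
      rw [hd, mat_h3, h, hβ]
      have : γ = om k ^ 2 := by grind
      rw [this]
    · right; right
      apply mat_inj
      rw [hd, mat_h3_sq, h, hβ]
      have : γ = om k := by grind
      rw [this]
  have := Subgroup.card_le_of_le hPle
  rw [hc, hP] at this
  norm_num at this

end Torus2

section Torus3

variable {k : Type*} [Field k] [StarRing k] [CharP k 2] [Finite k] [UnitaryField k]

theorem Zm_coord {a x y z x' y' z' : k} (ha : a ≠ 0) (h : Zm a x y z = Zm a x' y' z') :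
    x = x' ∧ y = y' ∧ z = z' := by
  have e : ∀ i j, _ = _ := fun i j => congrFun (congrFun h i) j
  have e1 := e 1 1
  have e2 := e 2 0
  have e3 := e 2 1
  simp [Zm, ha] at e1 e2 e3
  exact ⟨e1, e2, e3⟩

theorem h3_conj_X (a : k) : mat (h3 k) * X a * mat (h3 k)⁻¹ = om k • X a := by
  have h1 := om_rel (k := k)
  rw [h3_inv, mat_h3_sq, mat_h3]
  ext i j
  fin_cases i <;> fin_cases j <;>
    simp [X, Matrix.mul_apply, Fin.sum_univ_three] <;> grind

theorem H0_le_Ma (a : k) : H0 k ≤ Ma a := by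
  unfold H0
  rw [Subgroup.zpowers_le]
  intro Y
  rw [← Commute.smul_right_iff₀ (om_ne (k := k)).2.1, ← h3_conj_X]
  exact commute_mat

/-- For `a` not a cube, the normalizer of the field `k[X a]` acts on it through cube roots of unity:
these are the only ratios between cube roots of `a * star a`. -/
theorem exists_factor {a : k} (hc : ∀ b : k, b ^ 3 ≠ a) {g : U k} (hg : g ∈ Ma a) :
    ∃ x ∈ H0 k, ∃ g0, g = x * g0 ∧ Commute (mat g0) (X a) := by
  have ha : a ≠ 0 := fun h => hc 0 (by rw [h]; simp)
  have hr := om_rel (k := k)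
  obtain ⟨x, y, z, hY⟩ := (comm_X ha).mp ((hg (X a)).mpr (Commute.refl _))
  have hcube : (mat g * X a * mat g⁻¹) ^ 3 = Zm a (a * star a) 0 0 := by
    have e : ∀ Y Z : Matrix (Fin 3) (Fin 3) k, (mat g * Y * mat g⁻¹) * (mat g * Z * mat g⁻¹) =
        mat g * (Y * Z) * mat g⁻¹ := by
      intro Y Z
      calc _ = mat g * Y * (mat g⁻¹ * mat g) * Z * mat g⁻¹ := by simp only [mul_assoc]
        _ = _ := by rw [mat_inv_mul, mul_one]; simp only [mul_assoc]
    rw [pow_succ, sq, e, e, ← sq, ← pow_succ, X_cube, mul_smul_comm, mul_one, smul_mul_assoc,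
      mat_mul_inv]
    ext i j
    fin_cases i <;> fin_cases j <;> simp [Zm]
  rw [hY, pow_succ, sq, Zm_mul, Zm_mul] at hcube
  obtain ⟨e1, e2, e3⟩ := Zm_coord ha hcube
  clear hcube
  have key : ∃ w : k, (w = 1 ∨ w = om k ∨ w = om k ^ 2) ∧ Zm a x (y + w) z = 0 := by
    by_contra hno
    push Not at hno
    obtain ⟨V0, h0, _⟩ := Zm_inv hc (hno 1 (Or.inl rfl))
    obtain ⟨V1, h1, _⟩ := Zm_inv hc (hno (om k) (Or.inr (Or.inl rfl)))
    obtain ⟨V2, h2, _⟩ := Zm_inv hc (hno (om k ^ 2) (Or.inr (Or.inr rfl)))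
    have hprod : Zm a x (y + 1) z * (Zm a x (y + om k) z * Zm a x (y + om k ^ 2) z) =
        Zm a 0 0 0 := by
      rw [Zm_mul, Zm_mul]
      generalize om k = w at *
      generalize hn : a * star a = n at *
      congr 1 <;> grind
    have hz : Zm a 0 0 0 = 0 := by
      ext i j
      fin_cases i <;> fin_cases j <;> simp [Zm]
    rw [hz] at hprod
    have : (1 : Matrix (Fin 3) (Fin 3) k) = 0 := by
      calc (1 : Matrix (Fin 3) (Fin 3) k) = V2 * (V1 * (V0 * Zm a x (y + 1) z) *
            Zm a x (y + om k) z) * Zm a x (y + om k ^ 2) z := by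
            rw [h0, mul_one, h1, mul_one, h2]
        _ = V2 * V1 * V0 * (Zm a x (y + 1) z * (Zm a x (y + om k) z *
            Zm a x (y + om k ^ 2) z)) := by simp only [mul_assoc]
        _ = 0 := by rw [hprod, mul_zero]
    exact one_ne_zero this
  obtain ⟨w, hw, hz⟩ := key
  have hz' : Zm a x (y + w) z = Zm a 0 0 0 := by
    rw [hz]
    ext i j
    fin_cases i <;> fin_cases j <;> simp [Zm]
  obtain ⟨rfl, hy, rfl⟩ := Zm_coord ha hz'
  have hyw : y = w := CharTwo.add_eq_zero.mp hy
  subst hyw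
  have hYX : mat g * X a * mat g⁻¹ = y • X a := by
    rw [hY, X_eq]
    ext i j
    fin_cases i <;> fin_cases j <;> simp [Zm] <;> ring
  have hhX : ∀ i : ℕ, mat (h3 k ^ i) * X a * mat (h3 k ^ i)⁻¹ = om k ^ i • X a := by
    intro i
    induction i with
    | zero => simp [mat_one]
    | succ i ih =>
      rw [pow_succ', mul_inv_rev, mat_mul, mat_mul]
      calc _ = mat (h3 k) * (mat (h3 k ^ i) * X a * mat (h3 k ^ i)⁻¹) * mat (h3 k)⁻¹ := by
            simp only [mul_assoc]
        _ = _ := by rw [ih, mul_smul_comm, smul_mul_assoc, h3_conj_X, smul_smul, pow_succ]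
  obtain ⟨i, hi⟩ : ∃ i : ℕ, y = om k ^ i := by
    rcases hw with h | h | h
    · exact ⟨0, by rw [h, pow_zero]⟩
    · exact ⟨1, by rw [h, pow_one]⟩
    · exact ⟨2, h⟩
  refine ⟨h3 k ^ i, pow_mem h3_mem i, (h3 k ^ i)⁻¹ * g, by group, ?_⟩
  have h1 := hhX i
  rw [← hi, ← hYX] at h1
  rw [mat_mul]
  have h2 : X a * mat ((h3 k ^ i)⁻¹) = mat ((h3 k ^ i)⁻¹) * (mat g * X a * mat g⁻¹) := by
    rw [← h1, ← mul_assoc, ← mul_assoc, mat_inv_mul, one_mul]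
  change _ * _ = _ * _
  rw [← mul_assoc, h2]
  calc _ = mat (h3 k ^ i)⁻¹ * (mat g * X a) := by simp only [mul_assoc]
    _ = mat (h3 k ^ i)⁻¹ * (mat g * X a * (mat g⁻¹ * mat g)) := by rw [mat_inv_mul, mul_one]
    _ = _ := by simp only [mul_assoc]

theorem Ma_inf_N {a : k} (hc : ∀ b : k, b ^ 3 ≠ a) : Ma a ⊓ N k = H0 k := by
  have ha : a ≠ 0 := fun h => hc 0 (by rw [h]; simp)
  apply le_antisymm
  · rintro g ⟨hg, hgN⟩
    obtain ⟨x, hx, g0, rfl, hg0⟩ := exists_factor hc hg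
    have h0N : g0 ∈ N k := (Subgroup.mul_mem_cancel_left _ (H0_le_N hx)).mp hgN
    obtain ⟨u, y, z, hm⟩ := (comm_X ha).mp hg0
    obtain ⟨e1, e2⟩ := mem_N'.mp h0N
    rw [hm] at e1 e2
    simp [Zm, ha] at e1 e2
    subst e1 e2
    have hdet := det_mat g0
    rw [hm, Matrix.det_fin_three] at hdet
    simp [Zm] at hdet
    have hB := B_ap g0 ![1, 0, 0] ![0, 0, 1]
    unfold ap at hB
    rw [hm] at hB
    simp [B, Zm, Matrix.mulVec, dotProduct, Fin.sum_univ_three] at hB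
    have hu : u = 1 := norm_one_cube (by rw [← hdet]; ring) hB
    have : g0 = 1 := by
      apply mat_inj
      rw [hm, hu, mat_one]
      ext i j
      fin_cases i <;> fin_cases j <;> simp [Zm]
    rw [this, mul_one]
    exact hx
  · exact le_inf (H0_le_Ma a) H0_le_N

/-- An element of `H0 k` commuting with `X a` is trivial. -/
theorem H0_commute {a : k} {g : U k} (hg : g ∈ H0 k) (h : Commute (mat g) (X a)) : g = 1 := by
  have hn := om_ne (k := k)
  have e := congrFun (congrFun h.eq 2) 0
  rcases mem_H0.mp hg with rfl | rfl | rfl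
  · rfl
  · rw [mat_h3] at e
    simp [X, Matrix.mul_apply, Fin.sum_univ_three] at e
    exact absurd e hn.2.2.2
  · rw [mat_h3_sq] at e
    simp [X, Matrix.mul_apply, Fin.sum_univ_three] at e
    exact absurd e.symm hn.2.2.2

/-- A nontrivial unitary element of `k[X a]`: a scalar multiple of a quotient `w / star w`. -/
theorem exists_torus_elt {a : k} (hc : ∀ b : k, b ^ 3 ≠ a) :
    ∃ g : U k, g ≠ 1 ∧ Commute (mat g) (X a) := by
  have ha : a ≠ 0 := fun h => hc 0 (by rw [h]; simp)
  obtain ⟨s, hs⟩ := UnitaryField.ns (k := k)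
  have hne : ∀ s : k, Zm a 1 s 0 ≠ 0 := by
    intro s h
    have := congrFun (congrFun h 1) 1
    simp [Zm] at this
  obtain ⟨W, hW, hW'⟩ := Zm_inv hc (hne (star s))
  obtain ⟨V, hV, hV'⟩ := Zm_inv hc (hne s)
  have hadj : ∀ (s : k) (v w : Fin 3 → k), B ((Zm a 1 s 0).mulVec v) w =
      B v ((Zm a 1 (star s) 0).mulVec w) := by
    intro s v w
    simp [B, Zm, Matrix.mulVec, dotProduct, Fin.sum_univ_three]
    ring
  have hdst : (Zm a 1 (star s) 0).det = star (Zm a 1 s 0).det := by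
    rw [Matrix.det_fin_three, Matrix.det_fin_three]
    simp [Zm, -mul_eq_mul_left_iff, -mul_eq_mul_right_iff]
    ring
  set d := (Zm a 1 s 0).det with hd
  have hd0 : d ≠ 0 := by
    intro h
    have := congrArg Matrix.det hV
    rw [Matrix.det_mul, ← hd, h, mul_zero, Matrix.det_one] at this
    exact zero_ne_one this
  have hds : star d ≠ 0 := star_ne_zero.mpr hd0
  have hdW : W.det = (star d)⁻¹ := by
    have := congrArg Matrix.det hW
    rw [Matrix.det_mul, hdst, Matrix.det_one] at this
    exact eq_inv_of_mul_eq_one_left this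
  obtain ⟨c, hcn, hc3⟩ := exists_cube_of_norm_one (x := star d / d) (by
    rw [star_div₀, star_star]; field_simp)
  let M : Matrix (Fin 3) (Fin 3) k := c • (Zm a 1 s 0 * W)
  have hMdet : M.det = 1 := by
    simp only [M, Matrix.det_smul, Fintype.card_fin, Matrix.det_mul]
    rw [hc3, hdW, ← hd]
    field_simp
  have hcomm : Commute (Zm a 1 s 0) (Zm a 1 (star s) 0) := Zm_comm _ _ _ _ _ _ _
  have hMB : ∀ v w, B (M.mulVec v) (M.mulVec w) = B v w := by
    intro v w
    have hsw : Zm a 1 (star s) 0 * (Zm a 1 s 0 * W) = Zm a 1 s 0 := by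
      rw [← mul_assoc, ← hcomm.eq, mul_assoc, hW', mul_one]
    simp only [M, Matrix.smul_mulVec]
    rw [B_smul, B_smul', ← mul_assoc, mul_comm (star c), hcn, one_mul, ← Matrix.mulVec_mulVec,
      hadj, Matrix.mulVec_mulVec, hsw]
    have := hadj (star s) (W.mulVec v) w
    rw [star_star] at this
    rw [← this, Matrix.mulVec_mulVec, hW', Matrix.one_mulVec]
  refine ⟨⟨⟨M, hMdet⟩, hMB⟩, ?_, ?_⟩
  · intro h
    have h1 : M = 1 := congrArg mat h
    have h2 : c • Zm a 1 s 0 = Zm a 1 (star s) 0 := by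
      calc c • Zm a 1 s 0 = M * Zm a 1 (star s) 0 := by
            simp only [M]
            rw [smul_mul_assoc, mul_assoc, hW, mul_one]
        _ = _ := by rw [h1, one_mul]
    have e1 := congrFun (congrFun h2 1) 1
    have e2 := congrFun (congrFun h2 2) 0
    simp [Zm] at e1 e2
    rw [e1, one_mul] at e2
    exact hs e2.symm
  · change Commute M (X a)
    have hX : ∀ s, Commute (Zm a 1 s 0) (X a) := fun s => by rw [X_eq]; exact Zm_comm _ _ _ _ _ _ _
    have hWX : Commute W (X a) := by
      change _ * _ = _ * _
      calc W * X a = W * (X a * Zm a 1 (star s) 0) * W := by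
            rw [mul_assoc, mul_assoc, hW', mul_one]
        _ = W * Zm a 1 (star s) 0 * X a * W := by rw [← (hX _).eq]; simp only [mul_assoc]
        _ = _ := by rw [hW, one_mul]
    exact ((hX s).mul_left hWX).smul_left c

theorem Ma_ne_H0 {a : k} (hc : ∀ b : k, b ^ 3 ≠ a) : Ma a ≠ H0 k := by
  intro h
  have ha : a ≠ 0 := fun h => hc 0 (by rw [h]; simp)
  obtain ⟨g, hg1, hg⟩ := exists_torus_elt hc
  exact hg1 (H0_commute (h ▸ mem_Ma_of_commute ha hg) hg)

/-- For `a` a cube, the normalizer of `k[X a]` contains an involution fixing the second basis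
vector. -/
theorem Ma_inf_N_cube {a b : k} (ha : a ≠ 0) (hb : b ^ 3 = a) : Ma a ⊓ N k ≠ H0 k := by
  intro h
  have hb0 : b ≠ 0 := by rintro rfl; apply ha; rw [← hb]; simp
  have sb0 : star b ≠ 0 := star_ne_zero.mpr hb0
  set m := b * star b with hm
  have hm0 : m ≠ 0 := mul_ne_zero hb0 sb0
  have hsm : star m = m := star_norm b
  have hm3 : a * star a = m ^ 3 := by rw [← hb, hm, star_pow]; ring
  obtain ⟨t, ht⟩ := exists_U (![0, 0, m⁻¹] : Fin 3 → k) ![0, 1, 0] ![m, 0, 0] (by simp [B])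
    (by simp [B]) (by simp [B, hsm, hm0]) (by simp [B]) (by simp [B]) (by simp [B])
    (by simp [hm0])
  replace ht := mat_eq_of_ap ht
  simp at ht
  clear_value m
  have htt : t * t = 1 := by
    apply mat_inj
    rw [mat_mul, ht, mat_one]
    ext i j
    fin_cases i <;> fin_cases j <;> simp [Matrix.mul_apply, Fin.sum_univ_three, hm0]
  have hti : t⁻¹ = t := inv_eq_of_mul_eq_one_left htt
  have hZ : ∀ x y z, mat t * Zm a x y z * mat t = Zm a x (m * z) (m⁻¹ * y) := by
    intro x y z
    rw [ht]
    ext i j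
    fin_cases i <;> fin_cases j <;>
      simp [Zm, Matrix.mul_apply, Fin.sum_univ_three, hm3] <;> field_simp
  have hone : ∀ Y, Commute Y (X a) → Commute (mat t * Y * mat t) (X a) := by
    intro Y hY
    obtain ⟨x, y, z, rfl⟩ := (comm_X ha).mp hY
    rw [hZ, X_eq]
    exact Zm_comm _ _ _ _ _ _ _
  have htM : t ∈ Ma a := by
    intro Y
    rw [hti]
    refine ⟨fun h => ?_, hone Y⟩
    have h1 := hone _ h
    have : mat t * (mat t * Y * mat t) * mat t = Y := by
      calc _ = (mat t * mat t) * Y * (mat t * mat t) := by simp only [mul_assoc]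
        _ = Y := by rw [← mat_mul, htt, mat_one, one_mul, mul_one]
    rwa [this] at h1
  have htN : t ∈ N k := by
    rw [mem_N', ht]
    simp
  have htH : t ∈ H0 k := h ▸ ⟨htM, htN⟩
  have hn := om_ne (k := k)
  have e : mat t 0 0 = 0 := by rw [ht]; simp
  rcases mem_H0.mp htH with h | h | h
  · rw [h, mat_one] at e
    simp at e
  · rw [h, mat_h3] at e
    simp at e
    exact hn.2.1 e
  · rw [h, mat_h3_sq] at e
    simp at e
    exact hn.2.1 e

end Torus3

section Torus4

variable {k : Type*} [Field k] [StarRing k]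

/-- The adjoint of a matrix with respect to the form `B`. -/
def adj (M : Matrix (Fin 3) (Fin 3) k) : Matrix (Fin 3) (Fin 3) k :=
  Matrix.of fun i j => star (M j.rev i.rev)

theorem adj_mul (M M' : Matrix (Fin 3) (Fin 3) k) : adj (M * M') = adj M' * adj M := by
  have r0 : Fin.rev (0 : Fin 3) = 2 := rfl
  have r1 : Fin.rev (1 : Fin 3) = 1 := rfl
  have r2 : Fin.rev (2 : Fin 3) = 0 := rfl
  ext i j
  simp only [adj, Matrix.of_apply, Matrix.mul_apply, Fin.sum_univ_three, star_add, star_mul', r0,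
    r1, r2]
  ring

theorem adj_adj (M : Matrix (Fin 3) (Fin 3) k) : adj (adj M) = M := by
  ext i j
  simp [adj]

theorem adj_mat (g : U k) : adj (mat g) = mat g⁻¹ := by
  have h : adj (mat g) * mat g = 1 := by
    have r0 : Fin.rev (0 : Fin 3) = 2 := rfl
    have r1 : Fin.rev (1 : Fin 3) = 1 := rfl
    have r2 : Fin.rev (2 : Fin 3) = 0 := rfl
    ext i j
    have e := B_ap g (Pi.single j 1) (Pi.single i.rev 1)
    simp only [ap, B, Matrix.mulVec_single_one, Matrix.col_apply] at e
    simp only [adj, Matrix.of_apply, Matrix.mul_apply, Fin.sum_univ_three, r0, r1, r2]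
    calc _ = mat g 0 j * star (mat g 2 i.rev) + mat g 1 j * star (mat g 1 i.rev) +
          mat g 2 j * star (mat g 0 i.rev) := by ring
      _ = _ := by
        rw [e]
        fin_cases i <;> fin_cases j <;> simp [Pi.single_apply, r0, r1, r2]
  calc adj (mat g) = adj (mat g) * (mat g * mat g⁻¹) := by rw [mat_mul_inv, mul_one]
    _ = _ := by rw [← mul_assoc, h, one_mul]

omit [StarRing k] in
/-- Components of a matrix under conjugation by `diag(w, 1, w²)`. -/
theorem cyc_part [CharP k 2] {w : k} (hw : w ^ 2 + w + 1 = 0) (m : Matrix (Fin 3) (Fin 3) k) :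
    m + w ^ 2 • (!![w, 0, 0; 0, 1, 0; 0, 0, w ^ 2] * m * !![w ^ 2, 0, 0; 0, 1, 0; 0, 0, w]) +
      w • (!![w, 0, 0; 0, 1, 0; 0, 0, w ^ 2] *
        (!![w, 0, 0; 0, 1, 0; 0, 0, w ^ 2] * m * !![w ^ 2, 0, 0; 0, 1, 0; 0, 0, w]) *
        !![w ^ 2, 0, 0; 0, 1, 0; 0, 0, w]) = !![0, m 0 1, 0; 0, 0, m 1 2; m 2 0, 0, 0] := by
  have h2 : (2 : k) = 0 := CharTwo.two_eq_zero
  have h3 : w ^ 3 = 1 := by linear_combination (w - 1) * hw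
  have d1 : (!![w, 0, 0; 0, 1, 0; 0, 0, w ^ 2] : Matrix (Fin 3) (Fin 3) k) =
      Matrix.diagonal ![w, 1, w ^ 2] := by
    ext i j
    fin_cases i <;> fin_cases j <;> simp
  have d2 : (!![w ^ 2, 0, 0; 0, 1, 0; 0, 0, w] : Matrix (Fin 3) (Fin 3) k) =
      Matrix.diagonal ![w ^ 2, 1, w] := by
    ext i j
    fin_cases i <;> fin_cases j <;> simp
  rw [d1, d2]
  ext i j
  simp only [Matrix.add_apply, Matrix.smul_apply, Matrix.diagonal_mul, Matrix.mul_diagonal,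
    smul_eq_mul]
  fin_cases i <;> fin_cases j <;> simp <;>
    generalize m _ _ = x <;> grind

omit [StarRing k] in
theorem cyc_part' [CharP k 2] {w : k} (hw : w ^ 2 + w + 1 = 0) (m : Matrix (Fin 3) (Fin 3) k) :
    m + w • (!![w, 0, 0; 0, 1, 0; 0, 0, w ^ 2] * m * !![w ^ 2, 0, 0; 0, 1, 0; 0, 0, w]) +
      w ^ 2 • (!![w, 0, 0; 0, 1, 0; 0, 0, w ^ 2] *
        (!![w, 0, 0; 0, 1, 0; 0, 0, w ^ 2] * m * !![w ^ 2, 0, 0; 0, 1, 0; 0, 0, w]) *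
        !![w ^ 2, 0, 0; 0, 1, 0; 0, 0, w]) = !![0, 0, m 0 2; m 1 0, 0, 0; 0, m 2 1, 0] := by
  have h2 : (2 : k) = 0 := CharTwo.two_eq_zero
  have h3 : w ^ 3 = 1 := by linear_combination (w - 1) * hw
  have d1 : (!![w, 0, 0; 0, 1, 0; 0, 0, w ^ 2] : Matrix (Fin 3) (Fin 3) k) =
      Matrix.diagonal ![w, 1, w ^ 2] := by
    ext i j
    fin_cases i <;> fin_cases j <;> simp
  have d2 : (!![w ^ 2, 0, 0; 0, 1, 0; 0, 0, w] : Matrix (Fin 3) (Fin 3) k) =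
      Matrix.diagonal ![w ^ 2, 1, w] := by
    ext i j
    fin_cases i <;> fin_cases j <;> simp
  rw [d1, d2]
  ext i j
  simp only [Matrix.add_apply, Matrix.smul_apply, Matrix.diagonal_mul, Matrix.mul_diagonal,
    smul_eq_mul]
  fin_cases i <;> fin_cases j <;> simp <;>
    generalize m _ _ = x <;> grind

omit [StarRing k] in
theorem cyc_cube (x y z : k) : !![0, x, 0; 0, 0, y; z, 0, 0] ^ 3 = (x * y * z) • 1 := by
  rw [pow_succ, _root_.sq]
  ext i j
  fin_cases i <;> fin_cases j <;> simp [Matrix.mul_apply, Fin.sum_univ_three, mul_comm, mul_left_comm]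

omit [StarRing k] in
theorem cyc_cube' (x y z : k) : !![0, 0, x; y, 0, 0; 0, z, 0] ^ 3 = (x * y * z) • 1 := by
  rw [pow_succ, _root_.sq]
  ext i j
  fin_cases i <;> fin_cases j <;> simp [Matrix.mul_apply, Fin.sum_univ_three, mul_comm, mul_left_comm]

variable [CharP k 2] [Finite k] [UnitaryField k] {R : Subgroup (U k)}

/-- The elements `Y` of the algebra generated by `R` used below: they lie in the bicommutant of `R`,
preserve every `R`-invariant subspace, and are fixed by `Y ↦ Y ^ (2 ^ j)`, so are not nilpotent. -/
structure InAlg (R : Subgroup (U k)) (j : ℕ) (Y : Matrix (Fin 3) (Fin 3) k) : Prop where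
  comm : ∀ Z, (∀ r ∈ R, Commute (mat r) Z) → Commute Y Z
  pow : Y ^ 2 ^ j = Y
  inv : ∀ W : Submodule k (Fin 3 → k), (∀ r ∈ R, ∀ w ∈ W, ap r w ∈ W) → ∀ w ∈ W, Y.mulVec w ∈ W

omit [CharP k 2] [Finite k] [UnitaryField k] in
theorem InAlg.commute (hab : ∀ x ∈ R, ∀ y ∈ R, x * y = y * x) {j : ℕ}
    {Y Z : Matrix (Fin 3) (Fin 3) k} (hY : InAlg R j Y) (hZ : InAlg R j Z) : Commute Y Z := by
  apply hY.comm
  intro r hr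
  refine (hZ.comm _ fun s hs => ?_).symm
  change _ * _ = _ * _
  rw [← mat_mul, ← mat_mul, hab s hs r hr]

omit [Finite k] [UnitaryField k] in
theorem InAlg.add (hab : ∀ x ∈ R, ∀ y ∈ R, x * y = y * x) {j : ℕ}
    {Y Z : Matrix (Fin 3) (Fin 3) k} (hY : InAlg R j Y) (hZ : InAlg R j Z) :
    InAlg R j (Y + Z) where
  comm := fun T hT => (hY.comm T hT).add_left (hZ.comm T hT)
  pow := by
    rw [add_pow_char_pow_of_commute 2 j (hY.commute hab hZ), hY.pow, hZ.pow]
  inv := fun W hW w hw => by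
    rw [Matrix.add_mulVec]
    exact W.add_mem (hY.inv W hW w hw) (hZ.inv W hW w hw)

omit [CharP k 2] [Finite k] [UnitaryField k] in
theorem InAlg.smul {j : ℕ} (hj : ∀ x : k, x ^ 2 ^ j = x) {Y : Matrix (Fin 3) (Fin 3) k}
    (hY : InAlg R j Y) (c : k) : InAlg R j (c • Y) where
  comm := fun T hT => (hY.comm T hT).smul_left c
  pow := by rw [smul_pow, hY.pow, hj]
  inv := fun W hW w hw => by
    rw [Matrix.smul_mulVec]
    exact W.smul_mem c (hY.inv W hW w hw)

omit [CharP k 2] [Finite k] [UnitaryField k] in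
theorem InAlg.sq {j : ℕ} {Y : Matrix (Fin 3) (Fin 3) k} (hY : InAlg R j Y) :
    InAlg R j (Y ^ 2) where
  comm := fun T hT => (hY.comm T hT).pow_left 2
  pow := by rw [← pow_mul, mul_comm, pow_mul, hY.pow]
  inv := fun W hW w hw => by
    rw [_root_.sq, ← Matrix.mulVec_mulVec]
    exact hY.inv W hW _ (hY.inv W hW w hw)

omit [UnitaryField k] in
/-- A power of the Frobenius map that is trivial both on `k` and on exponents of elements of `R`. -/
theorem exists_frob (hodd : Odd (Nat.card R)) :
    ∃ j, 2 ≤ j ∧ (∀ x : k, x ^ 2 ^ j = x) ∧ ∀ r ∈ R, r ^ 2 ^ j = r := by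
  let _ : Fintype k := Fintype.ofFinite k
  obtain ⟨d, _, hd⟩ := FiniteField.card k 2
  set e := Nat.totient (Nat.card R) with he
  have he0 : 0 < e := Nat.totient_pos.mpr Nat.card_pos
  have hd0 : 0 < (d : ℕ) := d.2
  refine ⟨2 * d * e, by nlinarith, fun x => ?_, fun r hr => ?_⟩
  · have := FiniteField.pow_card_pow (K := k) (2 * e) x
    rw [hd, ← pow_mul] at this
    rw [show 2 * (d : ℕ) * e = d * (2 * e) by ring]
    exact this
  · have h1 : 2 ^ (2 * d * e) ≡ 1 [MOD Nat.card R] := by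
      rw [mul_comm, pow_mul]
      have := (Nat.ModEq.pow_totient (Nat.coprime_two_left.mpr hodd)).pow (2 * d)
      rwa [one_pow] at this
    have h2 : orderOf r ∣ Nat.card R := Subgroup.orderOf_dvd_natCard R hr
    calc r ^ 2 ^ (2 * d * e) = r ^ 1 := pow_eq_pow_iff_modEq.mpr (h1.of_dvd h2)
      _ = r := pow_one r

/-- An abelian group `R` of odd order normalized, and not centralized, by `h3 k` has commutant
`k[X a]` for some `a`: decomposing an element of `R` into eigenvectors for conjugation by `h3 k`
produces a weighted cyclic permutation matrix in the algebra generated by `R`, and since that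
algebra is commutative and closed under adjoints, its weights are those of a scaled `X a`. -/
theorem exists_singer (hab : ∀ x ∈ R, ∀ y ∈ R, x * y = y * x) (hodd : Odd (Nat.card R))
    (hn : ∀ r ∈ R, h3 k * r * (h3 k)⁻¹ ∈ R) {r : U k} (hr : r ∈ R) (hne : r * h3 k ≠ h3 k * r) :
    ∃ a : k, a ≠ 0 ∧ (∀ Y, (∀ r ∈ R, Commute (mat r) Y) ↔ Commute Y (X a)) ∧
      ∀ W : Submodule k (Fin 3 → k), (∀ r ∈ R, ∀ w ∈ W, ap r w ∈ W) →
        ∀ w ∈ W, (X a).mulVec w ∈ W := by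
  obtain ⟨j, hj2, hj, hjR⟩ := exists_frob (k := k) hodd
  have hr1 := om_rel (k := k)
  have hom := om_ne (k := k)
  have hR : ∀ s ∈ R, InAlg R j (mat s) := fun s hs =>
    { comm := fun Z hZ => hZ s hs
      pow := by
        have : ∀ n : ℕ, mat s ^ n = mat (s ^ n) := by
          intro n
          induction n with
          | zero => rw [pow_zero, pow_zero, mat_one]
          | succ n ih => rw [pow_succ, pow_succ, mat_mul, ih]
        rw [this, hjR s hs]
      inv := fun W hW w hw => hW s hs w hw }
  have hm1 := hR _ hr
  have hm2 := hR _ (hn _ hr)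
  have hm3 := hR _ (hn _ (hn _ hr))
  set m := mat r with hm
  set D : Matrix (Fin 3) (Fin 3) k := !![om k, 0, 0; 0, 1, 0; 0, 0, om k ^ 2] with hD
  set D' : Matrix (Fin 3) (Fin 3) k := !![om k ^ 2, 0, 0; 0, 1, 0; 0, 0, om k] with hD'
  have e2 : mat (h3 k * r * (h3 k)⁻¹) = D * m * D' := by
    rw [mat_mul, mat_mul, h3_inv, mat_h3_sq, mat_h3]
  have e3 : mat (h3 k * (h3 k * r * (h3 k)⁻¹) * (h3 k)⁻¹) = D * (D * m * D') * D' := by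
    rw [← e2, mat_mul, mat_mul, h3_inv, mat_h3_sq, mat_h3]
  rw [e2] at hm2
  rw [e3] at hm3
  -- the two components on which conjugation by `h3 k` acts nontrivially
  have hc1 := (hm1.add hab (hm2.smul hj (om k ^ 2))).add hab (hm3.smul hj (om k))
  have hc2 := (hm1.add hab (hm2.smul hj (om k))).add hab (hm3.smul hj (om k ^ 2))
  have hc1' := cyc_part hr1 m
  have hc2' := cyc_part' hr1 m
  rw [hc1'] at hc1
  rw [hc2'] at hc2
  have hnil : ∀ Y : Matrix (Fin 3) (Fin 3) k, InAlg R j Y → Y ^ 3 = 0 → Y = 0 := by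
    intro Y hY h3
    rw [← hY.pow]
    apply pow_eq_zero_of_le _ h3
    calc 3 ≤ 2 ^ 2 := by norm_num
      _ ≤ 2 ^ j := Nat.pow_le_pow_right (by norm_num) hj2
  have hcyc : ∀ α β γ : k, InAlg R j !![0, α, 0; 0, 0, β; γ, 0, 0] → ¬ (α = 0 ∧ β = 0 ∧ γ = 0) →
      α * β * γ ≠ 0 := by
    intro α β γ hY h0 h
    apply h0
    have := hnil _ hY (by rw [cyc_cube, h, zero_smul])
    exact ⟨by simpa using congrFun (congrFun this 0) 1, by simpa using congrFun (congrFun this 1) 2,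
      by simpa using congrFun (congrFun this 2) 0⟩
  have key : ∃ α β γ : k, InAlg R j !![0, α, 0; 0, 0, β; γ, 0, 0] ∧ α * β * γ ≠ 0 := by
    by_cases h1 : m 0 1 = 0 ∧ m 1 2 = 0 ∧ m 2 0 = 0
    · by_cases h2 : m 0 2 = 0 ∧ m 1 0 = 0 ∧ m 2 1 = 0
      · exfalso
        apply hne
        apply mat_inj
        rw [mat_mul, mat_mul, mat_h3, ← hm]
        obtain ⟨a1, a2, a3⟩ := h1
        obtain ⟨b1, b2, b3⟩ := h2
        ext i j
        fin_cases i <;> fin_cases j <;>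
          simp [Matrix.mul_apply, Fin.sum_univ_three, a1, a2, a3, b1, b2, b3, mul_comm]
      · refine ⟨m 0 2 * m 2 1, m 1 0 * m 0 2, m 2 1 * m 1 0, ?_, ?_⟩
        · have := hc2.sq
          have e : (!![0, 0, m 0 2; m 1 0, 0, 0; 0, m 2 1, 0] : Matrix (Fin 3) (Fin 3) k) ^ 2 =
              !![0, m 0 2 * m 2 1, 0; 0, 0, m 1 0 * m 0 2; m 2 1 * m 1 0, 0, 0] := by
            rw [_root_.sq]
            ext i j
            fin_cases i <;> fin_cases j <;> simp [Matrix.mul_apply, Fin.sum_univ_three]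
          rwa [e] at this
        · intro h
          apply h2
          have := hnil _ hc2 (by
            rw [cyc_cube', show m 0 2 * m 1 0 * m 2 1 = m 0 2 * m 2 1 * m 1 0 by ring]
            have h' : m 0 2 * m 2 1 * m 1 0 = 0 := by
              have h4 : (m 0 2 * m 2 1 * m 1 0) ^ 2 = 0 := by linear_combination h
              exact pow_eq_zero_iff (two_ne_zero) |>.mp h4
            rw [h', zero_smul])
          exact ⟨by simpa using congrFun (congrFun this 0) 2,
            by simpa using congrFun (congrFun this 1) 0,
            by simpa using congrFun (congrFun this 2) 1⟩
    · exact ⟨_, _, _, hc1, hcyc _ _ _ hc1 h1⟩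
  obtain ⟨α, β, γ, hY, h0⟩ := key
  have hγ : γ ≠ 0 := right_ne_zero_of_mul h0
  have hα : α ≠ 0 := left_ne_zero_of_mul (left_ne_zero_of_mul h0)
  replace hY := hY.smul hj γ⁻¹
  have e : γ⁻¹ • (!![0, α, 0; 0, 0, β; γ, 0, 0] : Matrix (Fin 3) (Fin 3) k) =
      !![0, γ⁻¹ * α, 0; 0, 0, γ⁻¹ * β; 1, 0, 0] := by
    ext i j
    fin_cases i <;> fin_cases j <;> simp [hγ]
  rw [e] at hY
  have ha : γ⁻¹ * α ≠ 0 := mul_ne_zero (inv_ne_zero hγ) hα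
  generalize γ⁻¹ * α = a at hY ha
  generalize γ⁻¹ * β = b at hY
  set Y : Matrix (Fin 3) (Fin 3) k := !![0, a, 0; 0, 0, b; 1, 0, 0] with hYd
  have hcR : ∀ s ∈ R, ∀ t ∈ R, Commute (mat s) (mat t) := fun s hs t ht => by
    change _ * _ = _ * _
    rw [← mat_mul, ← mat_mul, hab s hs t ht]
  -- the adjoint of `Y` centralizes `R`, hence commutes with `Y`
  have hadjR : ∀ s ∈ R, Commute (mat s) (adj Y) := by
    intro s hs
    have h1 := hY.comm (mat s⁻¹) (fun t ht => hcR t ht _ (R.inv_mem hs))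
    have h2 := congrArg adj h1.eq
    rw [adj_mul, adj_mul, adj_mat, inv_inv] at h2
    exact h2
  have hadj := hY.comm _ hadjR
  have hba : b = star a := by
    have e21 := congrFun (congrFun hadj.eq 2) 1
    have r0 : Fin.rev (0 : Fin 3) = 2 := rfl
    have r1 : Fin.rev (1 : Fin 3) = 1 := rfl
    have r2 : Fin.rev (2 : Fin 3) = 0 := rfl
    simp [hYd, adj, Matrix.mul_apply, Fin.sum_univ_three, r0, r1, r2] at e21
    rw [← e21, star_star]
  have hYX : Y = X a := by rw [hYd, hba]; rfl
  rw [hYX] at hY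
  clear_value Y
  refine ⟨a, ha, fun Z => ⟨fun h => (hY.comm Z h).symm, fun h s hs => ?_⟩, hY.inv⟩
  exact comm_comm_X ha (hY.comm _ fun t ht => hcR t ht s hs).symm h

end Torus4

/-! ### Subgroups meeting `N` exactly in `H0` -/

section Torus5

theorem cube_mem {G : Type*} [Group G] {R K H : Subgroup G} (hH : H ≤ K)
    (hH3 : ∀ x ∈ H, x ^ 3 = 1) (hn : ∀ g ∈ K, ∀ r ∈ R, g * r * g⁻¹ ∈ R)
    (hf : ∀ g ∈ K, ∃ r ∈ R, ∃ x ∈ H, g = r * x) {s : G} (hs : s ∈ K) : s ^ 3 ∈ R := by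
  obtain ⟨r, hr, x, hx, rfl⟩ := hf s hs
  have h1 := hn x (hH hx) r hr
  have h2 := hn x (hH hx) _ h1
  have : (r * x) ^ 3 = r * (x * r * x⁻¹) * (x * (x * r * x⁻¹) * x⁻¹) * x ^ 3 := by
    simp only [pow_succ, pow_zero, one_mul]; group
  rw [this, hH3 x hx, mul_one]
  exact R.mul_mem (R.mul_mem hr h1) h2

theorem exists_cube_root {G : Type*} [Group G] {R : Subgroup G}
    (hR : ¬ 3 ∣ Nat.card R) {r : G} (hr : r ∈ R) : ∃ m : ℕ, (r ^ m) ^ 3 = r := by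
  have h1 : orderOf r ∣ Nat.card R := Subgroup.orderOf_dvd_natCard R hr
  have h2 : Nat.Coprime 3 (orderOf r) :=
    (Nat.Prime.coprime_iff_not_dvd Nat.prime_three).mpr fun h => hR (h.trans h1)
  obtain ⟨m, hm⟩ := exists_pow_eq_self_of_coprime h2
  exact ⟨m, by rw [← pow_mul, mul_comm, pow_mul]; exact hm⟩

variable {k : Type*} [Field k] [StarRing k] [CharP k 2] [Finite k] [UnitaryField k]
variable {K L R : Subgroup (U k)}

theorem H0_cube : ∀ x ∈ H0 k, x ^ 3 = 1 := by
  intro x hx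
  rcases mem_H0.mp hx with rfl | rfl | rfl
  · exact one_pow 3
  · exact h3_cube
  · rw [← pow_mul, mul_comm, pow_mul, h3_cube, one_pow]

theorem ap_h3 (v : Fin 3 → k) : ap (h3 k) v = ![om k * v 0, v 1, om k ^ 2 * v 2] := by
  unfold ap
  rw [mat_h3]
  ext i
  fin_cases i <;> simp [Matrix.mulVec, dotProduct, Fin.sum_univ_three]

/-- An involution commuting with its conjugate under `h3 k` lies in `N k`. -/
theorem mem_N_of_commute_conj {t : U k} (ht : IsInv t)
    (hc : Commute t (h3 k * t * (h3 k)⁻¹)) : t ∈ N k := by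
  have hn := om_ne (k := k)
  obtain ⟨u, hu0, hu, rfl⟩ := exists_T_of_isInv ht
  rw [T_conj _ (star_one k) hu, T_commute hu (isotropic_ap hu _) hu0] at hc
  obtain ⟨c, hc⟩ := exists_smul_of_isotropic hu (isotropic_ap hu _) hc hu0
  rw [ap_h3] at hc
  have e0 := congrFun hc 0
  have e1 := congrFun hc 1
  have e2 := congrFun hc 2
  simp only [Matrix.cons_val, Pi.smul_apply, smul_eq_mul] at e0 e1 e2
  have hu1 : u 1 = 0 := by
    by_contra h1
    have hc1 : c = 1 := by
      have : (c - 1) * u 1 = 0 := by linear_combination -e1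
      rcases mul_eq_zero.mp this with h | h
      · linear_combination h
      · exact absurd h h1
    have hu0' : u 0 = 0 := by
      have : (om k - 1) * u 0 = 0 := by rw [hc1] at e0; linear_combination e0
      exact (mul_eq_zero.mp this).resolve_left (sub_ne_zero.mpr hn.1)
    have hu2' : u 2 = 0 := by
      have : (om k ^ 2 - 1) * u 2 = 0 := by rw [hc1] at e2; linear_combination e2
      exact (mul_eq_zero.mp this).resolve_left (sub_ne_zero.mpr hn.2.2.1)
    simp [B, hu0', hu2', h1] at hu
  rw [mem_N]
  refine ⟨1, one_ne_zero, ?_⟩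
  rw [ap_T (star_one k) hu]
  simp [B, hu1]

/-- Conjugation action of `Y` on the set of involutions of `R`. -/
abbrev invAct {G : Type*} [Group G] (R Y : Subgroup G)
    (h : ∀ y ∈ Y, ∀ r ∈ R, y * r * y⁻¹ ∈ R) : MulAction Y {t : G // IsInv t ∧ t ∈ R} where
  smul y t := ⟨y * t * (y : G)⁻¹, t.2.1.conj _, h y y.2 _ t.2.2⟩
  one_smul t := Subtype.ext (by change (1 : G) * t * (1 : G)⁻¹ = t; simp)
  mul_smul x y t := Subtype.ext (by
    change ((x * y : Y) : G) * t * ((x * y : Y) : G)⁻¹ =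
      x * (y * t * (y : G)⁻¹) * (x : G)⁻¹
    push_cast; group)

/-- If `R` is normalized by `h3 k` and `3 ∤ |R|`, and no involution of `R` lies in `N k`, then `|R|`
is odd: otherwise the involutions of `R` form one conjugacy class of `R`, whose size divides `|R|`,
while `H0 k` permutes them in orbits of length three. -/
theorem odd_of_inf (h3R : ¬ 3 ∣ Nat.card R) (hn : ∀ y ∈ H0 k, ∀ r ∈ R, y * r * y⁻¹ ∈ R)
    (hN : ∀ t ∈ R, IsInv t → t ∉ N k) : Odd (Nat.card R) := by
  by_contra hev
  rw [Nat.not_odd_iff_even, even_iff_two_dvd] at hev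
  have h2p : Fact (Nat.Prime 2) := ⟨Nat.prime_two⟩
  have h3p : Fact (Nat.Prime 3) := ⟨Nat.prime_three⟩
  obtain ⟨⟨t, htR⟩, ht⟩ := exists_prime_orderOf_dvd_card' 2 hev
  have hti : IsInv t := by
    have h1 : orderOf t = 2 := by rw [← ht]; exact (Subgroup.orderOf_mk t htR).symm
    refine ⟨fun h => ?_, ?_⟩
    · rw [h, orderOf_one] at h1; omega
    · rw [← sq, ← h1, pow_orderOf_eq_one]
  have hnc : ∀ s ∈ R, IsInv s → ¬ Commute s (h3 k * s * (h3 k)⁻¹) := fun s hs hsi hc =>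
    hN s hs hsi (mem_N_of_commute_conj hsi hc)
  let S := {t : U k // IsInv t ∧ t ∈ R}
  have hdvd : Nat.card S ∣ Nat.card R := by
    let act := invAct R R (fun y hy r hr => R.mul_mem (R.mul_mem hy hr) (R.inv_mem hy))
    have horb : MulAction.orbit R (⟨t, hti, htR⟩ : S) = Set.univ := by
      rw [Set.eq_univ_iff_forall]
      rintro ⟨s, hsi, hsR⟩
      obtain ⟨g, hg, hgs⟩ := conj_of_two invTrans_U hti (hti.conj (h3 k)) hti hsi htR
        (hn _ h3_mem _ htR) htR hsR (hnc t htR hti)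
      exact ⟨⟨g, hg⟩, Subtype.ext hgs⟩
    have := MulAction.index_stabilizer R (⟨t, hti, htR⟩ : S)
    rw [horb, Set.ncard_univ] at this
    rw [← this]
    exact Subgroup.index_dvd_card _
  have h3S : 3 ∣ Nat.card S := by
    let act := invAct R (H0 k) hn
    have hp : IsPGroup 3 (H0 k) := IsPGroup.of_card (n := 1) (card_H0.trans (pow_one 3).symm)
    have := hp.card_modEq_card_fixedPoints S
    have hfix : MulAction.fixedPoints (H0 k) S = ∅ := by
      rw [Set.eq_empty_iff_forall_notMem]
      rintro ⟨s, hsi, hsR⟩ hs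
      have h1 := congrArg Subtype.val (hs ⟨h3 k, h3_mem⟩)
      apply hnc s hsR hsi
      have h2 : h3 k * s * (h3 k)⁻¹ = s := h1
      rw [h2]
    rw [hfix] at this
    simp only [Nat.card_of_isEmpty] at this
    exact (Nat.modEq_zero_iff_dvd).mp this
  exact h3R (h3S.trans hdvd)

/-- `R` is a normal complement of `H0 k` in `K` which spans (a subalgebra with the same commutant
as) the torus algebra `k[X a]`, and `K` is irreducible. -/
structure TorusData (K R : Subgroup (U k)) (a : k) : Prop where
  ha : a ≠ 0
  le : R ≤ K
  H0_le : H0 k ≤ K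
  normal : ∀ g ∈ K, ∀ r ∈ R, g * r * g⁻¹ ∈ R
  fac : ∀ g ∈ K, ∃ r ∈ R, ∃ x ∈ H0 k, g = r * x
  three : ¬ 3 ∣ Nat.card R
  odd : Odd (Nat.card K)
  comm : ∀ Y, (∀ r ∈ R, Commute (mat r) Y) ↔ Commute Y (X a)
  irr : Irred K

omit [Finite k] [UnitaryField k] in
theorem mulVec_X (a : k) (v : Fin 3 → k) :
    (X a).mulVec v = ![a * v 1, star a * v 2, v 0] := by
  unfold X
  ext i
  fin_cases i <;> simp [Matrix.mulVec, dotProduct, Fin.sum_univ_three]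

theorem eig_parts (v : Fin 3 → k) :
    v + om k ^ 2 • ap (h3 k) v + om k • ap (h3 k) (ap (h3 k) v) = ![v 0, 0, 0] ∧
    v + ap (h3 k) v + ap (h3 k) (ap (h3 k) v) = ![0, v 1, 0] ∧
    v + om k • ap (h3 k) v + om k ^ 2 • ap (h3 k) (ap (h3 k) v) = ![0, 0, v 2] := by
  have hr := om_rel (k := k)
  have h2 : (2 : k) = 0 := CharTwo.two_eq_zero
  simp only [ap_h3]
  generalize om k = w at *
  have h3 : w ^ 3 = 1 := by linear_combination (w - 1) * hr
  refine ⟨?_, ?_, ?_⟩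
  all_goals
    ext i
    fin_cases i
    all_goals
      simp only [Pi.add_apply, Pi.smul_apply, smul_eq_mul, Matrix.cons_val, Fin.zero_eta,
        Fin.mk_one, Fin.reduceFinMk]
      grind

/-- A nonzero subspace invariant under `h3 k` and `X a` is everything. -/
theorem eq_top_of_invariant {a : k} (ha : a ≠ 0) {W : Submodule k (Fin 3 → k)}
    (hh : ∀ w ∈ W, ap (h3 k) w ∈ W) (hX : ∀ w ∈ W, (X a).mulVec w ∈ W) : W = ⊥ ∨ W = ⊤ := by
  by_cases hW : W = ⊥
  · exact Or.inl hW
  right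
  have hsa : star a ≠ 0 := star_ne_zero.mpr ha
  obtain ⟨w, hw, hw0⟩ := Submodule.exists_mem_ne_zero_of_ne_bot hW
  have h02 : ∀ c : k, c ≠ 0 → ![c, 0, 0] ∈ W → ![1, 0, 0] ∈ W := fun c hc h => by
    have := W.smul_mem c⁻¹ h
    simpa [hc] using this
  have h12 : ∀ c : k, c ≠ 0 → ![0, c, 0] ∈ W → ![0, 1, 0] ∈ W := fun c hc h => by
    have := W.smul_mem c⁻¹ h
    simpa [hc] using this
  have h22 : ∀ c : k, c ≠ 0 → ![0, 0, c] ∈ W → ![0, 0, 1] ∈ W := fun c hc h => by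
    have := W.smul_mem c⁻¹ h
    simpa [hc] using this
  have s0 : ![1, 0, 0] ∈ W → ![0, 0, 1] ∈ W := fun h => by
    have := hX _ h
    rw [mulVec_X] at this
    simpa using this
  have s1 : ![0, 1, 0] ∈ W → ![1, 0, 0] ∈ W := fun h => by
    have := hX _ h
    rw [mulVec_X] at this
    exact h02 a ha (by simpa using this)
  have s2 : ![0, 0, 1] ∈ W → ![0, 1, 0] ∈ W := fun h => by
    have := hX _ h
    rw [mulVec_X] at this
    exact h12 _ hsa (by simpa using this)
  have hh1 := hh _ hw
  have hh2 := hh _ hh1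
  obtain ⟨q0, q1, q2⟩ := eig_parts w
  have p0 : ![w 0, 0, 0] ∈ W := q0 ▸
    W.add_mem (W.add_mem hw (W.smul_mem (om k ^ 2) hh1)) (W.smul_mem (om k) hh2)
  have p1 : ![0, w 1, 0] ∈ W := q1 ▸ W.add_mem (W.add_mem hw hh1) hh2
  have p2 : ![0, 0, w 2] ∈ W := q2 ▸
    W.add_mem (W.add_mem hw (W.smul_mem (om k) hh1)) (W.smul_mem (om k ^ 2) hh2)
  have key : ![1, 0, 0] ∈ W := by
    by_cases h0 : w 0 = 0
    · by_cases h1 : w 1 = 0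
      · have h2 : w 2 ≠ 0 := fun h2 => hw0 (by ext i; fin_cases i <;> simp [h0, h1, h2])
        exact s1 (s2 (h22 _ h2 p2))
      · exact s1 (h12 _ h1 p1)
    · exact h02 _ h0 p0
  rw [Submodule.eq_top_iff']
  intro v
  have := W.add_mem (W.add_mem (W.smul_mem (v 0) key) (W.smul_mem (v 1) (s2 (s0 key))))
    (W.smul_mem (v 2) (s0 key))
  convert this using 1
  ext i
  fin_cases i <;> simp

/-- A subgroup other than `H0 k` which meets `N k` exactly in `H0 k` is `R ⋊ H0 k` for a subgroup
`R` of odd order prime to three that determines a torus algebra `k[X a]`, `a ≠ 0`. -/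
theorem exists_torusData (hK : K ⊓ N k = H0 k) (hne : K ≠ H0 k) : ∃ R a, TorusData K R a := by
  have hle : H0 k ≤ K := hK ▸ inf_le_left
  have hmem : ∀ g ∈ K, g ∈ N k → g ∈ H0 k := fun g hg hgN => hK ▸ ⟨hg, hgN⟩
  have hcomm : ∀ g ∈ H0 k, ∀ x ∈ H0 k, g * x = x * g := by
    intro g hg x hx
    obtain ⟨i, rfl⟩ := Subgroup.mem_zpowers_iff.mp hg
    obtain ⟨j, rfl⟩ := Subgroup.mem_zpowers_iff.mp hx
    rw [← zpow_add, ← zpow_add, add_comm]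
  obtain ⟨R, hRK, hn, hinf, hfac, hcard⟩ := exists_compl_three hle card_H0 (nine_not_dvd hle)
    fun g hg hx => hcomm g (hmem g hg (mem_N_of_normalizes hx))
  have h3R : ¬ 3 ∣ Nat.card R := by
    rintro ⟨m, hm⟩
    exact nine_not_dvd hle ⟨m, by rw [← hcard, hm]; ring⟩
  have hbot : ∀ r ∈ R, r ∈ H0 k → r = 1 := fun r hr hr' => by
    have : r ∈ R ⊓ H0 k := ⟨hr, hr'⟩
    rwa [hinf, Subgroup.mem_bot] at this
  have hodd : Odd (Nat.card R) := by
    refine odd_of_inf h3R (fun y hy => hn y (hle hy)) fun t ht hti htN => hti.1 ?_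
    exact hbot t ht (hmem t (hRK ht) htN)
  have hcop : (Nat.card R).Coprime 6 := by
    rw [show 6 = 2 * 3 from rfl, Nat.coprime_mul_iff_right]
    exact ⟨Nat.coprime_two_right.mpr hodd,
      ((Nat.Prime.coprime_iff_not_dvd Nat.prime_three).mpr h3R).symm⟩
  have hoddK : Odd (Nat.card K) := by
    rw [← hcard]; exact hodd.mul (by decide)
  obtain ⟨r, hr, hr1⟩ : ∃ r ∈ R, r ≠ 1 := by
    by_contra! h
    apply hne
    refine le_antisymm (fun g hg => ?_) hle
    obtain ⟨r, hr, x, hx, rfl⟩ := hfac g hg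
    rw [h r hr, one_mul]
    exact hx
  obtain ⟨a, ha, hcm, hinv⟩ := exists_singer (abelian_of_coprime_six hcop) hodd
    (hn _ (hle h3_mem)) hr (by
      intro hc
      apply hr1
      refine hbot r hr (hmem r (hRK hr) (mem_N_of_normalizes fun x hx => ?_))
      obtain ⟨i, rfl⟩ := Subgroup.mem_zpowers_iff.mp hx
      have : Commute r (h3 k ^ i) := Commute.zpow_right hc i
      rw [this.eq, mul_inv_cancel_right]
      exact hx)
  exact ⟨R, a, ⟨ha, hRK, hle, hn, hfac, h3R, hoddK, hcm, fun W hW =>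
    eq_top_of_invariant ha (hW _ (hle h3_mem)) (hinv W fun r hr => hW r (hRK hr))⟩⟩

variable {a : k}

/-- The normalizer of `K` normalizes `R`, whose elements are the cubes of elements of `K`. -/
theorem TorusData.mem_Ma (D : TorusData K R a) {g : U k} (hg : ∀ s ∈ K, g * s * g⁻¹ ∈ K)
    (hg' : ∀ s ∈ K, g⁻¹ * s * g ∈ K) : g ∈ Ma a := by
  have key : ∀ g : U k, (∀ s ∈ K, g * s * g⁻¹ ∈ K) → ∀ r ∈ R, g * r * g⁻¹ ∈ R := by
    intro g hg r hr
    obtain ⟨m, hm⟩ := exists_cube_root D.three hr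
    have := cube_mem D.H0_le H0_cube D.normal D.fac (hg _ (D.le (R.pow_mem hr m)))
    rwa [conj_pow, hm] at this
  refine mem_Ma_of_normalizes D.comm (key g hg) fun r hr => ?_
  have := key g⁻¹ (by simpa using hg') r hr
  simpa using this

theorem TorusData.le_Ma (D : TorusData K R a) : K ≤ Ma a := fun g hg =>
  D.mem_Ma (fun _ hs => K.mul_mem (K.mul_mem hg hs) (K.inv_mem hg))
    (fun _ hs => K.mul_mem (K.mul_mem (K.inv_mem hg) hs) hg)

/-- An overgroup of `K` of odd order has an abelian normal complement to `H0 k`. That complement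
contains `R`, so its elements commute with `X a`. -/
theorem TorusData.odd_le_Ma (D : TorusData K R a) (hKL : K ≤ L) (hodd : Odd (Nat.card L)) :
    L ≤ Ma a := by
  have hle : H0 k ≤ L := D.H0_le.trans hKL
  have hN : ∀ g ∈ L, (∀ x ∈ H0 k, g * x * g⁻¹ ∈ H0 k) → ∀ x ∈ H0 k, g * x = x * g := by
    intro g hg hx
    have key : Commute g (h3 k) := by
      rcases mem_H0.mp (hx _ h3_mem) with h | h | h
      · exact absurd (conj_eq_one_iff.mp h) h3_ne
      · exact mul_inv_eq_iff_eq_mul.mp h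
      · -- `g` inverts `h3 k`, so `g²` centralizes it, and `g` is a power of `g²`
        have h1 : g * h3 k ^ 2 * g⁻¹ = h3 k := by
          rw [← conj_pow, h, ← pow_mul, show 2 * 2 = 3 + 1 from rfl, pow_succ, h3_cube, one_mul]
        have h2 : Commute (g ^ 2) (h3 k) := by
          have : g ^ 2 * h3 k * (g ^ 2)⁻¹ = h3 k := by
            calc _ = g * (g * h3 k * g⁻¹) * g⁻¹ := by rw [sq]; group
              _ = _ := by rw [h, h1]
          exact mul_inv_eq_iff_eq_mul.mp this
        have h3 : Nat.Coprime 2 (orderOf g) := Nat.coprime_two_left.mpr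
          (Odd.of_dvd_nat hodd (Subgroup.orderOf_dvd_natCard L hg))
        obtain ⟨m, hm⟩ := exists_pow_eq_self_of_coprime h3
        rw [← hm]
        exact h2.pow_left m
    intro x hx
    obtain ⟨i, rfl⟩ := Subgroup.mem_zpowers_iff.mp hx
    exact key.zpow_right i
  obtain ⟨W, hWL, hn, -, hfac, hcard⟩ := exists_compl_three hle card_H0 (nine_not_dvd hle) hN
  have h3W : ¬ 3 ∣ Nat.card W := by
    rintro ⟨m, hm⟩
    exact nine_not_dvd hle ⟨m, by rw [← hcard, hm]; ring⟩
  have hcop : (Nat.card W).Coprime 6 := by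
    rw [show 6 = 2 * 3 from rfl, Nat.coprime_mul_iff_right]
    exact ⟨Nat.coprime_two_right.mpr (Odd.of_dvd_nat hodd ⟨3, hcard.symm⟩),
      ((Nat.Prime.coprime_iff_not_dvd Nat.prime_three).mpr h3W).symm⟩
  have hab := abelian_of_coprime_six hcop
  have hRW : R ≤ W := by
    intro r hr
    obtain ⟨m, hm⟩ := exists_cube_root D.three hr
    have := cube_mem hle H0_cube hn hfac (hKL (D.le (R.pow_mem hr m)))
    rwa [hm] at this
  intro g hg
  obtain ⟨w, hw, x, hx, rfl⟩ := hfac g hg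
  refine (Ma a).mul_mem (mem_Ma_of_commute D.ha ?_) (H0_le_Ma a hx)
  rw [← D.comm]
  intro r hr
  change _ * _ = _ * _
  rw [← mat_mul, ← mat_mul, hab r (hRW hr) w hw]

theorem TorusData.eq_or_top (D : TorusData K R a) (hL : L ⊓ Ma a = K) : L = K ∨ L = ⊤ := by
  have hKL : K ≤ L := hL ▸ inf_le_left
  have hfin : L ≤ Ma a → L = K := fun h => by rw [← hL, inf_eq_left.mpr h]
  by_cases hodd : Odd (Nat.card L)
  · exact Or.inl (hfin (D.odd_le_Ma hKL hodd))
  rw [Nat.not_odd_iff_even, even_iff_two_dvd] at hodd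
  have h2p : Fact (Nat.Prime 2) := ⟨Nat.prime_two⟩
  obtain ⟨⟨t, htL⟩, ht⟩ := exists_prime_orderOf_dvd_card' 2 hodd
  have hti : IsInv t := by
    have h1 : orderOf t = 2 := by rw [← ht]; exact (Subgroup.orderOf_mk t htL).symm
    refine ⟨fun h => ?_, ?_⟩
    · rw [h, orderOf_one] at h1; omega
    · rw [← sq, ← h1, pow_orderOf_eq_one]
  have hirr : Irred L := fun W hW => D.irr W fun g hg => hW g (hKL hg)
  rcases even_irred hirr htL hti with h | ⟨O, hOL, hnO, hO, hOmem⟩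
  · exact Or.inr h
  left
  have hKO : K ≤ O := fun g hg => hOmem g (hKL hg)
    (Odd.of_dvd_nat D.odd (Subgroup.orderOf_dvd_natCard K hg))
  have hOK : O = K := by
    refine le_antisymm (fun g hg => ?_) hKO
    rw [← hL]
    exact ⟨hOL hg, D.odd_le_Ma hKO hO hg⟩
  subst hOK
  refine hfin fun g hg => D.mem_Ma (hnO g hg) fun s hs => ?_
  have := hnO _ (L.inv_mem hg) s hs
  rwa [inv_inv] at this

/-- Weisner's theorem for `Ma a`: only `K` and possibly `⊤` contribute to the sum. -/
theorem TorusData.mu_eq {mu : Subgroup (U k) → ℤ} (hmu : IsSubgroupMobius mu)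
    (D : TorusData K R a) : mu K = if K = Ma a then -1 else 0 := by
  have hM := Ma_ne_top D.ha
  have hw := weisner hmu hM K D.le_Ma
  have hKtop : K ≠ ⊤ := fun h => hM (top_le_iff.mp (h ▸ D.le_Ma))
  split_ifs with h
  · have : {L : Subgroup (U k) | L ⊓ Ma a = K} = {K, ⊤} := by
      ext L
      refine ⟨fun hL => D.eq_or_top hL, ?_⟩
      rintro (rfl | hL)
      · exact inf_eq_left.mpr D.le_Ma
      · rw [Set.mem_singleton_iff] at hL
        rw [Set.mem_ofPred_eq, hL, top_inf_eq, h]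
    rw [this, finsum_mem_pair hKtop, mobius_top hmu] at hw
    omega
  · have : {L : Subgroup (U k) | L ⊓ Ma a = K} = {K} := by
      ext L
      refine ⟨fun hL => ?_, ?_⟩
      · rcases D.eq_or_top hL with h' | h'
        · exact h'
        · rw [Set.mem_ofPred_eq, h', top_inf_eq] at hL
          exact absurd hL.symm h
      · rintro rfl
        exact inf_eq_left.mpr D.le_Ma
    rwa [this, finsum_mem_singleton] at hw

/-- The torus algebra `k[X a]` is determined by its normalizer. -/
theorem TorusData.unique {c : k} (hc : ∀ b : k, b ^ 3 ≠ c) (D : TorusData (Ma c) R a) : a = c := by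
  have hc0 : c ≠ 0 := fun h => hc 0 (by rw [h]; simp)
  let C : Subgroup (U k) :=
    { carrier := {g | Commute (mat g) (X c)}
      one_mem' := by
        change Commute _ _
        rw [mat_one]
        exact Commute.one_left _
      mul_mem' := fun {x y} hx hy => by
        change Commute _ _
        rw [mat_mul]
        exact Commute.mul_left hx hy
      inv_mem' := fun {x} hx => by
        change mat x⁻¹ * X c = X c * mat x⁻¹
        have hx' : mat x * X c = X c * mat x := hx
        calc mat x⁻¹ * X c = mat x⁻¹ * (X c * mat x) * mat x⁻¹ := by
              rw [mul_assoc, mul_assoc, mat_mul_inv, mul_one]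
          _ = _ := by rw [← hx', ← mul_assoc, mat_inv_mul, one_mul] }
  have hnC : ∀ g ∈ Ma c, ∀ r ∈ C, g * r * g⁻¹ ∈ C := by
    intro g hg r hr
    change Commute _ _
    rw [mat_mul, mat_mul]
    exact (hg (mat r)).mpr hr
  have hfC : ∀ g ∈ Ma c, ∃ r ∈ C, ∃ x ∈ H0 k, g = r * x := by
    intro g hg
    obtain ⟨x, hx, g0, rfl, h0⟩ := exists_factor hc hg
    exact ⟨x * g0 * x⁻¹, hnC x (H0_le_Ma c hx) g0 h0, x, hx, by group⟩
  have hRC : ∀ r ∈ R, Commute (mat r) (X c) := by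
    intro r hr
    obtain ⟨m, hm⟩ := exists_cube_root D.three hr
    have := cube_mem (H0_le_Ma c) H0_cube hnC hfC (D.le (R.pow_mem hr m))
    rwa [hm] at this
  exact (X_inj ((D.comm (X c)).mp hRC)).symm

/-- The Möbius function at `H0 k` counts the maximal subgroups `Ma a`, `a` not a cube. -/
theorem mu_H0 {mu : Subgroup (U k) → ℤ} (hmu : IsSubgroupMobius mu) :
    mu (H0 k) = Nat.card {a : k // ∀ b : k, b ^ 3 ≠ a} := by
  let _ : Fintype k := Fintype.ofFinite k
  let _ : Fintype (Subgroup (U k)) := Fintype.ofFinite _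
  have hw := weisner hmu (N_ne_top (k := k)) (H0 k) H0_le_N
  set T : Finset k := Finset.univ.filter fun a => ∀ b : k, b ^ 3 ≠ a with hT
  have memT : ∀ {a}, a ∈ T ↔ ∀ b : k, b ^ 3 ≠ a := by simp [hT]
  have hex : ∀ a ∈ T, ∃ R, TorusData (Ma a) R a := by
    intro a ha
    obtain ⟨R, c, D⟩ := exists_torusData (Ma_inf_N (memT.mp ha)) (Ma_ne_H0 (memT.mp ha))
    have := D.unique (memT.mp ha)
    subst this
    exact ⟨R, D⟩
  have hinj : Set.InjOn Ma (T : Set k) := by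
    intro a ha b hb hab
    obtain ⟨R, D⟩ := hex a ha
    rw [hab] at D
    exact D.unique (memT.mp hb)
  have hset : {L : Subgroup (U k) | L ⊓ N k = H0 k} =
      ((Finset.univ.filter fun L : Subgroup (U k) => L ⊓ N k = H0 k : Finset _) : Set _) := by
    ext L; simp
  rw [hset, finsum_mem_coe_finset] at hw
  have hsub : insert (H0 k) (T.image Ma) ⊆
      Finset.univ.filter fun L : Subgroup (U k) => L ⊓ N k = H0 k := by
    intro L hL
    rw [Finset.mem_filter]
    refine ⟨Finset.mem_univ _, ?_⟩
    rw [Finset.mem_insert, Finset.mem_image] at hL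
    rcases hL with rfl | ⟨a, ha, rfl⟩
    · exact inf_eq_left.mpr H0_le_N
    · exact Ma_inf_N (memT.mp ha)
  rw [← Finset.sum_subset hsub] at hw
  · rw [Finset.sum_insert, Finset.sum_image hinj, Finset.sum_congr rfl (g := fun _ => (-1 : ℤ))]
      at hw
    · simp only [Finset.sum_const, nsmul_eq_mul] at hw
      have hc : Nat.card {a : k // ∀ b : k, b ^ 3 ≠ a} = T.card := by
        rw [Nat.card_eq_fintype_card, Fintype.card_subtype]
      rw [hc]
      linarith
    · intro a ha
      obtain ⟨R, D⟩ := hex a ha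
      rw [D.mu_eq hmu, if_pos rfl]
    · intro h
      obtain ⟨a, ha, h⟩ := Finset.mem_image.mp h
      exact Ma_ne_H0 (memT.mp ha) h
  · intro L hL hL'
    rw [Finset.mem_filter] at hL
    rw [Finset.mem_insert, not_or] at hL'
    obtain ⟨R, a, D⟩ := exists_torusData hL.2 hL'.1
    rw [D.mu_eq hmu, if_neg]
    rintro rfl
    apply hL'.2
    refine Finset.mem_image.mpr ⟨a, memT.mpr fun b hb => ?_, rfl⟩
    exact Ma_inf_N_cube D.ha hb hL.2

end Torus5

/-! ### Subgroups of order three -/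

theorem IsSubgroupMobius.map {G G' : Type*} [Group G] [Group G'] (e : G ≃* G')
    {mu : Subgroup G' → ℤ} (hmu : IsSubgroupMobius mu) :
    IsSubgroupMobius fun K : Subgroup G => mu (K.map e.toMonoidHom) := by
  intro H
  have hinj : Function.Injective (Subgroup.map e.toMonoidHom) :=
    Subgroup.map_injective e.injective
  have hsurj : ∀ L : Subgroup G', ∃ K : Subgroup G, K.map e.toMonoidHom = L := fun L =>
    ⟨L.comap e.toMonoidHom, Subgroup.map_comap_eq_self_of_surjective e.surjective L⟩
  have h1 : (Subgroup.map e.toMonoidHom) '' {K | H ≤ K} = {L | H.map e.toMonoidHom ≤ L} := by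
    ext L
    obtain ⟨K, rfl⟩ := hsurj L
    rw [hinj.mem_set_image, Set.mem_ofPred_eq, Set.mem_ofPred_eq,
      Subgroup.map_le_map_iff_of_injective e.injective]
  have h2 := hmu (H.map e.toMonoidHom)
  rw [← h1, finsum_mem_image hinj.injOn] at h2
  rw [h2]
  congr 1
  rw [eq_iff_iff, ← Subgroup.map_top_of_surjective e.toMonoidHom e.surjective]
  exact hinj.eq_iff

section Conj3

variable {k : Type*} [Field k] [StarRing k] [CharP k 2] [Finite k] [UnitaryField k]

/-- An element of order three with an eigenvector of eigenvalue `om k` is conjugate to `h3 k`. -/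
theorem conj_h3_of_eigenvector {h : U k} (hh : h ^ 3 = 1) {u : Fin 3 → k} (hu0 : u ≠ 0)
    (hu : ap h u = om k • u) : ∃ g : U k, g⁻¹ * h * g = h3 k := by
  have hr := om_rel (k := k)
  have hn := om_ne (k := k)
  have hso := star_om (k := k)
  have h2 : (2 : k) = 0 := CharTwo.two_eq_zero
  have ho3 : om k ^ 3 = 1 := by linear_combination (om k - 1) * hr
  have iso : ∀ (c : k) (v : Fin 3 → k), c * star c ≠ 1 → ap h v = c • v → B v v = 0 := by
    intro c v hc hv
    have h1 := B_ap h v v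
    rw [hv, B_smul, B_smul'] at h1
    have : (c * star c - 1) * B v v = 0 := by linear_combination h1
    exact (mul_eq_zero.mp this).resolve_left (sub_ne_zero.mpr hc)
  have huu : B u u = 0 := iso _ u (by rw [hso, ← sq]; exact hn.2.2.1) hu
  obtain ⟨w, hw⟩ := exists_B_one hu0
  -- the component of `w` in the eigenspace of `om k ^ 2`
  set v := w + om k • ap h w + om k ^ 2 • ap h (ap h w) with hv
  have hhv : ap h v = om k ^ 2 • v := by
    have h3w : ap h (ap h (ap h w)) = w := by
      rw [← ap_mul, ← ap_mul, show h * h * h = h ^ 3 from (pow_three' h).symm, hh, ap_one]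
    rw [hv, ap_add, ap_add, ap_smul, ap_smul, h3w, smul_add, smul_add, smul_smul, smul_smul,
      show om k ^ 2 * om k = 1 by rw [← ho3]; ring,
      show om k ^ 2 * om k ^ 2 = om k by linear_combination om k * ho3, one_smul]
    abel
  have hvv : B v v = 0 := iso _ v (by
    rw [star_pow, hso]
    intro h
    apply hn.1
    linear_combination h - om k * ho3) hhv
  have hB : ∀ x, B (ap h x) u = om k ^ 2 * B x u := by
    intro x
    have h1 := B_ap h x u
    rw [hu, B_smul, hso] at h1
    linear_combination om k ^ 2 * h1 - B (ap h x) u * ho3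
  have hvu : B v u = 1 := by
    rw [hv, B_add', B_add', B_smul', B_smul', hB (ap h w), hB w, hw]
    linear_combination (om k ^ 3 + 2) * ho3 + h2
  obtain ⟨g, hg0, hg2⟩ := exists_hyp huu hvv (B_swap_one hvu)
  refine ⟨g, ?_⟩
  have t0 : ap (g⁻¹ * h * g) ![1, 0, 0] = om k • ![1, 0, 0] := by
    rw [ap_mul, ap_mul, hg0, hu, ap_smul, ← hg0, ap_inv_ap]
  have t2 : ap (g⁻¹ * h * g) ![0, 0, 1] = om k ^ 2 • ![0, 0, 1] := by
    rw [ap_mul, ap_mul, hg2, hhv, ap_smul, ← hg2, ap_inv_ap]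
  generalize g⁻¹ * h * g = t at t0 t2
  have z2 : ap t ![0, 1, 0] 2 = 0 := by
    have h1 := B_ap t ![0, 1, 0] ![1, 0, 0]
    rw [t0, B_smul, hso] at h1
    simpa [B, hn.2.1] using h1
  have z0 : ap t ![0, 1, 0] 0 = 0 := by
    have h1 := B_ap t ![0, 1, 0] ![0, 0, 1]
    rw [t2, B_smul, star_pow, hso] at h1
    simpa [B, hn.2.1] using h1
  have hm := mat_eq_of_ap (ap_basis t)
  rw [t0, t2, z0, z2] at hm
  have hd := det_mat t
  rw [hm, Matrix.det_fin_three] at hd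
  simp at hd
  have z1 : ap t ![0, 1, 0] 1 = 1 := by
    linear_combination hd - ap t ![0, 1, 0] 1 * ho3
  apply mat_inj
  rw [hm, z1, mat_h3]
  simp

/-- Up to conjugation `h3 k` generates every subgroup of order three: an element of order three is
not the identity, so it or its square has the eigenvalue `om k`. -/
theorem conj_h3 {h : U k} (hh : h ^ 3 = 1) (h1 : h ≠ 1) :
    ∃ g : U k, g⁻¹ * h * g = h3 k ∨ g⁻¹ * h ^ 2 * g = h3 k := by
  have hr := om_rel (k := k)
  have h2 : (2 : k) = 0 := CharTwo.two_eq_zero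
  have ho3 : om k ^ 3 = 1 := by linear_combination (om k - 1) * hr
  obtain ⟨v, hv⟩ : ∃ v, ap h v ≠ v := by
    by_contra! hc
    exact h1 (ap_ext fun v => by rw [hc, ap_one])
  have h3v : ap h (ap h (ap h v)) = v := by
    rw [← ap_mul, ← ap_mul, show h * h * h = h ^ 3 from (pow_three' h).symm, hh, ap_one]
  by_cases p1 : v + om k ^ 2 • ap h v + om k • ap h (ap h v) = 0
  · by_cases p2 : v + om k • ap h v + om k ^ 2 • ap h (ap h v) = 0
    · exfalso
      apply hv
      ext i
      have e1 := congrFun p1 i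
      have e2 := congrFun p2 i
      simp only [Pi.add_apply, Pi.smul_apply, smul_eq_mul, Pi.zero_apply] at e1 e2
      generalize ap h (ap h v) i = z at *
      generalize ap h v i = y at *
      generalize v i = x at *
      clear hv h3v p1 p2 hh h1
      grind
    · obtain ⟨g, hg⟩ := conj_h3_of_eigenvector (h := h ^ 2)
        (by rw [← pow_mul, mul_comm, pow_mul, hh, one_pow]) p2 (by
          rw [sq h, ap_mul, ap_add, ap_add, ap_add, ap_add, ap_smul, ap_smul, ap_smul, ap_smul,
            h3v, smul_add, smul_add, smul_smul, smul_smul, show om k * om k ^ 2 = 1 by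
            rw [← ho3]; ring, one_smul, ← sq]
          abel)
      exact ⟨g, Or.inr hg⟩
  · obtain ⟨g, hg⟩ := conj_h3_of_eigenvector hh p1 (by
      rw [ap_add, ap_add, ap_smul, ap_smul, h3v, smul_add, smul_add, smul_smul, smul_smul,
        show om k * om k ^ 2 = 1 by rw [← ho3]; ring, one_smul, ← sq]
      abel)
    exact ⟨g, Or.inl hg⟩

theorem mu_of_card_three {mu : Subgroup (U k) → ℤ} (hmu : IsSubgroupMobius mu)
    {H : Subgroup (U k)} (hH : Nat.card H = 3) :
    mu H = Nat.card {a : k // ∀ b : k, b ^ 3 ≠ a} := by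
  have h3p : Fact (Nat.Prime 3) := ⟨Nat.prime_three⟩
  obtain ⟨⟨h, hhH⟩, hh⟩ := exists_prime_orderOf_dvd_card' (G := H) 3 (by rw [hH])
  have hho : orderOf h = 3 := (Subgroup.orderOf_mk h hhH).symm.trans hh
  have hh3 : h ^ 3 = 1 := orderOf_dvd_iff_pow_eq_one.mp (dvd_of_eq hho)
  have hh1 : h ≠ 1 := by
    rintro rfl
    rw [orderOf_one] at hho
    omega
  obtain ⟨g, hg⟩ : ∃ g : U k, g * h3 k * g⁻¹ ∈ H := by
    obtain ⟨g, hg | hg⟩ := conj_h3 hh3 hh1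
    · refine ⟨g, ?_⟩
      rw [← hg]
      simpa [mul_assoc] using hhH
    · refine ⟨g, ?_⟩
      rw [← hg]
      simpa [mul_assoc] using H.pow_mem hhH 2
  have hmap : (H0 k).map (MulAut.conj g).toMonoidHom = H := by
    apply Subgroup.eq_of_le_of_card_ge
    · unfold H0
      rw [MonoidHom.map_zpowers, Subgroup.zpowers_le]
      exact hg
    · rw [Subgroup.card_map_of_injective (MulAut.conj g).injective, card_H0, hH]
  have := mu_H0 (hmu.map (MulAut.conj g))
  rwa [hmap] at this

end Conj3

/-! ### The field with `q²` elements -/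

theorem star_Fq2 (n : ℕ) (x : Fq2 n) : star x = x ^ qval n := rfl

theorem card_Fq2 (n : ℕ) : Nat.card (Fq2 n) = qval n ^ 2 := by
  rw [GaloisField.card 2 (2 ^ (n + 1)) (by positivity), ← pow_mul, pow_succ]

theorem card_units_Fq2 (n : ℕ) : Nat.card (Fq2 n)ˣ = qval n ^ 2 - 1 := by
  rw [Nat.card_units, card_Fq2]

theorem pow_qq (n : ℕ) (x : Fq2 n) : x ^ qval n ^ 2 = x := by
  have h : star (star x) = x := star_star x
  rwa [star_Fq2, star_Fq2, ← pow_mul, ← sq] at h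

theorem one_lt_qval (n : ℕ) : 1 < qval n := Nat.one_lt_two_pow (by positivity)

theorem qval_mod_three {n : ℕ} (hn : 1 ≤ n) : qval n % 3 = 1 := by
  obtain ⟨m, rfl⟩ := Nat.exists_eq_add_of_le' hn
  rw [qval, pow_succ', pow_mul, Nat.pow_mod]
  norm_num

theorem qval_sq_mod_nine (n : ℕ) : qval n ^ 2 % 9 = 4 ∨ qval n ^ 2 % 9 = 7 := by
  induction n with
  | zero => left; rfl
  | succ m ih =>
    have h : qval (m + 1) = qval m ^ 2 := by rw [qval, qval, ← pow_mul, pow_succ]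
    rw [h, Nat.pow_mod]
    rcases ih with h | h <;> rw [h] <;> norm_num

/-- The roots of `x ^ m = x` number at most `m`. -/
theorem card_pow_fixed_le {k : Type*} [Field k] {m : ℕ} (hm : 1 < m) (s : Finset k)
    (hs : ∀ x ∈ s, x ^ m = x) : s.card ≤ m := by
  have h0 : (Polynomial.X ^ m - Polynomial.X : Polynomial k) ≠ 0 :=
    FiniteField.X_pow_card_sub_X_ne_zero k hm
  have h1 : s.val ≤ (Polynomial.X ^ m - Polynomial.X : Polynomial k).roots := by
    rw [Multiset.le_iff_subset s.nodup]
    intro x hx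
    rw [Polynomial.mem_roots h0]
    simp [Polynomial.IsRoot, hs x hx]
  have h2 := (Multiset.card_le_card h1).trans (Polynomial.card_roots' _)
  rwa [FiniteField.X_pow_card_sub_X_natDegree_eq k hm] at h2

theorem exists_not_fixed (n : ℕ) : ∃ x : Fq2 n, star x ≠ x := by
  by_contra! h
  let _ : Fintype (Fq2 n) := Fintype.ofFinite _
  have h1 := card_pow_fixed_le (one_lt_qval n) (Finset.univ : Finset (Fq2 n)) fun x _ => h x
  rw [Finset.card_univ, ← Nat.card_eq_fintype_card, card_Fq2] at h1
  nlinarith [one_lt_qval n]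

theorem exists_omega {n : ℕ} (hn : 1 ≤ n) : ∃ w : Fq2 n, w ^ 2 + w + 1 = 0 ∧ star w = w := by
  have h3p : Fact (Nat.Prime 3) := ⟨Nat.prime_three⟩
  have hq := qval_mod_three hn
  have h3 : 3 ∣ Nat.card (Fq2 n)ˣ := by
    rw [card_units_Fq2]
    apply (Nat.modEq_iff_dvd' (Nat.one_le_pow _ _ (by positivity))).mp
    exact (show 1 ≡ qval n ^ 2 [MOD 3] by rw [Nat.ModEq, Nat.pow_mod, hq])
  obtain ⟨w, hw⟩ := exists_prime_orderOf_dvd_card' 3 h3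
  have hw3 : (w : Fq2 n) ^ 3 = 1 := by
    rw [← Units.val_pow_eq_pow_val, ← hw, pow_orderOf_eq_one, Units.val_one]
  have hw1 : (w : Fq2 n) ≠ 1 := by
    intro h
    rw [Units.val_eq_one] at h
    rw [h, orderOf_one] at hw
    omega
  refine ⟨w, ?_, ?_⟩
  · have : ((w : Fq2 n) - 1) * ((w : Fq2 n) ^ 2 + w + 1) = 0 := by linear_combination hw3
    exact (mul_eq_zero.mp this).resolve_left (sub_ne_zero.mpr hw1)
  · rw [star_Fq2, ← Nat.div_add_mod (qval n) 3, hq, pow_add, pow_mul, hw3, one_pow, one_mul,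
      pow_one]

theorem pow_nine {n : ℕ} {x : Fq2 n} (hx : x ^ 9 = 1) : x ^ 3 = 1 := by
  have hx0 : x ≠ 0 := by rintro rfl; simp at hx
  have h := pow_qq n x
  rw [← Nat.div_add_mod (qval n ^ 2) 9, pow_add, pow_mul, hx, one_pow, one_mul] at h
  have key : x ^ 3 - 1 = 0 := by
    rcases qval_sq_mod_nine n with h9 | h9 <;> rw [h9] at h
    · exact (mul_eq_zero.mp (show x * (x ^ 3 - 1) = 0 by linear_combination h)).resolve_left hx0
    · have h6 : x ^ 6 - 1 = 0 :=
        (mul_eq_zero.mp (show x * (x ^ 6 - 1) = 0 by linear_combination h)).resolve_left hx0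
      linear_combination hx - x ^ 3 * h6
  exact sub_eq_zero.mp key

/-- The extension `F_{q²} / F` has a power of two as its degree, so if `F` lies properly in `F_q`
then `q` is a power of `|F| ^ 2`. -/
theorem fixed_of_quadratic {n : ℕ} (F : Subfield (Fq2 n)) (hF : ∀ x ∈ F, star x = x)
    (hz : ∃ x : Fq2 n, star x = x ∧ x ∉ F) (x : Fq2 n) (h1 : x + star x ∈ F)
    (h2 : x * star x ∈ F) : star x = x := by
  let _ : Fintype (Fq2 n) := Fintype.ofFinite _
  let _ : Fintype F := Fintype.ofFinite _
  obtain ⟨z, hz, hzF⟩ := hz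
  obtain ⟨d, hp, hd⟩ := FiniteField.card F 2
  have hpow := Module.card_eq_pow_finrank (K := F) (V := Fq2 n)
  set e := Module.finrank F (Fq2 n)
  have hde : (d : ℕ) * e = 2 ^ (n + 1) := by
    rw [hd, ← pow_mul, ← Nat.card_eq_fintype_card, GaloisField.card 2 _ (by positivity)] at hpow
    exact (Nat.pow_right_injective le_rfl hpow).symm
  obtain ⟨j, hj, hdj⟩ := (Nat.dvd_prime_pow Nat.prime_two).mp (Dvd.intro _ hde)
  -- `F` together with `z` has at most `q` elements
  have hlt : Fintype.card F < qval n := by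
    have h3 := card_pow_fixed_le (one_lt_qval n)
      (insert z (Finset.univ.map ⟨Subtype.val, Subtype.val_injective⟩ : Finset (Fq2 n))) (by
        intro y hy
        rw [Finset.mem_insert, Finset.mem_map] at hy
        rcases hy with rfl | ⟨y, _, rfl⟩
        · exact hz
        · exact hF _ y.2)
    rw [Finset.card_insert_of_notMem, Finset.card_map, Finset.card_univ] at h3
    · exact h3
    · rw [Finset.mem_map]
      rintro ⟨y, _, rfl⟩
      exact hzF y.2
  have hjn : j < n := by
    rw [hd, hdj] at hlt
    exact (Nat.pow_lt_pow_iff_right (by norm_num)).mp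
      ((Nat.pow_lt_pow_iff_right (by norm_num)).mp hlt)
  have hfix : ∀ y ∈ F, y ^ Fintype.card F = y := fun y hy => by
    have := FiniteField.pow_card (⟨y, hy⟩ : F)
    simpa using congrArg Subtype.val this
  set m := Fintype.card F
  have hadd : ∀ a b : Fq2 n, (a + b) ^ m = a ^ m + b ^ m := fun a b => by
    rw [hd]; exact add_pow_char_pow a b 2 d
  have e1 := hfix _ h1
  have e2 := hfix _ h2
  rw [hadd] at e1
  rw [mul_pow] at e2
  have hroot : (x ^ m - x) * (x ^ m - star x) = 0 := by
    linear_combination x ^ m * e1 - e2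
  have hm2 : (x ^ m) ^ m = x := by
    rcases mul_eq_zero.mp hroot with h | h
    · rw [sub_eq_zero.mp h, sub_eq_zero.mp h]
    · have h3 := sub_eq_zero.mp h
      have h4 : star x ^ m = x := by
        rw [← star_pow, h3, star_star]
      rw [h3, h4]
  have hq : qval n = (m * m) ^ 2 ^ (n - 1 - j) := by
    rw [hd, hdj, ← pow_add, ← pow_mul, ← two_mul, ← pow_succ', ← pow_add]
    congr 2
    omega
  have hit : ∀ t : ℕ, x ^ (m * m) ^ t = x := by
    intro t
    induction t with
    | zero => simp
    | succ t ih => rw [pow_succ (m * m) t, pow_mul, ih, pow_mul, hm2]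
  rw [star_Fq2, hq, hit]

theorem unitaryField_Fq2 {n : ℕ} (hn : 1 ≤ n) : UnitaryField (Fq2 n) where
  ns := exists_not_fixed n
  om := exists_omega hn
  chain := fixed_of_quadratic
  nine := fun _ => pow_nine

theorem card_noncubes {n : ℕ} (hn : 1 ≤ n) :
    (Nat.card {a : Fq2 n // ∀ b : Fq2 n, b ^ 3 ≠ a} : ℤ) = 2 * ((qval n : ℤ) ^ 2 - 1) / 3 := by
  have hq := qval_mod_three hn
  have h1 : 1 ≤ qval n ^ 2 := Nat.one_le_pow _ _ (by positivity)
  have h3 : qval n ^ 2 % 3 = 1 := by rw [Nat.pow_mod, hq]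
  have hr := IsCyclic.card_powMonoidHom_range (G := (Fq2 n)ˣ) 3
  rw [card_units_Fq2, Nat.gcd_eq_right (show 3 ∣ qval n ^ 2 - 1 by omega)] at hr
  let e : {a : Fq2 n // ∀ b : Fq2 n, b ^ 3 ≠ a} ≃
      {a : (Fq2 n)ˣ // ¬ a ∈ (powMonoidHom 3 : (Fq2 n)ˣ →* (Fq2 n)ˣ).range} :=
    { toFun := fun a => ⟨Units.mk0 a.1 fun h => a.2 0 (by rw [h]; norm_num), by
        rintro ⟨b, hb⟩
        exact a.2 b (by simpa using congrArg Units.val hb)⟩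
      invFun := fun a => ⟨a.1, fun b hb => a.2 (by
        have hb0 : b ≠ 0 := by
          rintro rfl
          exact a.1.ne_zero (by rw [← hb]; norm_num)
        exact ⟨Units.mk0 b hb0, Units.ext (by simpa using hb)⟩)⟩
      left_inv := fun a => rfl
      right_inv := fun a => Subtype.ext (Units.ext rfl) }
  let _ : Fintype (Fq2 n) := Fintype.ofFinite _
  have hc := Fintype.card_subtype_compl
    (fun a : (Fq2 n)ˣ => a ∈ (powMonoidHom 3 : (Fq2 n)ˣ →* (Fq2 n)ˣ).range)
  rw [← Nat.card_eq_fintype_card, ← Nat.card_eq_fintype_card, ← Nat.card_eq_fintype_card,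
    card_units_Fq2] at hc
  rw [Nat.card_congr e, hc]
  have hr' : Nat.card {a : (Fq2 n)ˣ // a ∈ (powMonoidHom 3 : (Fq2 n)ˣ →* (Fq2 n)ˣ).range} =
    (qval n ^ 2 - 1) / 3 := hr
  rw [hr']
  have hcast : ((qval n : ℤ) ^ 2) = ((qval n ^ 2 : ℕ) : ℤ) := by push_cast; rfl
  rw [hcast]
  generalize qval n ^ 2 = N at *
  omega

/-! ### Identification of `PSU(3,q)` with `U` -/

section Iso

variable {k : Type*} [Field k] [StarRing k]

theorem mem_unitaryGroup_of_form {A : Matrix (Fin 3) (Fin 3) k}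
    (h : ∀ v w, (A.mulVec v) ⬝ᵥ star (A.mulVec w) = v ⬝ᵥ star w) :
    A ∈ Matrix.unitaryGroup (Fin 3) k := by
  rw [Matrix.mem_unitaryGroup_iff']
  apply Matrix.toLin'.injective
  refine LinearMap.ext fun v => ?_
  rw [Matrix.toLin'_apply, Matrix.toLin'_one, LinearMap.id_apply]
  apply dotProduct_eq
  intro w
  have h1 := h v (star w)
  rw [Matrix.star_mulVec, star_star, dotProduct_comm, ← Matrix.dotProduct_mulVec,
    Matrix.mulVec_mulVec, dotProduct_comm, dotProduct_comm v] at h1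
  rw [dotProduct_comm, Matrix.star_eq_conjTranspose, dotProduct_comm, h1, dotProduct_comm]

theorem form_of_mem_unitaryGroup {A : Matrix (Fin 3) (Fin 3) k}
    (h : A ∈ Matrix.unitaryGroup (Fin 3) k) (v w : Fin 3 → k) :
    (A.mulVec v) ⬝ᵥ star (A.mulVec w) = v ⬝ᵥ star w := by
  rw [Matrix.mem_unitaryGroup_iff'] at h
  rw [Matrix.star_mulVec, dotProduct_comm, ← Matrix.dotProduct_mulVec,
    Matrix.mulVec_mulVec, ← Matrix.star_eq_conjTranspose, h, Matrix.one_mulVec, dotProduct_comm]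

variable [CharP k 2]

/-- A change of basis from the standard hermitian form to the hyperbolic form `B`. -/
theorem exists_change [UnitaryField k] : ∃ S : Matrix.SpecialLinearGroup (Fin 3) k,
    ∀ v w : Fin 3 → k, ((S : Matrix (Fin 3) (Fin 3) k).mulVec v) ⬝ᵥ
      star ((S : Matrix (Fin 3) (Fin 3) k).mulVec w) = B v w := by
  obtain ⟨a, ha⟩ := exists_trace_one (k := k)
  have h2 : (2 : k) = 0 := CharTwo.two_eq_zero
  refine ⟨⟨!![1, 0, a; 1, 0, 1 + a; 0, 1, 0], ?_⟩, ?_⟩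
  · rw [Matrix.det_fin_three]
    simp
    linear_combination -h2
  · intro v w
    simp [Matrix.mulVec, dotProduct, Fin.sum_univ_three, B, star_add, star_mul']
    generalize star (w 0) = x
    generalize star (w 1) = y
    generalize star (w 2) = z
    generalize star a = b at *
    generalize v 0 = r
    generalize v 1 = s
    generalize v 2 = t
    grind

variable [Finite k] [UnitaryField k]

theorem center_U {g : U k} (hg : ∀ h : U k, g * h = h * g) : g = 1 := by
  have hr := om_rel (k := k)
  have hn := om_ne (k := k)
  have hso := star_om (k := k)
  obtain ⟨y, hy⟩ := exists_trace_one (k := k)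
  have h2 : (2 : k) = 0 := CharTwo.two_eq_zero
  obtain ⟨t, ht⟩ := exists_U (k := k) ![1, 0, 0] ![1, 1, 0] ![y, 1, 1]
    (by simp [B]) (by simp [B]) (by simp [B]) (by simp [B])
    (by simp [B]; linear_combination h2) (by simp [B]; linear_combination hy + h2) (by simp)
  have c1 := congrArg mat (hg (h3 k))
  have hmt : mat t = !![1, 1, y; 0, 1, 1; 0, 0, 1] := by
    rw [mat_eq_of_ap (ap_basis t), ht, ht, ht]
    simp
  have c2 := congrArg mat (hg t)
  rw [mat_mul, mat_mul, mat_h3] at c1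
  rw [mat_mul, mat_mul, hmt] at c2
  have e01 := congrFun (congrFun c1 0) 1
  have e02 := congrFun (congrFun c1 0) 2
  have e10 := congrFun (congrFun c1 1) 0
  have e12 := congrFun (congrFun c1 1) 2
  have e20 := congrFun (congrFun c1 2) 0
  have e21 := congrFun (congrFun c1 2) 1
  have f01 := congrFun (congrFun c2 0) 1
  have f12 := congrFun (congrFun c2 1) 2
  have hd := det_mat g
  have hB := B_ap g ![1, 0, 0] ![0, 0, 1]
  rw [Matrix.det_fin_three] at hd
  simp [Matrix.mul_apply, Fin.sum_univ_three] at e01 e02 e10 e12 e20 e21 f01 f12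
  simp [B, ap, Matrix.mulVec, dotProduct, Fin.sum_univ_three] at hB
  have ho3 : om k ^ 3 = 1 := by linear_combination (om k - 1) * hr
  have aux : ∀ {c x : k}, c ≠ 0 → c * x = 0 → x = 0 := fun hc h =>
    (mul_eq_zero.mp h).resolve_left hc
  have hn1 : om k - 1 ≠ 0 := sub_ne_zero.mpr hn.1
  have hn2 : om k ^ 2 - 1 ≠ 0 := sub_ne_zero.mpr hn.2.2.1
  have hn3 : om k ^ 2 - om k ≠ 0 := sub_ne_zero.mpr hn.2.2.2
  have m01 : mat g 0 1 = 0 := aux hn1 (by linear_combination -e01)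
  have m02 : mat g 0 2 = 0 := aux hn3 (by linear_combination e02)
  have m10 : mat g 1 0 = 0 := aux hn1 (by linear_combination e10)
  have m12 : mat g 1 2 = 0 := aux hn2 (by linear_combination e12)
  have m20 : mat g 2 0 = 0 := aux hn3 (by linear_combination -e20)
  have m21 : mat g 2 1 = 0 := aux hn2 (by linear_combination -e21)
  have m11 : mat g 1 1 = mat g 0 0 := by linear_combination -f01 - y * m21
  have m22 : mat g 2 2 = mat g 0 0 := by linear_combination -f12 + y * m10 + m11
  -- `g` is scalar; the scalar is a cube root of unity of norm one
  rw [m01, m02, m10, m20, m21, m12, m11, m22] at hd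
  rw [m10, m20, m22] at hB
  have hd3 : mat g 0 0 ^ 3 = 1 := by linear_combination hd
  have hs : star (mat g 0 0) = mat g 0 0 := by
    rcases cube_root hd3 with h | h | h <;> rw [h] <;> simp [hso]
  rw [hs] at hB
  have h1 : mat g 0 0 = 1 := by linear_combination hd3 - mat g 0 0 * hB
  apply mat_inj
  ext i j
  fin_cases i <;> fin_cases j <;>
    simp [mat_one, m01, m02, m10, m12, m20, m21, m11, m22, h1]

/-- The inclusion of `SU(3,q)` in `SL(3,q²)`. -/
noncomputable def toSL (n : ℕ) : SU3 n →* Matrix.SpecialLinearGroup (Fin 3) (Fq2 n) where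
  toFun M := ⟨M.1.1, M.2⟩
  map_one' := rfl
  map_mul' _ _ := rfl

/-- `SU(3,q)` is isomorphic to the group `U` of the hyperbolic form. -/
theorem SU3_equiv {n : ℕ} (hn : 1 ≤ n) : Nonempty (SU3 n ≃* U (Fq2 n)) := by
  have := unitaryField_Fq2 hn
  obtain ⟨S, hS⟩ := exists_change (k := Fq2 n)
  have hS' : ∀ v w, B ((S⁻¹ : Matrix.SpecialLinearGroup (Fin 3) (Fq2 n)).1.mulVec v)
      ((S⁻¹ : Matrix.SpecialLinearGroup (Fin 3) (Fq2 n)).1.mulVec w) = v ⬝ᵥ star w := by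
    intro v w
    rw [← hS, Matrix.mulVec_mulVec, Matrix.mulVec_mulVec, ← Matrix.SpecialLinearGroup.coe_mul,
      mul_inv_cancel, Matrix.SpecialLinearGroup.coe_one, Matrix.one_mulVec, Matrix.one_mulVec]
  refine ⟨{
    toFun := fun M => ⟨S⁻¹ * toSL n M * S, ?_⟩
    invFun := fun g => ⟨⟨(S * g.1 * S⁻¹ : Matrix.SpecialLinearGroup (Fin 3) (Fq2 n)).1, ?_⟩,
      (S * g.1 * S⁻¹ : Matrix.SpecialLinearGroup (Fin 3) (Fq2 n)).2⟩
    left_inv := ?_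
    right_inv := ?_
    map_mul' := ?_ }⟩
  · intro v w
    have hM : ∀ v w, ((toSL n M).1.mulVec v) ⬝ᵥ star ((toSL n M).1.mulVec w) = v ⬝ᵥ star w :=
      form_of_mem_unitaryGroup M.1.2
    rw [Matrix.SpecialLinearGroup.coe_mul, Matrix.SpecialLinearGroup.coe_mul,
      ← Matrix.mulVec_mulVec, ← Matrix.mulVec_mulVec, ← Matrix.mulVec_mulVec,
      ← Matrix.mulVec_mulVec, hS', hM, hS]
  · apply mem_unitaryGroup_of_form
    intro v w
    rw [Matrix.SpecialLinearGroup.coe_mul, Matrix.SpecialLinearGroup.coe_mul,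
      ← Matrix.mulVec_mulVec, ← Matrix.mulVec_mulVec, ← Matrix.mulVec_mulVec,
      ← Matrix.mulVec_mulVec, hS, g.2, hS']
  · intro M
    apply Subtype.ext
    apply Subtype.ext
    show (S * (S⁻¹ * toSL n M * S) * S⁻¹ : Matrix.SpecialLinearGroup (Fin 3) (Fq2 n)).1 =
      (toSL n M).1
    rw [show S * (S⁻¹ * toSL n M * S) * S⁻¹ = toSL n M by group]
  · intro g
    apply Subtype.ext
    show S⁻¹ * (S * g.1 * S⁻¹) * S = g.1
    group
  · intro M N
    apply Subtype.ext
    show S⁻¹ * toSL n (M * N) * S = S⁻¹ * toSL n M * S * (S⁻¹ * toSL n N * S)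
    rw [map_mul]
    simp only [mul_assoc, mul_inv_cancel_left]

theorem PSU3_equiv {n : ℕ} (hn : 1 ≤ n) : Nonempty (PSU3 n ≃* U (Fq2 n)) := by
  have := unitaryField_Fq2 hn
  obtain ⟨e⟩ := SU3_equiv hn
  have hc : Subgroup.center (SU3 n) = ⊥ := by
    rw [eq_bot_iff]
    intro g hg
    rw [Subgroup.mem_bot]
    apply e.injective
    rw [map_one]
    apply center_U
    intro h
    rw [Subgroup.mem_center_iff] at hg
    have := congrArg e (hg (e.symm h))
    rw [map_mul, map_mul, e.apply_symm_apply] at this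
    exact this.symm
  exact ⟨(QuotientGroup.quotientMulEquivOfEq hc).trans (QuotientGroup.quotientBot.trans e)⟩

end Iso

-- STATEMENT 3
theorem stmt3 (n : ℕ) (hn : 1 ≤ n) (mu : Subgroup (PSU3 n) → ℤ)
    (hmu : IsSubgroupMobius mu) (H : Subgroup (PSU3 n)) (hH : Nat.card H = 3) :
    mu H = 2 * ((qval n : ℤ) ^ 2 - 1) / 3 := by
  have := unitaryField_Fq2 hn
  obtain ⟨e⟩ := PSU3_equiv hn
  have h1 := mu_of_card_three (hmu.map e.symm) (H := H.map e.toMonoidHom)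
    (by rw [Subgroup.card_map_of_injective e.injective, hH])
  have h2 : (H.map e.toMonoidHom).map e.symm.toMonoidHom = H := by
    rw [Subgroup.map_map]
    convert H.map_id
    ext x
    simp
  rw [h2] at h1
  rw [h1, card_noncubes hn]

end PSUPaper
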